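/- The space S_{20,2}(Γ₂,ε) has dimension 1 over ℂ. -/

import Mathlib

noncomputable section

open Matrix Complex Filter Topology

/-- The standard symplectic form matrix of size 4. -/
def J4 : Matrix (Fin 4) (Fin 4) ℤ := !![0,0,1,0; 0,0,0,1; -1,0,0,0; 0,-1,0,0]

/-- The Siegel modular group `Γ₂ = Sp(4,ℤ)`, as a set of 4×4 integer matrices. -/
def Sp4Z : Set (Matrix (Fin 4) (Fin 4) ℤ) := {γ | γᵀ * J4 * γ = J4}

/-- The principal congruence subgroup `Γ₂[2]` of level 2. -/
def Sp4Z2 : Set (Matrix (Fin 4) (Fin 4) ℤ) :=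
  {γ | γ ∈ Sp4Z ∧ ∀ i j, ((γ i j : ZMod 2) = if i = j then 1 else 0)}

/-- The Siegel upper half space of degree 2: symmetric 2×2 complex matrices with
positive definite imaginary part (encoded as functions `Fin 2 → Fin 2 → ℂ`). -/
def H2 : Set (Fin 2 → Fin 2 → ℂ) :=
  {τ | (Matrix.of τ).IsSymm ∧ (Matrix.of fun i j => (τ i j).im).PosDef}

/-- The four 2×2 blocks of a 4×4 integer matrix, as complex matrices. -/
def blk (γ : Matrix (Fin 4) (Fin 4) ℤ) (r s : Fin 2) : Matrix (Fin 2) (Fin 2) ℂ :=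
  Matrix.of fun i j =>
    ((γ ⟨2 * (r : ℕ) + (i : ℕ), by have h1 := r.isLt; have h2 := i.isLt; omega⟩
        ⟨2 * (s : ℕ) + (j : ℕ), by have h1 := s.isLt; have h2 := j.isLt; omega⟩ : ℤ) : ℂ)

/-- The factor `cτ + d`. -/
def den (γ : Matrix (Fin 4) (Fin 4) ℤ) (τ : Fin 2 → Fin 2 → ℂ) : Matrix (Fin 2) (Fin 2) ℂ :=
  blk γ 1 0 * Matrix.of τ + blk γ 1 1

/-- The action `γ·τ = (aτ+b)(cτ+d)⁻¹` of `Sp(4)` on the Siegel upper half space. -/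
def moeb (γ : Matrix (Fin 4) (Fin 4) ℤ) (τ : Fin 2 → Fin 2 → ℂ) : Fin 2 → Fin 2 → ℂ :=
  fun i j => ((blk γ 0 0 * Matrix.of τ + blk γ 0 1) * (den γ τ)⁻¹) i j

/-- Matrix coefficients of the `j`-th symmetric power of the standard representation of
`GL(2,ℂ)`, in the basis `x₁^(j-i) x₂^i`. -/
def symCoeff (j : ℕ) (m : Matrix (Fin 2) (Fin 2) ℂ) (l i : Fin (j + 1)) : ℂ :=
  (((Polynomial.C (m 0 0) + Polynomial.C (m 1 0) * Polynomial.X) ^ (j - (l : ℕ)) *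
    (Polynomial.C (m 0 1) + Polynomial.C (m 1 1) * Polynomial.X) ^ (l : ℕ)).coeff i)

/-- The `j`-th symmetric power `Sym^j(m)` acting on coordinate vectors. -/
def symAct (j : ℕ) (m : Matrix (Fin 2) (Fin 2) ℂ) (v : Fin (j + 1) → ℂ) : Fin (j + 1) → ℂ :=
  fun i => ∑ l, symCoeff j m l i * v l

lemma symAct_add (j : ℕ) (m : Matrix (Fin 2) (Fin 2) ℂ) (v w : Fin (j + 1) → ℂ) :
    symAct j m (v + w) = symAct j m v + symAct j m w := by
  funext i
  simp [symAct, mul_add, Finset.sum_add_distrib]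

lemma symAct_smul (j : ℕ) (m : Matrix (Fin 2) (Fin 2) ℂ) (a : ℂ) (v : Fin (j + 1) → ℂ) :
    symAct j m (a • v) = a • symAct j m v := by
  funext i
  simp only [symAct, Pi.smul_apply, smul_eq_mul, Finset.mul_sum]
  exact Finset.sum_congr rfl fun l _ => by ring

lemma symAct_zero (j : ℕ) (m : Matrix (Fin 2) (Fin 2) ℂ) : symAct j m 0 = 0 := by
  funext i; simp [symAct]

/-- The weight `(j,k)` automorphy action `Sym^j(m) ⊗ det(m)^k`. -/
def wt (j : ℕ) (k : ℤ) (m : Matrix (Fin 2) (Fin 2) ℂ) (v : Fin (j + 1) → ℂ) :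
    Fin (j + 1) → ℂ :=
  (m.det ^ k) • symAct j m v

lemma wt_add (j : ℕ) (k : ℤ) (m : Matrix (Fin 2) (Fin 2) ℂ) (v w : Fin (j + 1) → ℂ) :
    wt j k m (v + w) = wt j k m v + wt j k m w := by
  simp [wt, symAct_add, smul_add]

lemma wt_smul (j : ℕ) (k : ℤ) (m : Matrix (Fin 2) (Fin 2) ℂ) (a : ℂ) (v : Fin (j + 1) → ℂ) :
    wt j k m (a • v) = a • wt j k m v := by
  rw [wt, wt, symAct_smul, smul_comm]

lemma wt_zero (j : ℕ) (k : ℤ) (m : Matrix (Fin 2) (Fin 2) ℂ) : wt j k m 0 = 0 := by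
  simp [wt, symAct_zero]

/-- The slash operation `(F|γ)(τ) = Sym^j(cτ+d)⁻¹ det(cτ+d)⁻ᵏ F(γ·τ)`. -/
def slashS (j : ℕ) (k : ℤ) (γ : Matrix (Fin 4) (Fin 4) ℤ)
    (F : (Fin 2 → Fin 2 → ℂ) → (Fin (j + 1) → ℂ)) (τ : Fin 2 → Fin 2 → ℂ) :
    Fin (j + 1) → ℂ :=
  ((den γ τ).det ^ (-k)) • symAct j ((den γ τ)⁻¹) (F (moeb γ τ))

lemma slashS_add (j : ℕ) (k : ℤ) (γ : Matrix (Fin 4) (Fin 4) ℤ)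
    (F G : (Fin 2 → Fin 2 → ℂ) → (Fin (j + 1) → ℂ)) (τ : Fin 2 → Fin 2 → ℂ) :
    slashS j k γ (F + G) τ = slashS j k γ F τ + slashS j k γ G τ := by
  simp [slashS, symAct_add, smul_add]

lemma slashS_smul (j : ℕ) (k : ℤ) (γ : Matrix (Fin 4) (Fin 4) ℤ) (a : ℂ)
    (F : (Fin 2 → Fin 2 → ℂ) → (Fin (j + 1) → ℂ)) (τ : Fin 2 → Fin 2 → ℂ) :
    slashS j k γ (a • F) τ = a • slashS j k γ F τ := by
  simp only [slashS, Pi.smul_apply, symAct_smul]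
  rw [smul_comm]

lemma slashS_zero (j : ℕ) (k : ℤ) (γ : Matrix (Fin 4) (Fin 4) ℤ) (τ : Fin 2 → Fin 2 → ℂ) :
    slashS j k γ (0 : (Fin 2 → Fin 2 → ℂ) → (Fin (j + 1) → ℂ)) τ = 0 := by
  simp [slashS, symAct_zero]

/-- The diagonal point `diag(τ₁,τ₂)` of the Siegel upper half space. -/
def diagH (τ₁ τ₂ : ℂ) : Fin 2 → Fin 2 → ℂ :=
  fun i j => if i = j then (if i = 0 then τ₁ else τ₂) else 0

/-- `F` is a Siegel cusp form of degree 2 and weight `(j,k)` on `Γ`, with character `χ`: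
holomorphic on `ℍ₂`, transforming by `F(γ·τ) = χ(γ) Sym^j(cτ+d) det(cτ+d)^k F(τ)` for `γ ∈ Γ`,
with `(F|γ)(diag(τ₁,it)) → 0` as `t → ∞` for every `γ ∈ Γ₂`, and (normalization) vanishing
off `ℍ₂`. -/
def IsSiegelCuspForm (j : ℕ) (k : ℤ) (Γ : Set (Matrix (Fin 4) (Fin 4) ℤ))
    (χ : Matrix (Fin 4) (Fin 4) ℤ → ℂ)
    (F : (Fin 2 → Fin 2 → ℂ) → (Fin (j + 1) → ℂ)) : Prop :=
  DifferentiableOn ℂ F H2 ∧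
  (∀ γ ∈ Γ, ∀ τ ∈ H2, F (moeb γ τ) = χ γ • wt j k (den γ τ) (F τ)) ∧
  (∀ γ ∈ Sp4Z, ∀ τ₁ : ℂ, 0 < τ₁.im →
    Tendsto (fun t : ℝ => slashS j k γ F (diagH τ₁ (t * Complex.I))) atTop (𝓝 0)) ∧
  (∀ τ, τ ∉ H2 → F τ = 0)

/-- The space `S_{j,k}(Γ, χ)` of Siegel cusp forms of degree 2 and weight `(j,k)` on `Γ`
with character `χ`, as a complex vector space. -/
def SiegelCusp (j : ℕ) (k : ℤ) (Γ : Set (Matrix (Fin 4) (Fin 4) ℤ))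
    (χ : Matrix (Fin 4) (Fin 4) ℤ → ℂ) :
    Submodule ℂ ((Fin 2 → Fin 2 → ℂ) → (Fin (j + 1) → ℂ)) where
  carrier := {F | IsSiegelCuspForm j k Γ χ F}
  add_mem' := by
    rintro F G hF hG
    refine ⟨hF.1.add hG.1, ?_, ?_, ?_⟩
    · intro γ hγ τ hτ
      show F (moeb γ τ) + G (moeb γ τ) = χ γ • wt j k (den γ τ) (F τ + G τ)
      rw [wt_add, smul_add, hF.2.1 γ hγ τ hτ, hG.2.1 γ hγ τ hτ]
    · intro γ hγ τ₁ hτ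
      have h := (hF.2.2.1 γ hγ τ₁ hτ).add (hG.2.2.1 γ hγ τ₁ hτ)
      rw [add_zero] at h
      exact h.congr fun t => (slashS_add j k γ F G _).symm
    · intro τ hτ
      show F τ + G τ = 0
      rw [hF.2.2.2 τ hτ, hG.2.2.2 τ hτ, add_zero]
  zero_mem' := by
    refine ⟨?_, ?_, ?_, ?_⟩
    · exact differentiableOn_const 0
    · intro γ hγ τ hτ
      show (0 : Fin (j + 1) → ℂ) = χ γ • wt j k (den γ τ) 0
      rw [wt_zero, smul_zero]
    · intro γ hγ τ₁ hτ
      have : (fun t : ℝ => slashS j k γ (0 : (Fin 2 → Fin 2 → ℂ) → (Fin (j + 1) → ℂ))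
          (diagH τ₁ (t * Complex.I))) = fun _ => 0 := by
        funext t; exact slashS_zero j k γ _
      rw [this]
      exact tendsto_const_nhds
    · intro τ _; rfl
  smul_mem' := by
    rintro a F hF
    refine ⟨hF.1.const_smul a, ?_, ?_, ?_⟩
    · intro γ hγ τ hτ
      show a • F (moeb γ τ) = χ γ • wt j k (den γ τ) (a • F τ)
      rw [hF.2.1 γ hγ τ hτ, wt_smul, smul_comm]
    · intro γ hγ τ₁ hτ
      have h := (hF.2.2.1 γ hγ τ₁ hτ).const_smul a
      rw [smul_zero] at h
      exact h.congr fun t => (slashS_smul j k γ a F _).symm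
    · intro τ hτ
      show a • F τ = 0
      rw [hF.2.2.2 τ hτ, smul_zero]

/-- `ε` is (on `Γ₂`) the unique nontrivial homomorphism `Γ₂ → {±1}`. -/
def IsEps (ε : Matrix (Fin 4) (Fin 4) ℤ → ℂ) : Prop :=
  (∀ γ ∈ Sp4Z, ε γ = 1 ∨ ε γ = -1) ∧
  (∀ γ ∈ Sp4Z, ∀ δ ∈ Sp4Z, ε (γ * δ) = ε γ * ε δ) ∧
  (∃ γ ∈ Sp4Z, ε γ ≠ 1)

section


lemma zaux (w d e : ℂ) (hw : w ≠ 0) (h : d * w ^ (-(12 : ℤ)) = e) : d = w ^ 12 * e := by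
  rw [← h, _root_.zpow_neg, show (12:ℤ) = ((12:ℕ):ℤ) by rfl, zpow_natCast]
  field_simp

open UpperHalfPlane ModularForm MatrixGroups Manifold in
/-- auxiliary modular form `g²/Δ^N`. -/
lemma lemS_form (K N0 : ℕ) (g : ℂ → ℂ) (hd : DifferentiableOn ℂ g {t | 0 < t.im})
    (hT : ∀ t : ℂ, 0 < t.im → g (t + 1) = - g t)
    (hS : ∀ t : ℂ, 0 < t.im → g (-1 / t) = - t ^ K * g t) (C : ℝ)
    (hb : ∀ t : ℂ, 1 ≤ t.im → ‖g t‖ ≤ C * Real.exp (-Real.pi * N0 * t.im)) :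
    ∃ f : ModularForm 𝒮ℒ (2 * (K : ℤ) - 12 * N0), ∀ z : ℍ,
      f z = g z ^ 2 / ModularForm.discriminant z ^ N0 := by
  set h : ℍ → ℂ := fun z => g z ^ 2 / ModularForm.discriminant z ^ N0 with hh
  have hdT : ∀ z : ℍ, denom (ModularGroup.T : GL (Fin 2) ℝ) z = 1 := fun z => by
    rw [ModularGroup.denom_apply]; simp [ModularGroup.T]
  have hDT : ∀ z : ℍ, ModularForm.discriminant ((1:ℝ) +ᵥ z) = ModularForm.discriminant z := by
    intro z
    have := congrFun discriminant_T_invariant z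
    rwa [SL_slash_apply, modular_T_smul, hdT, _root_.one_zpow, mul_one] at this
  have hDS : ∀ z : ℍ, ModularForm.discriminant (ModularGroup.S • z)
      = (z:ℂ) ^ 12 * ModularForm.discriminant z := by
    intro z
    have := congrFun discriminant_S_invariant z
    rw [SL_slash_apply, ModularGroup.denom_S] at this
    exact zaux _ _ _ z.ne_zero this
  have sT : h ∣[(2 * (K : ℤ) - 12 * N0)] ModularGroup.T = h := by
    ext z
    rw [SL_slash_apply, modular_T_smul, hdT, _root_.one_zpow, mul_one]
    have : g (((1:ℝ) +ᵥ z : ℍ) : ℂ) = - g z := by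
      rw [UpperHalfPlane.coe_vadd, ← hT z z.2]; congr 1; push_cast; ring
    simp only [hh, hDT, this, neg_sq]
  have sS : h ∣[(2 * (K : ℤ) - 12 * N0)] ModularGroup.S = h := by
    ext z
    rw [SL_slash_apply]
    have : g ((ModularGroup.S • z : ℍ) : ℂ) = - (z:ℂ) ^ K * g z := by
      rw [← hS z z.2, modular_S_smul]; congr 1
      simp; field_simp
    simp only [hh, hDS, this]
    have hz := z.ne_zero
    have hD := discriminant_ne_zero z
    rw [ModularGroup.denom_S, neg_sub, zpow_sub₀ hz]
    have e1 : (z:ℂ) ^ (12 * (N0:ℤ)) = ((z:ℂ) ^ 12) ^ N0 := by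
      rw [← pow_mul, ← zpow_natCast]; push_cast; rfl
    have e2 : (z:ℂ) ^ (2 * (K:ℤ)) = ((z:ℂ) ^ K) ^ 2 := by
      rw [← pow_mul, ← zpow_natCast]; push_cast; congr 1; ring
    rw [e1, e2, mul_pow _ (ModularForm.discriminant z) N0]
    field_simp
  have sl := SlashInvariantForm.slash_action_generators_SL2Z sS sT
  refine ⟨{ toFun := h
            slash_action_eq' := fun _ ⟨γ, hγ⟩ ↦ hγ ▸ sl γ
            holo' := ?_
            bdd_at_cusps' := ?_ }, fun z => rfl⟩
  · have h1 : MDiff (fun z : ℍ => g z) := by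
      rw [UpperHalfPlane.mdifferentiable_iff]
      refine hd.congr fun z hz => ?_
      simp [ofComplex_apply_of_im_pos hz]
    have h2 : MDiff (fun z : ℍ => ModularForm.discriminant z ) := CuspForm.discriminant.holo'
    rw [UpperHalfPlane.mdifferentiable_iff] at h1 h2 ⊢
    refine (h1.pow 2).div (h2.pow N0) (fun z hz => ?_)
    exact pow_ne_zero _ (discriminant_ne_zero _)
  · intro c hc
    rw [Subgroup.IsArithmetic.isCusp_iff_isCusp_SL2Z] at hc
    rw [OnePoint.isBoundedAt_iff_forall_SL2Z hc]
    intro γ _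
    show IsBoundedAtImInfty (h ∣[(2 * (K : ℤ) - 12 * N0)] γ)
    rw [sl γ, IsBoundedAtImInfty, BoundedAtFilter]
    refine (Asymptotics.div_isBoundedUnder_of_isBigO ?_).isBigO_one ℝ
    have hE := exp_isBigO_discriminant.pow N0
    refine Asymptotics.IsBigO.trans ?_ hE
    refine Asymptotics.IsBigO.of_bound (C ^ 2) ?_
    have : ∀ᶠ z : ℍ in atImInfty, 1 ≤ z.im := by
      rw [atImInfty]; exact tendsto_comap.eventually (eventually_ge_atTop 1)
    filter_upwards [this] with z hz
    have := hb z hz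
    rw [norm_pow, norm_pow, Real.norm_of_nonneg (Real.exp_pos _).le]
    calc ‖g z‖ ^ 2 ≤ (C * Real.exp (-Real.pi * N0 * (z:ℂ).im)) ^ 2 := by gcongr
      _ = C ^ 2 * Real.exp (-2 * Real.pi * z.im) ^ N0 := by
        rw [mul_pow, ← Real.exp_nat_mul, ← Real.exp_nat_mul]; congr 2
        push_cast; rw [UpperHalfPlane.coe_im]; ring

open UpperHalfPlane ModularForm MatrixGroups Manifold in
lemma lemS (K N0 : ℕ) (g : ℂ → ℂ) (hd : DifferentiableOn ℂ g {t | 0 < t.im})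
    (hT : ∀ t : ℂ, 0 < t.im → g (t + 1) = - g t)
    (hS : ∀ t : ℂ, 0 < t.im → g (-1 / t) = - t ^ K * g t) (C : ℝ)
    (hb : ∀ t : ℂ, 1 ≤ t.im → ‖g t‖ ≤ C * Real.exp (-Real.pi * N0 * t.im))
    (h : K < 6 * N0 ∨ (K = 8 ∧ N0 = 1)) : ∀ t : ℂ, 0 < t.im → g t = 0 := by
  obtain ⟨f, hf⟩ := lemS_form K N0 g hd hT hS C hb
  suffices hz : ∀ z : ℍ, f z = 0 by
    intro t ht
    have := hz ⟨t, ht⟩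
    rw [hf] at this
    rcases div_eq_zero_iff.1 this with h1 | h1
    · exact pow_eq_zero_iff (two_ne_zero) |>.1 h1
    · exact absurd h1 (pow_ne_zero _ (discriminant_ne_zero _))
  rcases h with h | ⟨rfl, rfl⟩
  · intro z
    have := ModularFormClass.levelOne_neg_weight_eq_zero (k := 2 * (K : ℤ) - 12 * N0) (by omega) f
    rw [this]; rfl
  · have hgI : g Complex.I = 0 := by
      have := hS Complex.I (by simp)
      have e : (-1 / Complex.I : ℂ) = Complex.I := by simp
      have e2 : (Complex.I : ℂ) ^ 8 = 1 := by rw [show 8 = 4 * 2 by rfl, pow_mul, I_pow_four]; simp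
      rw [e, e2] at this
      linear_combination this / 2
    have hfI : f UpperHalfPlane.I = 0 := by rw [hf]; simp [hgI]
    have hrank := levelOne_weight_four_rank_one
    have hE6 : E₆ UpperHalfPlane.I = 0 := by
      have h1 := congrFun (SlashInvariantForm.slash_action_eqn E₆ (ModularGroup.S : GL (Fin 2) ℝ) ⟨_, rfl⟩) UpperHalfPlane.I
      rw [← ModularForm.SL_slash, SL_slash_apply, ModularGroup.denom_S] at h1
      have h2 : ModularGroup.S • UpperHalfPlane.I = UpperHalfPlane.I := by
        rw [modular_S_smul]; ext; simp
      have h3 : (((UpperHalfPlane.I : ℍ) : ℂ)) ^ (-6 : ℤ) = -1 := by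
        rw [UpperHalfPlane.coe_I, _root_.zpow_neg]
        have : Complex.I ^ (6:ℤ) = -1 := by
          rw [show (6:ℤ) = ((6:ℕ):ℤ) by rfl, zpow_natCast, show 6 = 2 * 3 by rfl, pow_mul, I_sq]
          norm_num
        rw [this]; norm_num
      rw [h2] at h1
      erw [h3] at h1
      linear_combination -h1 / 2
    have hE4 : E₄ UpperHalfPlane.I ≠ 0 := by
      intro h0
      have := discriminant_eq_E₄_cube_sub_E₆_sq UpperHalfPlane.I
      rw [h0, hE6] at this
      exact discriminant_ne_zero _ (by simpa using this)
    have hE40 : (E₄ : ModularForm 𝒮ℒ 4) ≠ 0 := by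
      intro h0; apply hE4; rw [h0]; rfl
    have hfr : Module.finrank ℂ (ModularForm 𝒮ℒ 4) = 1 := Module.finrank_eq_of_rank_eq hrank
    obtain ⟨c, hc⟩ := (finrank_eq_one_iff_of_nonzero' _ hE40).1 hfr f
    intro z
    have h1 : c * E₄ UpperHalfPlane.I = f UpperHalfPlane.I := by rw [← hc]; rfl
    rw [hfI] at h1
    have hc0 : c = 0 := by
      rcases mul_eq_zero.1 h1 with h | h
      · exact h
      · exact absurd h hE4
    rw [← hc, hc0]
    show (0:ℂ) * E₄ z = 0
    simp

end

section


abbrev M4 := Matrix (Fin 4) (Fin 4) ℤ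
def mT : M4 := !![1,0,1,0; 0,1,0,0; 0,0,1,0; 0,0,0,1]
def mJ : M4 := !![0,0,-1,0; 0,1,0,0; 1,0,0,0; 0,0,0,1]
def mW : M4 := !![0,1,0,0; 1,0,0,0; 0,0,0,1; 0,0,1,0]
def mL : M4 := !![1,0,0,0; 1,1,0,0; 0,0,1,-1; 0,0,0,1]
def mT2 : M4 := !![1,0,0,0; 0,1,0,1; 0,0,1,0; 0,0,0,1]
def mT12 : M4 := !![1,0,0,1; 0,1,1,0; 0,0,1,0; 0,0,0,1]
def mP : M4 := !![1,0,0,0; 0,-1,0,0; 0,0,1,0; 0,0,0,-1]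

def GG : Submonoid M4 := Submonoid.closure {mT, mJ, mW, mL}

lemma mT_mem : mT ∈ GG := Submonoid.subset_closure (by simp)
lemma mJ_mem : mJ ∈ GG := Submonoid.subset_closure (by simp)
lemma mW_mem : mW ∈ GG := Submonoid.subset_closure (by simp)
lemma mL_mem : mL ∈ GG := Submonoid.subset_closure (by simp)

lemma Sp_mul {a b : M4} (ha : a ∈ Sp4Z) (hb : b ∈ Sp4Z) : a * b ∈ Sp4Z := by
  simp only [Sp4Z, Set.mem_ofPred_eq] at *
  calc (a * b)ᵀ * J4 * (a * b) = bᵀ * (aᵀ * J4 * a) * b := by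
        rw [Matrix.transpose_mul]; simp only [Matrix.mul_assoc]
    _ = J4 := by rw [ha, hb]

lemma GG_Sp {g : M4} (hg : g ∈ GG) : g ∈ Sp4Z := by
  induction hg using Submonoid.closure_induction with
  | mem x hx =>
    simp only [Set.mem_insert_iff, Set.mem_singleton_iff] at hx
    rcases hx with rfl | rfl | rfl | rfl <;> (simp only [Sp4Z, Set.mem_ofPred_eq]; decide)
  | one => simp [Sp4Z]
  | mul x y _ _ hx hy => exact Sp_mul hx hy

lemma GG_inv {g : M4} (hg : g ∈ GG) : ∃ g' ∈ GG, g * g' = 1 ∧ g' * g = 1 := by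
  induction hg using Submonoid.closure_induction with
  | mem x hx =>
    simp only [Set.mem_insert_iff, Set.mem_singleton_iff] at hx
    have hJ := mJ_mem
    have hW := mW_mem
    have hT := mT_mem
    have hP : (mW * mJ * mW) * (mW * mJ * mW) ∈ GG :=
      mul_mem (mul_mem (mul_mem hW hJ) hW) (mul_mem (mul_mem hW hJ) hW)
    rcases hx with rfl | rfl | rfl | rfl
    · exact ⟨mJ * mT * mJ * mT * mJ * (mJ * mJ), mul_mem (mul_mem (mul_mem (mul_mem
        (mul_mem hJ hT) hJ) hT) hJ) (mul_mem hJ hJ), by decide, by decide⟩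
    · exact ⟨mJ * mJ * mJ, mul_mem (mul_mem hJ hJ) hJ, by decide, by decide⟩
    · exact ⟨mW, hW, by decide, by decide⟩
    · exact ⟨((mW * mJ * mW) * (mW * mJ * mW)) * mL * ((mW * mJ * mW) * (mW * mJ * mW)),
        mul_mem (mul_mem hP mL_mem) hP, by decide, by decide⟩
  | one => exact ⟨1, one_mem _, by simp, by simp⟩
  | mul x y _ _ hx hy =>
    obtain ⟨x', hx', h1, h2⟩ := hx
    obtain ⟨y', hy', h3, h4⟩ := hy
    refine ⟨y' * x', mul_mem hy' hx', ?_, ?_⟩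
    · calc x * y * (y' * x') = x * (y * y') * x' := by simp only [Matrix.mul_assoc]
        _ = 1 := by rw [h3, Matrix.mul_one, h1]
    · calc y' * x' * (x * y) = y' * (x' * x) * y := by simp only [Matrix.mul_assoc]
        _ = 1 := by rw [h2, Matrix.mul_one, h4]

lemma GG_cancel {g γ : M4} (hg : g ∈ GG) (h : g * γ ∈ GG) : γ ∈ GG := by
  obtain ⟨g', hg', h1, h2⟩ := GG_inv hg
  have : γ = g' * (g * γ) := by rw [← Matrix.mul_assoc, h2, Matrix.one_mul]
  rw [this]; exact mul_mem hg' h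

lemma GG_of_right {g h : M4} (hg : g ∈ GG) (e : g * h = 1) : h ∈ GG :=
  GG_cancel hg (by rw [e]; exact one_mem _)

open MatrixGroups in
lemma E_mem (E : SL(2, ℤ) →* M4) (hS : E ModularGroup.S ∈ GG) (hT : E ModularGroup.T ∈ GG)
    (σ : SL(2, ℤ)) : E σ ∈ GG := by
  have hσ : σ ∈ Subgroup.closure {ModularGroup.S, ModularGroup.T} := by
    rw [SpecialLinearGroup.SL2Z_generators]; trivial
  induction hσ using Subgroup.closure_induction with
  | mem x hx =>
    simp only [Set.mem_insert_iff, Set.mem_singleton_iff] at hx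
    rcases hx with rfl | rfl <;> assumption
  | one => rw [map_one]; exact one_mem _
  | mul x y _ _ hx hy => rw [map_mul]; exact mul_mem hx hy
  | inv x _ hx =>
    refine GG_of_right hx ?_
    rw [← map_mul, mul_inv_cancel, map_one]

open MatrixGroups in
lemma sl_mul_e (σ τ : SL(2, ℤ)) (i j : Fin 2) :
    (σ * τ) i j = σ i 0 * τ 0 j + σ i 1 * τ 1 j := by
  exact (Matrix.mul_apply (M := σ.1) (N := τ.1)).trans (Fin.sum_univ_two _)

open MatrixGroups in
def E1 : SL(2, ℤ) →* M4 where
  toFun σ := !![σ 0 0, 0, σ 0 1, 0; 0,1,0,0; σ 1 0, 0, σ 1 1, 0; 0,0,0,1]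
  map_one' := by decide
  map_mul' σ τ := by
    rw [sl_mul_e σ τ 0 0, sl_mul_e σ τ 0 1, sl_mul_e σ τ 1 0, sl_mul_e σ τ 1 1]
    simp

open MatrixGroups in
def E2 : SL(2, ℤ) →* M4 where
  toFun σ := !![1,0,0,0; 0, σ 0 0, 0, σ 0 1; 0,0,1,0; 0, σ 1 0, 0, σ 1 1]
  map_one' := by decide
  map_mul' σ τ := by
    rw [sl_mul_e σ τ 0 0, sl_mul_e σ τ 0 1, sl_mul_e σ τ 1 0, sl_mul_e σ τ 1 1]
    simp

open MatrixGroups in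
def EU : SL(2, ℤ) →* M4 where
  toFun σ := !![σ 0 0, σ 0 1, 0, 0; σ 1 0, σ 1 1,0,0; 0, 0, σ 1 1, -σ 1 0; 0,0,-σ 0 1, σ 0 0]
  map_one' := by decide
  map_mul' σ τ := by
    rw [sl_mul_e σ τ 0 0, sl_mul_e σ τ 0 1, sl_mul_e σ τ 1 0, sl_mul_e σ τ 1 1]
    simp; constructorm* _ ∧ _ <;> ring

open MatrixGroups in
lemma E1_mem (σ : SL(2, ℤ)) : E1 σ ∈ GG := by
  refine E_mem E1 ?_ ?_ σ
  · have : E1 ModularGroup.S = mJ := by decide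
    rw [this]; exact mJ_mem
  · have : E1 ModularGroup.T = mT := by decide
    rw [this]; exact mT_mem

open MatrixGroups in
lemma E2_mem (σ : SL(2, ℤ)) : E2 σ ∈ GG := by
  refine E_mem E2 ?_ ?_ σ
  · have : E2 ModularGroup.S = mW * mJ * mW := by decide
    rw [this]; exact mul_mem (mul_mem mW_mem mJ_mem) mW_mem
  · have : E2 ModularGroup.T = mW * mT * mW := by decide
    rw [this]; exact mul_mem (mul_mem mW_mem mT_mem) mW_mem

open MatrixGroups in
lemma EU_mem (σ : SL(2, ℤ)) : EU σ ∈ GG := by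
  have h : mW * mL * mW ∈ GG := mul_mem (mul_mem mW_mem mL_mem) mW_mem
  refine E_mem EU ?_ ?_ σ
  · have : (mW * mL * mW) * EU ModularGroup.S * (mW * mL * mW) = mL := by decide
    obtain ⟨k, hk, h1, h2⟩ := GG_inv h
    refine GG_cancel h ?_
    have e : mW * mL * mW * EU ModularGroup.S = mL * k := by
      conv_rhs => rw [← this]
      rw [Matrix.mul_assoc _ _ k, h1, Matrix.mul_one]
    rw [e]; exact mul_mem mL_mem hk
  · have : EU ModularGroup.T = mW * mL * mW := by decide
    rw [this]; exact h

open MatrixGroups in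
lemma bez (a b : ℤ) : ∃ σ : SL(2, ℤ), σ 1 0 * a + σ 1 1 * b = 0 := by
  by_cases h : Int.gcd a b = 0
  · rw [Int.gcd_eq_zero_iff] at h
    exact ⟨1, by simp [h.1, h.2]⟩
  · obtain ⟨a', ha⟩ := Int.gcd_dvd_left (a := a) (b := b)
    obtain ⟨b', hb⟩ := Int.gcd_dvd_right (a := a) (b := b)
    have hg := Int.gcd_eq_gcd_ab a b
    set g : ℤ := (Int.gcd a b : ℤ) with hgdef
    have hg0 : g ≠ 0 := by rw [hgdef]; exact_mod_cast h
    have h1 : a' * Int.gcdA a b + b' * Int.gcdB a b = 1 := by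
      apply mul_left_cancel₀ hg0
      calc g * (a' * Int.gcdA a b + b' * Int.gcdB a b)
          = (g * a') * Int.gcdA a b + (g * b') * Int.gcdB a b := by ring
        _ = a * Int.gcdA a b + b * Int.gcdB a b := by rw [← ha, ← hb]
        _ = g * 1 := by rw [← hg, mul_one]
    refine ⟨⟨!![Int.gcdA a b, Int.gcdB a b; -b', a'], ?_⟩, ?_⟩
    · rw [Matrix.det_fin_two_of]; linarith
    · simp only [Matrix.of_apply, Matrix.cons_val', Matrix.cons_val_zero, Matrix.cons_val_one,
        Matrix.cons_val_fin_one]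
      linear_combination (-b') * ha + a' * hb

lemma M4_eta (δ : M4) : δ = !![δ 0 0, δ 0 1, δ 0 2, δ 0 3; δ 1 0, δ 1 1, δ 1 2, δ 1 3;
    δ 2 0, δ 2 1, δ 2 2, δ 2 3; δ 3 0, δ 3 1, δ 3 2, δ 3 3] := by
  ext i j; fin_cases i <;> fin_cases j <;> rfl

lemma sp_pair {γ : M4} (h : γ ∈ Sp4Z) (i j : Fin 4) :
    γ 0 i * γ 2 j + γ 1 i * γ 3 j - γ 2 i * γ 0 j - γ 3 i * γ 1 j = J4 i j := by
  have := congrFun (congrFun h i) j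
  rw [← this]
  simp [Matrix.mul_apply, Fin.sum_univ_succ, J4]
  ring

open MatrixGroups in
lemma A1_mem (p : ℤ) : (!![1, p, 0, 0; 0, 1, 0, 0; 0, 0, 1, 0; 0, 0, -p, 1] : M4) ∈ GG := by
  have : EU (ModularGroup.T ^ p) = !![1, p, 0, 0; 0, 1, 0, 0; 0, 0, 1, 0; 0, 0, -p, 1] := by
    simp [EU, ModularGroup.coe_T_zpow]
  rw [← this]; exact EU_mem _

open MatrixGroups in
lemma A3_mem (p : ℤ) : (!![1, 0, p, 0; 0, 1, 0, 0; 0, 0, 1, 0; 0, 0, 0, 1] : M4) ∈ GG := by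
  have : E1 (ModularGroup.T ^ p) = !![1, 0, p, 0; 0, 1, 0, 0; 0, 0, 1, 0; 0, 0, 0, 1] := by
    simp [E1, ModularGroup.coe_T_zpow]
  rw [← this]; exact E1_mem _

lemma A2_mem (p : ℤ) : (!![1, 0, 0, p; 0, 1, p, 0; 0, 0, 1, 0; 0, 0, 0, 1] : M4) ∈ GG := by
  have e : (!![1, 0, 0, p; 0, 1, p, 0; 0, 0, 1, 0; 0, 0, 0, 1] : M4) =
      !![1,0,0,0; 0,0,0,1; 0,0,1,0; 0,-1,0,0] *
      !![1, -p, 0, 0; 0, 1, 0, 0; 0, 0, 1, 0; 0, 0, - -p, 1] *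
      !![1,0,0,0; 0,0,0,-1; 0,0,1,0; 0,1,0,0] := by simp
  have e2 : (!![1,0,0,0; 0,0,0,-1; 0,0,1,0; 0,1,0,0] : M4) = mW * mJ * mW := by decide
  have e1 : (!![1,0,0,0; 0,0,0,1; 0,0,1,0; 0,-1,0,0] : M4) = mW * mJ * mJ * mJ * mW := by decide
  rw [e, e1, e2]
  have hJ := mJ_mem
  have hW := mW_mem
  exact mul_mem (mul_mem (mul_mem (mul_mem (mul_mem (mul_mem hW hJ) hJ) hJ) hW) (A1_mem _))
    (mul_mem (mul_mem hW hJ) hW)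

open MatrixGroups in
theorem GG_top {γ : M4} (h : γ ∈ Sp4Z) : γ ∈ GG := by
  -- step 1
  have s1 : ∀ γ ∈ Sp4Z, (γ 1 0 = 0 ∧ γ 2 0 = 0 ∧ γ 3 0 = 0 ∧ γ 0 0 = 1) → γ ∈ GG := by
    intro γ h ⟨h1, h2, h3, h0⟩
    have p01 := sp_pair h 0 1
    have p02 := sp_pair h 0 2
    have p03 := sp_pair h 0 3
    have p13 := sp_pair h 1 3
    simp [h1, h2, h3, h0, J4] at p01 p02 p03 p13
    simp only [p01, p03, mul_zero, zero_mul, zero_add, sub_zero] at p13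
    have hdet : (!![γ 3 3, -γ 1 3; -γ 3 1, γ 1 1] : Matrix (Fin 2) (Fin 2) ℤ).det = 1 := by
      rw [Matrix.det_fin_two_of]; linarith
    refine GG_cancel (E2_mem ⟨_, hdet⟩) ?_
    set δ := E2 ⟨_, hdet⟩ * γ with hδ
    have hδS : δ ∈ Sp4Z := Sp_mul (GG_Sp (E2_mem _)) h
    have q12 := sp_pair hδS 1 2
    have q23 := sp_pair hδS 2 3
    have e00 : δ 0 0 = 1 := by simp [hδ, E2, Matrix.vecMul, dotProduct, Fin.sum_univ_succ, h0]
    have e10 : δ 1 0 = 0 := by simp [hδ, E2, Matrix.vecMul, dotProduct, Fin.sum_univ_succ, h1, h3]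
    have e20 : δ 2 0 = 0 := by simp [hδ, E2, Matrix.vecMul, dotProduct, Fin.sum_univ_succ, h2]
    have e30 : δ 3 0 = 0 := by simp [hδ, E2, Matrix.vecMul, dotProduct, Fin.sum_univ_succ, h1, h3]
    have e21 : δ 2 1 = 0 := by simp [hδ, E2, Matrix.vecMul, dotProduct, Fin.sum_univ_succ, p01]
    have e22 : δ 2 2 = 1 := by simp [hδ, E2, Matrix.vecMul, dotProduct, Fin.sum_univ_succ, p02]
    have e23 : δ 2 3 = 0 := by simp [hδ, E2, Matrix.vecMul, dotProduct, Fin.sum_univ_succ, p03]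
    have e11 : δ 1 1 = 1 := by
      simp [hδ, E2, Matrix.vecMul, dotProduct, Fin.sum_univ_succ]; linarith
    have e13 : δ 1 3 = 0 := by
      simp [hδ, E2, Matrix.vecMul, dotProduct, Fin.sum_univ_succ]; ring
    have e31 : δ 3 1 = 0 := by
      simp [hδ, E2, Matrix.vecMul, dotProduct, Fin.sum_univ_succ]; ring
    have e33 : δ 3 3 = 1 := by
      simp [hδ, E2, Matrix.vecMul, dotProduct, Fin.sum_univ_succ]; linarith
    simp [e10, e20, e30, e00, e21, e22, e23, e11, e13, e31, e33, J4] at q12 q23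
    have hx : δ = !![1, δ 0 1, 0, 0; 0, 1, 0, 0; 0, 0, 1, 0; 0, 0, -δ 0 1, 1] *
        !![1, 0, 0, δ 0 3; 0, 1, δ 0 3, 0; 0, 0, 1, 0; 0, 0, 0, 1] *
        !![1, 0, δ 0 2 - δ 0 1 * δ 0 3, 0; 0, 1, 0, 0; 0, 0, 1, 0; 0, 0, 0, 1] := by
      have e32 : δ 3 2 = - δ 0 1 := by linarith
      have e12 : δ 1 2 = δ 0 3 := by linarith
      conv_lhs => rw [M4_eta δ]
      rw [e10, e20, e30, e00, e21, e22, e23, e11, e13, e31, e33, e32, e12]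
      simp
    rw [hx]
    exact mul_mem (mul_mem (A1_mem _) (A2_mem _)) (A3_mem _)
  have s2 : ∀ γ ∈ Sp4Z, (γ 1 0 = 0 ∧ γ 2 0 = 0 ∧ γ 3 0 = 0) → γ ∈ GG := by
    intro γ h ⟨h1, h2, h3⟩
    have p02 := sp_pair h 0 2
    simp [h1, h2, h3, J4] at p02
    rcases Int.eq_one_or_neg_one_of_mul_eq_one p02 with h0 | h0
    · exact s1 γ h ⟨h1, h2, h3, h0⟩
    · refine GG_cancel (E1_mem (-1)) (s1 _ (Sp_mul (GG_Sp (E1_mem _)) h) ?_)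
      refine ⟨?_, ?_, ?_, ?_⟩ <;> simp [E1, Matrix.vecMul, dotProduct, Fin.sum_univ_succ, h1, h2, h3, h0]
  have s3 : ∀ γ ∈ Sp4Z, (γ 2 0 = 0 ∧ γ 3 0 = 0) → γ ∈ GG := by
    intro γ h ⟨h2, h3⟩
    obtain ⟨σ, hσ⟩ := bez (γ 0 0) (γ 1 0)
    refine GG_cancel (EU_mem σ) (s2 _ (Sp_mul (GG_Sp (EU_mem _)) h) ?_)
    refine ⟨?_, ?_, ?_⟩ <;> simp [EU, Matrix.vecMul, dotProduct, Fin.sum_univ_succ, h2, h3, hσ]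
  have s4 : ∀ γ ∈ Sp4Z, (γ 2 0 = 0) → γ ∈ GG := by
    intro γ h h2
    obtain ⟨σ, hσ⟩ := bez (γ 1 0) (γ 3 0)
    refine GG_cancel (E2_mem σ) (s3 _ (Sp_mul (GG_Sp (E2_mem _)) h) ?_)
    refine ⟨?_, ?_⟩ <;> simp [E2, Matrix.vecMul, dotProduct, Fin.sum_univ_succ, h2, hσ]
  obtain ⟨σ, hσ⟩ := bez (γ 0 0) (γ 2 0)
  refine GG_cancel (E1_mem σ) (s4 _ (Sp_mul (GG_Sp (E1_mem _)) h) ?_)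
  simp [E1, Matrix.vecMul, dotProduct, Fin.sum_univ_succ, hσ]

/-- values of ε. -/
lemma eps_vals {ε : M4 → ℂ} (hε : IsEps ε) :
    ε mT = -1 ∧ ε mT2 = -1 ∧ ε mT12 = -1 ∧ ε mJ = -1 ∧ ε mW = -1 ∧ ε mL = -1 ∧ ε mP = 1 := by
  obtain ⟨hv, hm, hn⟩ := hε
  have T := GG_Sp mT_mem
  have J := GG_Sp mJ_mem
  have W := GG_Sp mW_mem
  have L := GG_Sp mL_mem
  have P : mP ∈ Sp4Z := by simp only [Sp4Z, Set.mem_ofPred_eq]; decide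
  have T2 : mT2 ∈ Sp4Z := by simp only [Sp4Z, Set.mem_ofPred_eq]; decide
  have T12 : mT12 ∈ Sp4Z := by simp only [Sp4Z, Set.mem_ofPred_eq]; decide
  have sq : ∀ γ ∈ Sp4Z, ε γ * ε γ = 1 := by
    intro γ h; rcases hv γ h with e | e <;> rw [e] <;> norm_num
  have rJ : ε mJ = ε mT := by
    have e : (mT * mJ) * (mT * mJ) * (mT * mJ) = mJ * mJ := by decide
    have := congrArg ε e
    rw [hm _ (Sp_mul (Sp_mul T J) (Sp_mul T J)) _ (Sp_mul T J), hm _ (Sp_mul T J) _ (Sp_mul T J),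
      sq _ (Sp_mul T J), hm _ T _ J, hm _ J _ J, sq _ J] at this
    linear_combination ε mT * this - ε mJ * sq _ T
  have rT2 : ε mT2 = ε mT := by
    have e : mW * mT2 = mT * mW := by decide
    have := congrArg ε e
    rw [hm _ W _ T2, hm _ T _ W] at this
    linear_combination ε mW * this + (ε mT - ε mT2) * sq _ W
  have rT12 : ε mT12 = ε mT := by
    have e : mL * mT = (mT * mT12 * mT2) * mL := by decide
    have := congrArg ε e
    rw [hm _ L _ T, hm _ (Sp_mul (Sp_mul T T12) T2) _ L, hm _ (Sp_mul T T12) _ T2, hm _ T _ T12,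
      rT2] at this
    linear_combination (-1) * ε mL * this + (ε mT - ε mT12 * ε mT * ε mT) * sq _ L
      - ε mT12 * sq _ T
  have J2 : mW * mJ * mW ∈ Sp4Z := Sp_mul (Sp_mul W J) W
  have rP : ε mP = 1 := by
    have e : mP = (mW * mJ * mW) * (mW * mJ * mW) := by decide
    rw [e, hm _ J2 _ J2, sq _ J2]
  have rL : ε mL = ε mT := by
    have e : mJ * mT12 = (mP * mL) * mP * mJ  := by decide
    have := congrArg ε e
    rw [hm _ J _ T12, hm _ (Sp_mul (Sp_mul P L) P) _ J, hm _ (Sp_mul P L) _ P, hm _ P _ L, rP,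
      rT12] at this
    linear_combination (-1) * ε mJ * this + (ε mT - ε mL) * sq _ J
  have rW : ε mW = ε mT := by
    have e : (mW * mL * mW) * (mP * mL * mP) * (mW * mL * mW) = mP * mW := by decide
    have := congrArg ε e
    have V := Sp_mul (Sp_mul W L) W
    have Q := Sp_mul (Sp_mul P L) P
    rw [hm _ (Sp_mul V Q) _ V, hm _ V _ Q, hm _ (Sp_mul P L) _ P, hm _ P _ L, hm _ P _ W, rP,
      rL] at this
    linear_combination (-1) * this + ε mT * sq _ V
  have hT : ε mT = -1 := by
    rcases hv _ T with h | h
    · exfalso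
      obtain ⟨γ, hγ, hne⟩ := hn
      apply hne
      have hG := GG_top hγ
      clear hne hγ
      induction hG using Submonoid.closure_induction with
      | mem x hx =>
        simp only [Set.mem_insert_iff, Set.mem_singleton_iff] at hx
        rcases hx with rfl | rfl | rfl | rfl <;> simp [rJ, rW, rL, h]
      | one =>
        have : (1 : M4) = mW * mW := by decide
        rw [this, hm _ W _ W, sq _ W]
      | mul x y hx hy h1 h2 => rw [hm _ (GG_Sp hx) _ (GG_Sp hy), h1, h2, one_mul]
    · exact h
  rw [rT2, rT12, rJ, rW, rL, rP, hT]
  simp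

end

section


def sym (t z u : ℂ) : Fin 2 → Fin 2 → ℂ := ![![t, z], ![z, u]]

lemma sym_mem {t z u : ℂ} : sym t z u ∈ H2 ↔ 0 < t.im ∧ z.im ^ 2 < t.im * u.im := by
  unfold H2
  simp only [Set.mem_ofPred_eq]
  constructor
  · rintro ⟨-, h⟩
    have h1 := h.diag_pos (i := 0)
    have h2 := h.det_pos
    simp [Matrix.det_fin_two, sym] at h1 h2
    exact ⟨h1, by nlinarith⟩
  · rintro ⟨h1, h2⟩
    refine ⟨?_, ?_⟩
    · ext i j; fin_cases i <;> fin_cases j <;> simp [sym]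
    · refine Matrix.PosDef.of_dotProduct_mulVec_pos ?_ ?_
      · ext i j; fin_cases i <;> fin_cases j <;> simp [sym]
      · intro x hx
        simp [sym, dotProduct, Matrix.mulVec, Fin.sum_univ_two]
        have e : x 0 * (t.im * x 0 + z.im * x 1) + x 1 * (z.im * x 0 + u.im * x 1)
          = ((t.im * x 0 + z.im * x 1) ^ 2 + (t.im * u.im - z.im ^ 2) * x 1 ^ 2) / t.im := by
          field_simp; ring
        rw [e]
        apply div_pos _ h1
        by_cases hx1 : x 1 = 0
        · have hx0 : x 0 ≠ 0 := by
            rintro h0; apply hx; ext i; fin_cases i <;> simp [h0, hx1]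
          simp [hx1]; positivity
        · have : 0 < (t.im * u.im - z.im ^ 2) * x 1 ^ 2 := mul_pos (by linarith) (by positivity)
          positivity

lemma exists_sym {τ : Fin 2 → Fin 2 → ℂ} (h : τ ∈ H2) : ∃ t z u, τ = sym t z u := by
  refine ⟨τ 0 0, τ 0 1, τ 1 1, ?_⟩
  have h1 : τ 1 0 = τ 0 1 := congrFun (congrFun h.1 0) 1
  ext i j; fin_cases i <;> fin_cases j <;> simp [sym, h1]

/-! ### cocycle -/
lemma blk_mul (g h : M4) (r s : Fin 2) :
    blk (g * h) r s = blk g r 0 * blk h 0 s + blk g r 1 * blk h 1 s := by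
  ext i j
  simp only [blk, Matrix.of_apply, Matrix.add_apply, Matrix.mul_apply, Fin.sum_univ_four,
    Fin.sum_univ_two]
  push_cast
  rw [add_assoc (_ + _)]
  rfl

lemma of_moeb (γ : M4) (τ) : Matrix.of (moeb γ τ) =
    (blk γ 0 0 * Matrix.of τ + blk γ 0 1) * (den γ τ)⁻¹ := rfl

lemma num_mul (g γ : M4) (τ) (r : Fin 2) (hD : (den γ τ).det ≠ 0) :
    blk (g * γ) r 0 * Matrix.of τ + blk (g * γ) r 1 =
      (blk g r 0 * Matrix.of (moeb γ τ) + blk g r 1) * den γ τ := by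
  have hu : IsUnit (den γ τ).det := isUnit_iff_ne_zero.mpr hD
  have e : ∀ A B : Matrix (Fin 2) (Fin 2) ℂ, (A * (B * (den γ τ)⁻¹)) * den γ τ = A * B := by
    intro A B
    rw [Matrix.mul_assoc, Matrix.mul_assoc, Matrix.nonsing_inv_mul _ hu, Matrix.mul_one]
  rw [of_moeb, blk_mul, blk_mul, Matrix.add_mul (blk g r 0 * _) (blk g r 1), e]
  conv_rhs => rw [den]
  noncomm_ring

lemma den_mul (g γ : M4) (τ) (hD : (den γ τ).det ≠ 0) :
    den (g * γ) τ = den g (moeb γ τ) * den γ τ := num_mul g γ τ 1 hD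

lemma moeb_mul (g γ : M4) (τ) (hD : (den γ τ).det ≠ 0) :
    moeb (g * γ) τ = moeb g (moeb γ τ) := by
  have hu : IsUnit (den γ τ).det := isUnit_iff_ne_zero.mpr hD
  have : Matrix.of (moeb (g * γ) τ) = Matrix.of (moeb g (moeb γ τ)) := by
    rw [of_moeb, of_moeb g, num_mul g γ τ 0 hD, den_mul g γ τ hD, Matrix.mul_inv_rev,
      Matrix.mul_assoc _ (den γ τ), ← Matrix.mul_assoc (den γ τ), Matrix.mul_nonsing_inv _ hu,
      Matrix.one_mul]
  exact this

lemma moeb_eq {γ : M4} {τ M} (hD : (den γ τ).det ≠ 0)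
    (h : blk γ 0 0 * Matrix.of τ + blk γ 0 1 = Matrix.of M * den γ τ) : moeb γ τ = M := by
  have hu : IsUnit (den γ τ).det := isUnit_iff_ne_zero.mpr hD
  have : Matrix.of (moeb γ τ) = Matrix.of M := by
    rw [of_moeb, h, Matrix.mul_assoc, Matrix.mul_nonsing_inv _ hu, Matrix.mul_one]
  exact this

lemma blk_mk (γ : M4) : blk γ 0 0 = !![(γ 0 0 : ℂ), γ 0 1; γ 1 0, γ 1 1] ∧
  blk γ 0 1 = !![(γ 0 2 : ℂ), γ 0 3; γ 1 2, γ 1 3] ∧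
  blk γ 1 0 = !![(γ 2 0 : ℂ), γ 2 1; γ 3 0, γ 3 1] ∧
  blk γ 1 1 = !![(γ 2 2 : ℂ), γ 2 3; γ 3 2, γ 3 3] := by
  refine ⟨?_, ?_, ?_, ?_⟩ <;> (ext i j; fin_cases i <;> fin_cases j <;> rfl)

lemma den_mk (γ : M4) (t z u : ℂ) : den γ (sym t z u) =
    !![γ 2 0 * t + γ 2 1 * z + γ 2 2, γ 2 0 * z + γ 2 1 * u + γ 2 3;
       γ 3 0 * t + γ 3 1 * z + γ 3 2, γ 3 0 * z + γ 3 1 * u + γ 3 3] := by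
  obtain ⟨_, _, h3, h4⟩ := blk_mk γ
  rw [den, h3, h4]
  ext i j; fin_cases i <;> fin_cases j <;> simp [sym, Matrix.mul_apply, Fin.sum_univ_two]

lemma nom_mk (γ : M4) (t z u : ℂ) : blk γ 0 0 * Matrix.of (sym t z u) + blk γ 0 1 =
    !![γ 0 0 * t + γ 0 1 * z + γ 0 2, γ 0 0 * z + γ 0 1 * u + γ 0 3;
       γ 1 0 * t + γ 1 1 * z + γ 1 2, γ 1 0 * z + γ 1 1 * u + γ 1 3] := by
  obtain ⟨h3, h4, _, _⟩ := blk_mk γ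
  rw [h3, h4]
  ext i j; fin_cases i <;> fin_cases j <;> simp [sym, Matrix.mul_apply, Fin.sum_univ_two]

lemma den_mT (t z u : ℂ) : den mT (sym t z u) = !![1, 0; 0, 1] := by simp [den_mk, mT]
lemma den_mT2 (t z u : ℂ) : den mT2 (sym t z u) = !![1, 0; 0, 1] := by simp [den_mk, mT2]
lemma den_mT12 (t z u : ℂ) : den mT12 (sym t z u) = !![1, 0; 0, 1] := by simp [den_mk, mT12]
lemma den_mP (t z u : ℂ) : den mP (sym t z u) = !![1, 0; 0, -1] := by simp [den_mk, mP]
lemma den_mW (t z u : ℂ) : den mW (sym t z u) = !![0, 1; 1, 0] := by simp [den_mk, mW]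
lemma den_mL (t z u : ℂ) : den mL (sym t z u) = !![1, -1; 0, 1] := by simp [den_mk, mL]
lemma den_mJ (t z u : ℂ) : den mJ (sym t z u) = !![t, z; 0, 1] := by simp [den_mk, mJ]

lemma ofsym (t z u : ℂ) : Matrix.of (sym t z u) = !![t, z; z, u] := rfl

lemma moeb_mT (t z u : ℂ) : moeb mT (sym t z u) = sym (t + 1) z u := by
  apply moeb_eq <;> rw [den_mT]
  · simp [Matrix.det_fin_two]
  rw [nom_mk, ofsym]; simp [mT]
lemma moeb_mT2 (t z u : ℂ) : moeb mT2 (sym t z u) = sym t z (u + 1) := by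
  apply moeb_eq <;> rw [den_mT2]
  · simp [Matrix.det_fin_two]
  rw [nom_mk, ofsym]; simp [mT2]
lemma moeb_mT12 (t z u : ℂ) : moeb mT12 (sym t z u) = sym t (z + 1) u := by
  apply moeb_eq <;> rw [den_mT12]
  · simp [Matrix.det_fin_two]
  rw [nom_mk, ofsym]; simp [mT12]
lemma moeb_mP (t z u : ℂ) : moeb mP (sym t z u) = sym t (-z) u := by
  apply moeb_eq <;> rw [den_mP]
  · simp [Matrix.det_fin_two]
  rw [nom_mk, ofsym]; simp [mP]
lemma moeb_mW (t z u : ℂ) : moeb mW (sym t z u) = sym u z t := by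
  apply moeb_eq <;> rw [den_mW]
  · simp [Matrix.det_fin_two]
  rw [nom_mk, ofsym]; simp [mW]
lemma moeb_mL (t z u : ℂ) : moeb mL (sym t z u) = sym t (z + t) (u + 2 * z + t) := by
  apply moeb_eq <;> rw [den_mL]
  · simp [Matrix.det_fin_two]
  rw [nom_mk, ofsym]; simp [mL]
  constructor <;> ring
lemma moeb_mJ {t : ℂ} (ht : t ≠ 0) (z u : ℂ) :
    moeb mJ (sym t z u) = sym (-1 / t) (z / t) (u - z ^ 2 / t) := by
  apply moeb_eq <;> rw [den_mJ]
  · simp [Matrix.det_fin_two, ht]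
  rw [nom_mk, ofsym]; simp [mJ, ht]
  constructor <;> field_simp <;> ring

lemma mJ_mem_H2 {t z u : ℂ} (h : sym t z u ∈ H2) :
    sym (-1 / t) (z / t) (u - z ^ 2 / t) ∈ H2 := by
  rw [sym_mem] at *
  obtain ⟨h1, h2⟩ := h
  have hn : 0 < t.re * t.re + t.im * t.im := by nlinarith [mul_self_nonneg t.re]
  simp only [Complex.div_im, Complex.sub_im, Complex.normSq_apply, Complex.neg_im, Complex.neg_re,
    Complex.one_im, Complex.one_re, pow_two, Complex.mul_im, Complex.mul_re]
  set n := t.re * t.re + t.im * t.im with hnd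
  have e0 : -0 * t.re / n - -1 * t.im / n = t.im / n := by ring
  have hp : 0 < t.im / n := div_pos h1 hn
  refine ⟨by rw [e0]; exact hp, ?_⟩
  rw [e0]
  have : t.im / n * (u.im - ((z.re * z.im + z.im * z.re) * t.re / n -
      (z.re * z.re - z.im * z.im) * t.im / n)) - (z.im * t.re / n - z.re * t.im / n) *
      (z.im * t.re / n - z.re * t.im / n) = (t.im * u.im - z.im ^ 2) / n := by
    field_simp
    rw [hnd]; ring
  have h3 : 0 < (t.im * u.im - z.im ^ 2) / n := div_pos (by linarith) hn
  linarith

lemma H2_t {t z u : ℂ} (h : sym t z u ∈ H2) : t ≠ 0 := by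
  rintro rfl; simp [sym_mem] at h

lemma gen_ok {g : M4} (hg : g ∈ ({mT, mJ, mW, mL} : Set M4)) {τ} (hτ : τ ∈ H2) :
    (den g τ).det ≠ 0 ∧ moeb g τ ∈ H2 := by
  obtain ⟨t, z, u, rfl⟩ := exists_sym hτ
  simp only [Set.mem_insert_iff, Set.mem_singleton_iff] at hg
  have ht := H2_t hτ
  rcases hg with rfl | rfl | rfl | rfl
  · rw [den_mT, moeb_mT]; simp [Matrix.det_fin_two]; rw [sym_mem] at *; simpa using hτ
  · rw [den_mJ, moeb_mJ ht]; exact ⟨by simp [Matrix.det_fin_two, ht], mJ_mem_H2 hτ⟩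
  · rw [den_mW, moeb_mW]; simp [Matrix.det_fin_two]; rw [sym_mem] at *
    obtain ⟨h1, h2⟩ := hτ
    exact ⟨by nlinarith [sq_nonneg z.im], by linarith⟩
  · rw [den_mL, moeb_mL]; simp [Matrix.det_fin_two]; rw [sym_mem] at *; simp
    obtain ⟨h1, h2⟩ := hτ
    exact ⟨h1, by nlinarith⟩

/-! ### symAct -/
def HH (v : Fin 21 → ℂ) (a b : ℂ) : ℂ := ∑ l : Fin 21, v l * a ^ (20 - (l : ℕ)) * b ^ (l : ℕ)

lemma HH_one (v : Fin 21 → ℂ) (x : ℂ) :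
    HH v 1 x = (∑ l : Fin 21, Polynomial.C (v l) * Polynomial.X ^ (l : ℕ)).eval x := by
  simp [HH, Polynomial.eval_finset_sum]

lemma HH_inj {v w : Fin 21 → ℂ} (h : ∀ x, HH v 1 x = HH w 1 x) : v = w := by
  have : (∑ l : Fin 21, Polynomial.C (v l) * Polynomial.X ^ (l : ℕ)) =
    (∑ l : Fin 21, Polynomial.C (w l) * Polynomial.X ^ (l : ℕ)) :=
    Polynomial.funext fun x => by rw [← HH_one, ← HH_one, h]
  funext i
  have h2 := congrArg (fun p => Polynomial.coeff p (i : ℕ)) this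
  simpa [Polynomial.finset_sum_coeff, Polynomial.coeff_X_pow, Fin.val_inj] using h2

lemma HH_cont (v : Fin 21 → ℂ) (b : ℂ) : Continuous (fun a => HH v a b) := by
  unfold HH; fun_prop

lemma HH_scale (v : Fin 21 → ℂ) (c a b : ℂ) : HH v (c * a) (c * b) = c ^ 20 * HH v a b := by
  unfold HH
  rw [Finset.mul_sum]
  refine Finset.sum_congr rfl fun l _ => ?_
  have : c ^ 20 = c ^ (20 - (l : ℕ)) * c ^ (l : ℕ) := by
    rw [← pow_add]; congr 1; omega
  rw [mul_pow, mul_pow, this]; ring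

lemma HH_symAct (m : Matrix (Fin 2) (Fin 2) ℂ) (v : Fin 21 → ℂ) (a b : ℂ) :
    HH (symAct 20 m v) a b = HH v (m 0 0 * a + m 1 0 * b) (m 0 1 * a + m 1 1 * b) := by
  have h1 : ∀ x, HH (symAct 20 m v) 1 x = HH v (m 0 0 + m 1 0 * x) (m 0 1 + m 1 1 * x) := by
    intro x
    set q : Fin 21 → Polynomial ℂ := fun l =>
      (Polynomial.C (m 0 0) + Polynomial.C (m 1 0) * Polynomial.X) ^ (20 - (l : ℕ)) *
      (Polynomial.C (m 0 1) + Polynomial.C (m 1 1) * Polynomial.X) ^ (l : ℕ) with hq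
    have hd : ∀ l, (q l).natDegree < 21 := by
      intro l
      have a1 : ∀ c d : ℂ, (Polynomial.C c + Polynomial.C d * Polynomial.X).natDegree ≤ 1 := by
        intro c d; compute_degree
      have := Polynomial.natDegree_mul_le (p := (Polynomial.C (m 0 0) + Polynomial.C (m 1 0) * Polynomial.X) ^ (20 - (l : ℕ))) (q := (Polynomial.C (m 0 1) + Polynomial.C (m 1 1) * Polynomial.X) ^ (l : ℕ))
      have h2 := Polynomial.natDegree_pow_le_of_le (20 - (l : ℕ)) (a1 (m 0 0) (m 1 0))
      have h3 := Polynomial.natDegree_pow_le_of_le (l : ℕ) (a1 (m 0 1) (m 1 1))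
      have : (q l).natDegree ≤ _ := this
      omega
    have he : ∀ l, ∑ i : Fin 21, (q l).coeff i * x ^ (i : ℕ) = (q l).eval x := by
      intro l
      rw [Polynomial.eval_eq_sum_range' (hd l), Fin.sum_univ_eq_sum_range (fun i => (q l).coeff i * x ^ i)]
    unfold HH symAct
    simp only [one_pow, mul_one, Finset.sum_mul]
    rw [Finset.sum_comm]
    refine Finset.sum_congr rfl fun l _ => ?_
    have : ∑ i : Fin 21, symCoeff 20 m l i * v l * x ^ (i : ℕ) =
        v l * ∑ i : Fin 21, (q l).coeff i * x ^ (i : ℕ) := by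
      rw [Finset.mul_sum]; refine Finset.sum_congr rfl fun i _ => ?_
      rw [symCoeff]; ring
    rw [this, he l, hq]
    simp; ring
  have h2 : ∀ a, a ≠ 0 → HH (symAct 20 m v) a b =
      HH v (m 0 0 * a + m 1 0 * b) (m 0 1 * a + m 1 1 * b) := by
    intro a ha
    have e := h1 (b / a)
    have e1 := HH_scale (symAct 20 m v) a 1 (b / a)
    have e2 := HH_scale v a (m 0 0 + m 1 0 * (b / a)) (m 0 1 + m 1 1 * (b / a))
    rw [mul_one, mul_div_cancel₀ _ ha] at e1
    rw [e1, e, ← e2]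
    congr 1 <;> field_simp
  have hc : Continuous (fun a => HH v (m 0 0 * a + m 1 0 * b) (m 0 1 * a + m 1 1 * b)) := by
    unfold HH; fun_prop
  exact congrFun (Continuous.ext_on (dense_compl_singleton (0 : ℂ)) (HH_cont _ b) hc h2) a

lemma symAct_mul (m n : Matrix (Fin 2) (Fin 2) ℂ) (v : Fin 21 → ℂ) :
    symAct 20 (m * n) v = symAct 20 m (symAct 20 n v) := by
  apply HH_inj; intro x
  rw [HH_symAct, HH_symAct, HH_symAct]
  simp only [Matrix.mul_apply, Fin.sum_univ_two]
  congr 1 <;> ring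

lemma symAct_one (v : Fin 21 → ℂ) : symAct 20 1 v = v := by
  apply HH_inj; intro x
  rw [HH_symAct]; simp

lemma symAct_upper (t z : ℂ) (v : Fin 21 → ℂ) (i : Fin 21) :
    symAct 20 !![t, z; 0, 1] v i = ∑ l : Fin 21, ((l : ℕ).choose i : ℂ) * z ^ ((l : ℕ) - i) *
      t ^ (20 - (l : ℕ)) * v l := by
  unfold symAct
  refine Finset.sum_congr rfl fun l _ => ?_
  unfold symCoeff
  congr 1
  have e : (Polynomial.C (!![t, z; 0, 1] 0 0) + Polynomial.C (!![t, z; 0, 1] 1 0) * Polynomial.X) ^ (20 - (l : ℕ)) *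
    (Polynomial.C (!![t, z; 0, 1] 0 1) + Polynomial.C (!![t, z; 0, 1] 1 1) * Polynomial.X) ^ (l : ℕ)
    = Polynomial.C (t ^ (20 - (l : ℕ))) * (Polynomial.X + Polynomial.C z) ^ (l : ℕ) := by
    simp [add_comm (Polynomial.C z)]
  rw [e, Polynomial.coeff_C_mul, Polynomial.coeff_X_add_C_pow]
  ring

lemma symAct_swap (v : Fin 21 → ℂ) (i : Fin 21) :
    symAct 20 !![0, 1; 1, 0] v i = v i.rev := by
  have : symAct 20 !![0, 1; 1, 0] v = fun i => v i.rev := by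
    apply HH_inj; intro x
    rw [HH_symAct]
    unfold HH
    rw [← Equiv.sum_comp Fin.revPerm]
    refine Finset.sum_congr rfl fun l _ => ?_
    have : 20 - (20 - (l : ℕ)) = l := by omega
    simp [Fin.val_rev, this]
  rw [this]

lemma symAct_par (v : Fin 21 → ℂ) (i : Fin 21) :
    symAct 20 !![1, 0; 0, -1] v i = (-1) ^ (i : ℕ) * v i := by
  have : symAct 20 !![1, 0; 0, -1] v = fun i : Fin 21 => (-1) ^ (i : ℕ) * v i := by
    apply HH_inj; intro x
    rw [HH_symAct]
    unfold HH
    refine Finset.sum_congr rfl fun l _ => ?_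
    simp [neg_pow x]; ring
  rw [this]

end

section


lemma wt_mul (m n : Matrix (Fin 2) (Fin 2) ℂ) (v : Fin 21 → ℂ) :
    wt 20 2 (m * n) v = wt 20 2 m (wt 20 2 n v) := by
  unfold wt
  rw [symAct_smul, symAct_mul, Matrix.det_mul, mul_zpow, mul_smul]

lemma wt_one (v : Fin 21 → ℂ) : wt 20 2 1 v = v := by
  unfold wt; rw [symAct_one]; simp

lemma sp_ok {γ : M4} (hγ : γ ∈ Sp4Z) {τ} (hτ : τ ∈ H2) :
    (den γ τ).det ≠ 0 ∧ moeb γ τ ∈ H2 := by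
  have h := GG_top hγ
  revert τ
  refine Submonoid.closure_induction_left (motive := fun γ _ => ∀ {τ}, τ ∈ H2 → (den γ τ).det ≠ 0 ∧ moeb γ τ ∈ H2) ?_ ?_ h
  · intro τ hτ
    obtain ⟨t, z, u, rfl⟩ := exists_sym hτ
    have h1 : den 1 (sym t z u) = !![1, 0; 0, 1] := by rw [den_mk]; simp
    have h2 : moeb 1 (sym t z u) = sym t z u := by
      apply moeb_eq <;> rw [h1]
      · simp [Matrix.det_fin_two]
      rw [nom_mk, ofsym]; simp
    rw [h1, h2]; exact ⟨by simp [Matrix.det_fin_two], hτ⟩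
  · intro x hx y hy ih τ hτ
    obtain ⟨h1, h2⟩ := ih hτ
    obtain ⟨h3, h4⟩ := gen_ok hx h2
    rw [den_mul x y τ h1, moeb_mul x y τ h1, Matrix.det_mul]
    exact ⟨mul_ne_zero h3 h1, h4⟩

lemma law_of_gens {ε : M4 → ℂ} (hε : IsEps ε) (F : (Fin 2 → Fin 2 → ℂ) → Fin 21 → ℂ)
    (hF : ∀ g ∈ ({mT, mJ, mW, mL} : Set M4), ∀ τ ∈ H2, F (moeb g τ) = (-1 : ℂ) • wt 20 2 (den g τ) (F τ)) :
    ∀ γ ∈ Sp4Z, ∀ τ ∈ H2, F (moeb γ τ) = ε γ • wt 20 2 (den γ τ) (F τ) := by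
  intro γ hγ
  have h := GG_top hγ
  have hone : ε 1 = 1 := by
    have := hε.2.1 1 (GG_Sp (one_mem _)) 1 (GG_Sp (one_mem _))
    rw [Matrix.one_mul] at this
    rcases hε.1 1 (GG_Sp (one_mem _)) with h | h <;> rw [h] at this ⊢ <;> norm_num at this
  refine Submonoid.closure_induction_left (motive := fun γ _ => ∀ τ ∈ H2, F (moeb γ τ) = ε γ • wt 20 2 (den γ τ) (F τ)) ?_ ?_ h
  · intro τ hτ
    obtain ⟨t, z, u, rfl⟩ := exists_sym hτ
    have h1 : den 1 (sym t z u) = !![1, 0; 0, 1] := by rw [den_mk]; simp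
    have h2 : moeb 1 (sym t z u) = sym t z u := by
      apply moeb_eq <;> rw [h1]
      · simp [Matrix.det_fin_two]
      rw [nom_mk, ofsym]; simp
    rw [h1, h2, ← Matrix.one_fin_two, wt_one, hone, one_smul]
  · intro x hx y hy ih τ hτ
    have hxS : x ∈ Sp4Z := GG_Sp (Submonoid.subset_closure hx)
    have hyS : y ∈ Sp4Z := GG_Sp hy
    obtain ⟨h1, h2⟩ := sp_ok hyS hτ
    have hx1 : ε x = -1 := by
      obtain ⟨e1, e2, e3, e4, e5, e6, e7⟩ := eps_vals hε
      simp only [Set.mem_insert_iff, Set.mem_singleton_iff] at hx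
      rcases hx with rfl | rfl | rfl | rfl <;> assumption
    rw [den_mul x y τ h1, moeb_mul x y τ h1, hF x hx _ h2, ih τ hτ, hε.2.1 x hxS y hyS, hx1,
      wt_smul, wt_mul, mul_smul]

lemma slash_of_law {ε : M4 → ℂ} (F : (Fin 2 → Fin 2 → ℂ) → Fin 21 → ℂ)
    (hF : ∀ γ ∈ Sp4Z, ∀ τ ∈ H2, F (moeb γ τ) = ε γ • wt 20 2 (den γ τ) (F τ)) :
    ∀ γ ∈ Sp4Z, ∀ τ ∈ H2, slashS 20 2 γ F τ = ε γ • F τ := by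
  intro γ hγ τ hτ
  obtain ⟨h1, h2⟩ := sp_ok hγ hτ
  unfold slashS
  rw [hF γ hγ τ hτ, symAct_smul, wt, symAct_smul, ← symAct_mul,
    Matrix.nonsing_inv_mul _ (isUnit_iff_ne_zero.mpr h1), symAct_one, smul_comm, smul_smul (_ ^ _),
    _root_.zpow_neg, inv_mul_cancel₀ (zpow_ne_zero _ h1), one_smul]

/-- transformation laws -/
structure Laws (f : ℂ → ℂ → ℂ → Fin 21 → ℂ) : Prop where
  T : ∀ t z u, sym t z u ∈ H2 → f (t + 1) z u = - f t z u
  T12 : ∀ t z u, sym t z u ∈ H2 → f t (z + 1) u = - f t z u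
  T2 : ∀ t z u, sym t z u ∈ H2 → f t z (u + 1) = - f t z u
  P : ∀ t z u, sym t z u ∈ H2 → ∀ i, f t (-z) u i = (-1) ^ (i : ℕ) * f t z u i
  W : ∀ t z u, sym t z u ∈ H2 → ∀ i, f u z t i = - f t z u i.rev
  L : ∀ t z u, sym t z u ∈ H2 → ∀ i : Fin 21, f t (z + t) (u + 2 * z + t) i =
    - ∑ l : Fin 21, ((l : ℕ).choose i : ℂ) * (-1) ^ ((l : ℕ) - i) * f t z u l
  J : ∀ t z u, sym t z u ∈ H2 → ∀ i : Fin 21, f (-1 / t) (z / t) (u - z ^ 2 / t) i =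
    - (t ^ 2 * ∑ l : Fin 21, ((l : ℕ).choose i : ℂ) * z ^ ((l : ℕ) - i) * t ^ (20 - (l : ℕ)) * f t z u l)

lemma zp2 (x : ℂ) : x ^ (2 : ℤ) = x ^ 2 := by exact_mod_cast zpow_natCast x 2

lemma laws_of {ε : M4 → ℂ} (hε : IsEps ε) {F : (Fin 2 → Fin 2 → ℂ) → Fin 21 → ℂ}
    (hF : ∀ γ ∈ Sp4Z, ∀ τ ∈ H2, F (moeb γ τ) = ε γ • wt 20 2 (den γ τ) (F τ)) :
    Laws (fun t z u => F (sym t z u)) := by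
  obtain ⟨e1, e2, e3, e4, e5, e6, e7⟩ := eps_vals hε
  have sP : mP ∈ Sp4Z := by simp only [Sp4Z, Set.mem_ofPred_eq]; decide
  have sT2 : mT2 ∈ Sp4Z := by simp only [Sp4Z, Set.mem_ofPred_eq]; decide
  have sT12 : mT12 ∈ Sp4Z := by simp only [Sp4Z, Set.mem_ofPred_eq]; decide
  constructor
  · intro t z u h
    have := hF mT (GG_Sp mT_mem) _ h
    rwa [moeb_mT, e1, den_mT, ← Matrix.one_fin_two, wt_one, neg_one_smul] at this
  · intro t z u h
    have := hF mT12 sT12 _ h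
    rwa [moeb_mT12, e3, den_mT12, ← Matrix.one_fin_two, wt_one, neg_one_smul] at this
  · intro t z u h
    have := hF mT2 sT2 _ h
    rwa [moeb_mT2, e2, den_mT2, ← Matrix.one_fin_two, wt_one, neg_one_smul] at this
  · intro t z u h i
    have := congrFun (hF mP sP _ h) i
    rw [moeb_mP, e7, den_mP, one_smul, wt, Pi.smul_apply, symAct_par, zp2] at this
    simpa [Matrix.det_fin_two] using this
  · intro t z u h i
    have := congrFun (hF mW (GG_Sp mW_mem) _ h) i
    rw [moeb_mW, e5, den_mW, wt, Pi.smul_apply, Pi.smul_apply, symAct_swap, zp2] at this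
    simpa [Matrix.det_fin_two] using this
  · intro t z u h i
    have := congrFun (hF mL (GG_Sp mL_mem) _ h) i
    rw [moeb_mL, e6, den_mL, wt, Pi.smul_apply, Pi.smul_apply, symAct_upper, zp2] at this
    simpa [Matrix.det_fin_two] using this
  · intro t z u h i
    have := congrFun (hF mJ (GG_Sp mJ_mem) _ h) i
    rw [moeb_mJ (H2_t h), e4, den_mJ, wt, Pi.smul_apply, Pi.smul_apply, symAct_upper, zp2] at this
    simpa [Matrix.det_fin_two] using this

lemma gens_of {F : (Fin 2 → Fin 2 → ℂ) → Fin 21 → ℂ}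
    (h1 : ∀ t z u, sym t z u ∈ H2 → ∀ a b, HH (F (sym (t + 1) z u)) a b = - HH (F (sym t z u)) a b)
    (h2 : ∀ t z u, sym t z u ∈ H2 → ∀ a b, HH (F (sym u z t)) a b = - HH (F (sym t z u)) b a)
    (h3 : ∀ t z u, sym t z u ∈ H2 → ∀ a b, HH (F (sym t (z + t) (u + 2 * z + t))) a b =
      - HH (F (sym t z u)) a (b - a))
    (h4 : ∀ t z u, sym t z u ∈ H2 → ∀ a b, HH (F (sym (-1 / t) (z / t) (u - z ^ 2 / t))) a b =
      - (t ^ 2 * HH (F (sym t z u)) (t * a) (z * a + b))) :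
    ∀ g ∈ ({mT, mJ, mW, mL} : Set M4), ∀ τ ∈ H2, F (moeb g τ) = (-1 : ℂ) • wt 20 2 (den g τ) (F τ) := by
  have hs : ∀ (c : ℂ) v a b, HH (c • v) a b = c * HH v a b := by
    intro c v a b; unfold HH; rw [Finset.mul_sum]
    exact Finset.sum_congr rfl fun l _ => by simp [mul_assoc]
  intro g hg τ hτ
  obtain ⟨t, z, u, rfl⟩ := exists_sym hτ
  simp only [Set.mem_insert_iff, Set.mem_singleton_iff] at hg
  apply HH_inj
  intro x
  rw [hs, wt, hs, HH_symAct, zp2]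
  rcases hg with rfl | rfl | rfl | rfl
  · rw [den_mT, moeb_mT, h1 t z u hτ]; simp [Matrix.det_fin_two]
  · rw [den_mJ, moeb_mJ (H2_t hτ), h4 t z u hτ]; simp [Matrix.det_fin_two]
  · rw [den_mW, moeb_mW, h2 t z u hτ]; simp [Matrix.det_fin_two]
  · rw [den_mL, moeb_mL, h3 t z u hτ]; simp [Matrix.det_fin_two]; congr 1; ring

end

section

open MeasureTheory UnitAddTorus in
/-- uniqueness of Fourier coefficients -/
lemma FU {k : ℕ} (c : (Fin k → ℤ) → ℂ)
    (h : ∀ x : Fin k → ℝ, HasSum (fun n => c n * cexp (2 * Real.pi * I * ∑ j, (n j : ℂ) * x j)) 0) :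
    ∀ n, c n = 0 := by
  have hm : ∀ (n : Fin k → ℤ) (x : Fin k → ℝ), mFourier n (fun i => (x i : UnitAddCircle)) =
      cexp (2 * Real.pi * I * ∑ j, (n j : ℂ) * x j) := by
    intro n x
    simp only [mFourier, ContinuousMap.coe_mk, fourier_coe_apply]
    rw [← Complex.exp_sum]
    congr 1
    rw [Finset.mul_sum]
    refine Finset.sum_congr rfl fun j _ => ?_
    simp; ring
  have hs : Summable (fun n => c n • mFourier n) := by
    have h0 := (h 0).summable.norm
    refine Summable.of_norm ?_
    refine h0.congr fun n => ?_
    rw [norm_smul, mFourier_norm]; simp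
  obtain ⟨f, hf⟩ := hs
  have hf0 : f = 0 := by
    ext x
    obtain ⟨y, rfl⟩ : ∃ y : Fin k → ℝ, (fun i => (y i : UnitAddCircle)) = x := by
      choose y hy using fun i => QuotientAddGroup.mk_surjective (x i)
      exact ⟨y, funext hy⟩
    have h1 := (ContinuousMap.evalCLM ℂ (fun i => (y i : UnitAddCircle))).hasSum hf
    refine h1.unique ?_
    simpa [hm, Function.comp_def] using h y
  subst hf0
  have h2 : HasSum (fun n => c n • mFourierLp 2 n) (0 : Lp ℂ 2 _) := by
    have h3 := (ContinuousMap.toLp (E := ℂ) 2 (Measure.pi fun _ : Fin k => AddCircle.haarAddCircle) ℂ).hasSum hf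
    rw [map_zero] at h3
    refine h3.congr_fun fun n => ?_
    exact (map_smul _ _ _).symm
  intro n
  have h3 := (innerSL ℂ (mFourierLp 2 n)).hasSum h2
  rw [map_zero] at h3
  have ho := orthonormal_iff_ite.mp (orthonormal_mFourier (d := Fin k)) n
  have h4 : HasSum (fun b => c b * if n = b then (1 : ℂ) else 0) 0 := by
    refine HasSum.congr_fun h3 fun b => ?_
    rw [← ho b, map_smul]; rfl
  have h5 := hasSum_single (f := fun b => c b * if n = b then (1 : ℂ) else 0) n
    (by intro b hb; simp [hb.symm])
  simpa using (h4.unique h5).symm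

/-- lift of periodic function to the torus -/
lemma lift_torus {k : ℕ} (g : (Fin k → ℝ) → ℂ) (hg : Continuous g)
    (hp : ∀ x (n : Fin k → ℤ), g (fun i => x i + n i) = g x) :
    ∃ G : C(UnitAddTorus (Fin k), ℂ), ∀ x : Fin k → ℝ, G (fun i => (x i : UnitAddCircle)) = g x := by
  set q : (Fin k → ℝ) → UnitAddTorus (Fin k) := fun x i => (x i : UnitAddCircle) with hq
  have hQ : IsOpenQuotientMap q := IsOpenQuotientMap.piMap fun i => QuotientAddGroup.isOpenQuotientMap_mk
  choose r hr using hQ.surjective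
  have hrg : ∀ x, g (r (q x)) = g x := by
    intro x
    have h1 := hr (q x)
    have h2 : ∀ i, ∃ n : ℤ, r (q x) i = x i + n := by
      intro i
      have h3 : ((r (q x) i : ℝ) : UnitAddCircle) = (x i : UnitAddCircle) := congrFun h1 i
      obtain ⟨n, hn⟩ := AddSubgroup.mem_zmultiples_iff.mp (QuotientAddGroup.eq_iff_sub_mem.mp h3)
      exact ⟨n, by simp at hn; linarith⟩
    choose n hn using h2
    rw [← hp x n]; congr 1; funext i; exact hn i
  refine ⟨⟨fun y => g (r y), ?_⟩, hrg⟩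
  rw [hQ.isQuotientMap.continuous_iff]
  exact hg.congr fun x => (hrg x).symm

end

section


def WW (x Y : Fin 3 → ℝ) : Fin 3 → ℂ := fun i => (x i : ℂ) + Y i * I

def μ3 : MeasureTheory.Measure (Fin 3 → ℝ) :=
  MeasureTheory.Measure.pi fun _ => MeasureTheory.volume.restrict (Set.Ioc (0 : ℝ) 1)

lemma μ3_eq : μ3 = MeasureTheory.volume.restrict {x : Fin 3 → ℝ | ∀ i, x i ∈ Set.Ioc (0 : ℝ) (0 + 1)} := by
  have := MeasureTheory.Measure.restrict_pi_pi (fun _ : Fin 3 => (MeasureTheory.volume : MeasureTheory.Measure ℝ)) (fun _ => Set.Ioc (0 : ℝ) 1)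
  rw [μ3, ← this, ← MeasureTheory.volume_pi]
  congr 1
  ext x; simp [Set.mem_pi]

open MeasureTheory in
lemma μ3_int (g : (Fin 3 → ℝ) → ℂ) (hg : Continuous g) : Integrable g μ3 := by
  rw [μ3_eq]
  refine (Continuous.integrableOn_Icc (a := 0) (b := 1) hg).mono_set ?_
  intro x hx
  exact ⟨fun i => (hx i).1.le, fun i => by have := (hx i).2; simpa using this⟩

open MeasureTheory in
lemma μ3_split (j : Fin 3) (g : (Fin 3 → ℝ) → ℂ) (hg : Continuous g) :
    ∫ x, g x ∂μ3 = ∫ y : Fin 2 → ℝ, (∫ s in (0 : ℝ)..1, g (j.insertNth s y))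
      ∂(Measure.pi fun _ => volume.restrict (Set.Ioc (0 : ℝ) 1)) := by
  have hmp := measurePreserving_piFinSuccAbove (fun _ : Fin 3 => volume.restrict (Set.Ioc (0 : ℝ) 1)) j
  have h1 := hmp.symm.integral_comp' (g := g)
  have hi := (hmp.symm.integrable_comp_emb (MeasurableEquiv.measurableEmbedding _)).mpr (μ3_int g hg)
  rw [μ3, ← h1]
  refine (integral_prod_symm _ hi).trans ?_
  refine integral_congr_ae (Eventually.of_forall fun y => ?_)
  dsimp only
  rw [intervalIntegral.integral_of_le zero_le_one]
  rfl

open MeasureTheory in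
/-- contour shift in one coordinate -/
lemma shift_coord (h : (Fin 3 → ℂ) → ℂ) (U : Set (Fin 3 → ℂ)) (hd : DifferentiableOn ℂ h U)
    (hU : ∀ w ∈ U, ∀ w', (∀ i, (w i).im = (w' i).im) → w' ∈ U)
    (hp : ∀ w ∈ U, ∀ j, h (Function.update w j (w j + 1)) = h w)
    (j : Fin 3) (Y : Fin 3 → ℝ) (y' : ℝ)
    (hs : ∀ y ∈ Set.uIcc (Y j) y', WW 0 (Function.update Y j y) ∈ U) :
    ∫ x, h (WW x Y) ∂μ3 = ∫ x, h (WW x (Function.update Y j y')) ∂μ3 := by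
  have hin : ∀ x, ∀ y ∈ Set.uIcc (Y j) y', WW x (Function.update Y j y) ∈ U := by
    intro x y hy
    exact hU _ (hs y hy) _ fun i => by simp [WW]
  have hY : ∀ x, WW x Y ∈ U := by
    intro x; have := hin x (Y j) Set.left_mem_uIcc; rwa [Function.update_eq_self] at this
  have hcW : ∀ Y, Continuous fun x => WW x Y := by intro Y; unfold WW; fun_prop
  rw [μ3_split j (fun x => h (WW x Y)) (hd.continuousOn.comp_continuous (hcW _) hY),
    μ3_split j (fun x => h (WW x (Function.update Y j y'))) (hd.continuousOn.comp_continuous (hcW _) fun x => hin x y' Set.right_mem_uIcc)]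
  refine integral_congr_ae (Eventually.of_forall fun y => ?_)
  simp only
  set k : ℂ → ℂ := fun ζ => h (Function.update (WW (j.insertNth (0 : ℝ) y) Y) j ζ) with hk
  have hupd : ∀ (s : ℝ) (v : ℝ), Function.update (WW (j.insertNth (0 : ℝ) y) Y) j (s + v * I) =
      WW (j.insertNth s y) (Function.update Y j v) := by
    intro s v
    funext i
    rcases Fin.eq_self_or_eq_succAbove j i with rfl | ⟨i', rfl⟩
    · simp [WW]
    · simp [WW]
  have e1 : ∀ s : ℝ, h (WW (j.insertNth s y) Y) = k (s + (Y j) * I) := by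
    intro s
    rw [hk]; simp only
    rw [hupd, Function.update_eq_self]
  have e2 : ∀ s : ℝ, h (WW (j.insertNth s y) (Function.update Y j y')) = k (s + y' * I) := by
    intro s
    rw [hk]; simp only
    rw [hupd]
  simp_rw [e1, e2]
  have hmem : ∀ ζ : ℂ, ζ.im ∈ Set.uIcc (Y j) y' → Function.update (WW (j.insertNth (0 : ℝ) y) Y) j ζ ∈ U := by
    intro ζ hζ
    have := hin (j.insertNth ζ.re y) ζ.im hζ
    rw [← hupd, Complex.re_add_im] at this
    exact this
  have hR := Complex.integral_boundary_rect_eq_zero_of_differentiableOn k (⟨0, Y j⟩ : ℂ) ⟨1, y'⟩ ?_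
  · simp only at hR
    have e3 : ∀ v ∈ Set.uIcc (Y j) y', k ((1 : ℝ) + v * I) = k ((0 : ℝ) + v * I) := by
      intro v hv
      have := hp _ (hmem (0 + v * I) (by simpa using hv)) j
      simp only [Function.update_self, Function.update_idem] at this
      simp only [hk, ofReal_one, ofReal_zero]
      rw [← this]; congr 2; ring
    rw [intervalIntegral.integral_congr e3] at hR
    linear_combination hR
  · intro ζ hζ
    rw [Complex.mem_reProdIm] at hζ
    have h1 : DifferentiableAt ℂ (fun ζ : ℂ => Function.update (WW (j.insertNth (0 : ℝ) y) Y) j ζ) ζ := by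
      rw [differentiableAt_pi]
      intro i
      by_cases hij : i = j
      · subst hij; simp
      · simp [hij]
    exact (hd _ (hmem ζ hζ.2)).comp ζ h1.differentiableWithinAt (t := _) (fun ζ' hζ' => hmem ζ' ((Complex.mem_reProdIm.mp hζ').2))

end

section


def UU : Set (Fin 3 → ℂ) := {w | 0 < (w 0).im ∧ (w 1).im ^ 2 < (w 0).im * (w 2).im}

def ee (n : Fin 3 → ℤ) (w : Fin 3 → ℂ) : ℂ := cexp (2 * Real.pi * I * ∑ j, (n j : ℂ) * w j)

lemma ee_add (n : Fin 3 → ℤ) (w w' : Fin 3 → ℂ) : ee n (w + w') = ee n w * ee n w' := by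
  rw [ee, ee, ee, ← Complex.exp_add, ← mul_add, ← Finset.sum_add_distrib]
  simp [mul_add]

lemma ee_neg (n : Fin 3 → ℤ) (w : Fin 3 → ℂ) : ee (-n) w * ee n w = 1 := by
  rw [ee, ee, ← Complex.exp_add, ← mul_add, ← Finset.sum_add_distrib]
  simp

lemma ee_upd (n : Fin 3 → ℤ) (w : Fin 3 → ℂ) (j : Fin 3) :
    ee n (Function.update w j (w j + 1)) = ee n w := by
  have : Function.update w j (w j + 1) = w + Pi.single j 1 := by
    funext i
    by_cases h : i = j
    · subst h; simp
    · simp [h]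
  rw [this, ee_add]
  have : ee n (Pi.single j 1) = 1 := by
    rw [ee, Finset.sum_eq_single j (by intro b _ hb; simp [hb]) (by simp), Complex.exp_eq_one_iff]
    exact ⟨n j, by simp; ring⟩
  rw [this, mul_one]

lemma UU_im {w w' : Fin 3 → ℂ} (hw : w ∈ UU) (h : ∀ i, (w i).im = (w' i).im) : w' ∈ UU := by
  simp only [UU, Set.mem_ofPred_eq] at *
  rwa [← h 0, ← h 1, ← h 2]

lemma per_int {g : (Fin 3 → ℂ) → ℂ} (hp : ∀ w ∈ UU, ∀ j, g (Function.update w j (w j + 1)) = g w)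
    (j : Fin 3) (n : ℤ) : ∀ w ∈ UU, g (Function.update w j (w j + n)) = g w := by
  have hm : ∀ w ∈ UU, ∀ m : ℤ, Function.update w j (w j + m) ∈ UU := by
    intro w hw m
    refine UU_im hw fun i => ?_
    by_cases h : i = j
    · subst h; simp
    · simp [h]
  induction n using Int.induction_on with
  | zero => intro w hw; simp
  | succ i ih =>
    intro w hw
    have := hp _ (hm w hw i) j
    simp only [Function.update_self, Function.update_idem] at this
    rw [← ih w hw, ← this]
    push_cast; rw [add_assoc]
  | pred i ih =>
    intro w hw
    have := hp _ (hm w hw (-i - 1)) j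
    simp only [Function.update_self, Function.update_idem] at this
    rw [← ih w hw, ← this]
    push_cast; congr 2; ring

lemma per_vec {g : (Fin 3 → ℂ) → ℂ} (hp : ∀ w ∈ UU, ∀ j, g (Function.update w j (w j + 1)) = g w)
    (n : Fin 3 → ℤ) (w) (hw : w ∈ UU) : g (fun i => w i + n i) = g w := by
  have h0 := per_int hp 0 (n 0) w hw
  have hw0 : Function.update w 0 (w 0 + n 0) ∈ UU := UU_im hw fun i => by fin_cases i <;> simp
  have h1 := per_int hp 1 (n 1) _ hw0
  have hw1 : Function.update (Function.update w 0 (w 0 + n 0)) 1 (Function.update w 0 (w 0 + n 0) 1 + n 1) ∈ UU :=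
    UU_im hw fun i => by fin_cases i <;> simp
  have h2 := per_int hp 2 (n 2) _ hw1
  rw [← h0, ← h1, ← h2]
  congr 1; funext i; fin_cases i <;> simp

def hexp (δ : ℝ) (n : ℤ) : ℝ := Real.exp (-(2 * Real.pi * δ * |(n : ℝ)|))

lemma hexp_summable {δ : ℝ} (hδ : 0 < δ) : Summable (hexp δ) := by
  have h : Summable fun n : ℕ => Real.exp (-(2 * Real.pi * δ * n)) := by
    have := Real.summable_exp_nat_mul_iff (a := -(2 * Real.pi * δ)) |>.mpr (by
      have := Real.pi_pos; nlinarith [mul_pos this hδ])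
    exact this.congr fun n => by ring_nf
  refine Summable.of_nat_of_neg ?_ ?_ <;> simpa [hexp] using h

def E3 : ℤ × ℤ × ℤ ≃ (Fin 3 → ℤ) where
  toFun p := ![p.2.1, p.2.2, p.1]
  invFun n := (n 2, n 0, n 1)
  left_inv p := by simp
  right_inv n := by ext i; fin_cases i <;> simp

lemma prod_summable {f : ℤ → ℝ} (hf : Summable f) (h0 : ∀ n, 0 ≤ f n) :
    Summable (fun p : ℤ × ℤ × ℤ => f p.1 * (f p.2.1 * f p.2.2)) := by
  have h2 : Summable (fun p : ℤ × ℤ => f p.1 * f p.2) := Summable.mul_of_nonneg hf hf h0 h0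
  exact Summable.mul_of_nonneg hf h2 h0 (fun p => mul_nonneg (h0 _) (h0 _))

open MeasureTheory UnitAddTorus in
lemma FE (g : (Fin 3 → ℂ) → ℂ) (hd : DifferentiableOn ℂ g UU)
    (hp : ∀ w ∈ UU, ∀ j, g (Function.update w j (w j + 1)) = g w) :
    ∃ a : (Fin 3 → ℤ) → ℂ, ∀ w ∈ UU, HasSum (fun n => a n * ee n w) (g w) := by
  set h : (Fin 3 → ℤ) → (Fin 3 → ℂ) → ℂ := fun n w => g w * ee (-n) w with hh
  have hhd : ∀ n, DifferentiableOn ℂ (h n) UU := by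
    intro n; refine hd.mul (Differentiable.differentiableOn ?_); unfold ee; fun_prop
  have hhp : ∀ n, ∀ w ∈ UU, ∀ j, h n (Function.update w j (w j + 1)) = h n w := by
    intro n w hw j; simp only [hh]; rw [hp w hw, ee_upd]
  set Φ : (Fin 3 → ℤ) → (Fin 3 → ℝ) → ℂ := fun n Y => ∫ x, h n (WW x Y) ∂μ3 with hΦ
  have hUW : ∀ x Y, WW x Y ∈ UU ↔ (0 < Y 0 ∧ Y 1 ^ 2 < Y 0 * Y 2) := by
    intro x Y; simp [UU, WW]
  have hconst : ∀ n Y, WW 0 Y ∈ UU → Φ n Y = Φ n ![1, 0, 1] := by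
    intro n Y hY
    rw [hUW] at hY
    have hY2 : 0 < Y 2 := by
      by_contra hc; push Not at hc; nlinarith [sq_nonneg (Y 1), mul_nonneg hY.1.le (neg_nonneg.mpr hc)]
    have s1 : Φ n Y = Φ n (Function.update Y 1 0) := by
      refine shift_coord (h n) UU (hhd n) (fun w hw w' e => UU_im hw e) (hhp n) 1 Y 0 ?_
      intro y hy
      rw [hUW]; simp
      refine ⟨hY.1, lt_of_le_of_lt ?_ hY.2⟩
      rw [Set.mem_uIcc] at hy
      rcases hy with hy | hy <;> nlinarith
    have s2 : Φ n (Function.update Y 1 0) = Φ n (Function.update (Function.update Y 1 0) 0 1) := by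
      refine shift_coord (h n) UU (hhd n) (fun w hw w' e => UU_im hw e) (hhp n) 0 _ 1 ?_
      intro y hy
      rw [hUW]; simp
      have : 0 < y := by
        rw [Set.mem_uIcc] at hy; simp at hy
        rcases hy with hy | hy <;> linarith [hY.1]
      exact ⟨this, mul_pos this hY2⟩
    have s3 : Φ n (Function.update (Function.update Y 1 0) 0 1) =
        Φ n (Function.update (Function.update (Function.update Y 1 0) 0 1) 2 1) := by
      refine shift_coord (h n) UU (hhd n) (fun w hw w' e => UU_im hw e) (hhp n) 2 _ 1 ?_
      intro y hy
      rw [hUW]; simp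
      rw [Set.mem_uIcc] at hy; simp at hy
      rcases hy with hy | hy <;> linarith [hY.1]
    rw [s1, s2, s3]; congr 1; funext i; fin_cases i <;> simp
  have hWc : ∀ Y, Continuous fun x => WW x Y := by intro Y; unfold WW; fun_prop
  have hmF : ∀ (n : Fin 3 → ℤ) (x : Fin 3 → ℝ), mFourier n (fun i => (x i : UnitAddCircle)) =
      ee n (fun i => (x i : ℂ)) := by
    intro n x
    simp only [mFourier, ContinuousMap.coe_mk, fourier_coe_apply, ee]
    rw [← Complex.exp_sum]
    congr 1
    rw [Finset.mul_sum]
    refine Finset.sum_congr rfl fun j _ => ?_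
    simp; ring
  have hWadd : ∀ x Y, WW x Y = (fun i => (x i : ℂ)) + WW 0 Y := by
    intro x Y; funext i; simp [WW]
  have hG : ∀ Y, WW 0 Y ∈ UU → ∃ G : C(UnitAddTorus (Fin 3), ℂ),
      (∀ x : Fin 3 → ℝ, G (fun i => (x i : UnitAddCircle)) = g (WW x Y)) ∧
      (∀ n, mFourierCoeff G n = Φ n ![1, 0, 1] * ee n (WW 0 Y)) := by
    intro Y hY
    have hYx : ∀ x, WW x Y ∈ UU := fun x => by rw [hUW] at *; exact hY
    obtain ⟨G, hG⟩ := lift_torus (fun x => g (WW x Y)) (hd.continuousOn.comp_continuous (hWc Y) hYx)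
      (by
        intro x n
        rw [← per_vec hp n _ (hYx x)]
        congr 1; funext i; simp [WW]; ring)
    refine ⟨G, hG, fun n => ?_⟩
    rw [mFourierCoeff_eq_integral G n 0]
    have : (∫ x in {x : Fin 3 → ℝ | ∀ i, x i ∈ Set.Ioc ((0 : Fin 3 → ℝ) i) ((0 : Fin 3 → ℝ) i + 1)},
      mFourier (-n) (fun i => (x i : UnitAddCircle)) • G (fun i => (x i : UnitAddCircle))) =
      ∫ x, h n (WW x Y) * ee n (WW 0 Y) ∂μ3 := by
      rw [μ3_eq]
      refine integral_congr_ae (Eventually.of_forall fun x => ?_)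
      simp only [hG, hmF, hh, smul_eq_mul]
      conv_rhs => rw [hWadd x, ee_add]
      rw [mul_assoc, mul_assoc, ee_neg, mul_one, ← hWadd, mul_comm]
    rw [this, integral_mul_const, ← hconst n Y hY]
  have hb : ∀ Y, WW 0 Y ∈ UU → ∃ C, ∀ n, ‖Φ n ![1, 0, 1] * ee n (WW 0 Y)‖ ≤ C := by
    intro Y hY
    obtain ⟨G, h1, h2⟩ := hG Y hY
    have hfin : IsFiniteMeasure μ3 := by unfold μ3; infer_instance
    refine ⟨‖G‖ * μ3.real Set.univ, fun n => ?_⟩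
    rw [← h2 n, mFourierCoeff_eq_integral G n 0]
    have : (∫ x in {x : Fin 3 → ℝ | ∀ i, x i ∈ Set.Ioc ((0 : Fin 3 → ℝ) i) ((0 : Fin 3 → ℝ) i + 1)},
      mFourier (-n) (fun i => (x i : UnitAddCircle)) • G (fun i => (x i : UnitAddCircle))) =
      ∫ x, mFourier (-n) (fun i => (x i : UnitAddCircle)) • G (fun i => (x i : UnitAddCircle)) ∂μ3 := by
      rw [μ3_eq]; rfl
    rw [this]
    refine (norm_integral_le_of_norm_le_const (C := ‖G‖) (Eventually.of_forall fun x => ?_))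
    rw [norm_smul]
    have a1 := (mFourier (-n)).norm_coe_le_norm (fun i => (x i : UnitAddCircle))
    have a2 := G.norm_coe_le_norm (fun i => (x i : UnitAddCircle))
    rw [mFourier_norm] at a1
    calc _ ≤ 1 * ‖G‖ := mul_le_mul a1 a2 (norm_nonneg _) zero_le_one
      _ = _ := one_mul _
  refine ⟨fun n => Φ n ![1, 0, 1], fun w hw => ?_⟩
  set x : Fin 3 → ℝ := fun i => (w i).re with hx
  set Y : Fin 3 → ℝ := fun i => (w i).im with hYd
  have hwxy : w = WW x Y := by funext i; simp [WW, hx, hYd]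
  have hY : WW 0 Y ∈ UU := by rw [hwxy, hUW] at hw; rwa [hUW]
  obtain ⟨G, hG1, hG2⟩ := hG Y hY
  have hsum : Summable (mFourierCoeff G) := by
    have hev : ∀ᶠ δ : ℝ in 𝓝[>] 0, ∀ σ : Fin 3 → SignType,
        WW 0 (fun i => Y i - δ * (σ i : ℝ)) ∈ UU := by
      refine Filter.Eventually.filter_mono nhdsWithin_le_nhds ?_
      rw [eventually_all]
      intro σ
      simp only [hUW] at hY ⊢
      refine Filter.Eventually.and ?_ ?_
      · refine ContinuousAt.eventually_lt (by fun_prop) (by fun_prop) ?_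
        simpa using hY.1
      · refine ContinuousAt.eventually_lt (by fun_prop) (by fun_prop) ?_
        simpa using hY.2
    obtain ⟨δ, hδ, hδ0⟩ := (hev.and self_mem_nhdsWithin).exists
    choose C hC using fun σ => hb _ (hδ σ)
    have hne : ∀ n, ‖mFourierCoeff G n‖ ≤ (∑ σ, |C σ|) * (hexp δ (n 2) * (hexp δ (n 0) * hexp δ (n 1))) := by
      intro n
      set σ : Fin 3 → SignType := fun i => SignType.sign ((n i : ℝ)) with hσ
      have h1 := (hC σ n).trans ((le_abs_self _).trans
        (Finset.single_le_sum (f := fun σ => |C σ|) (fun i _ => abs_nonneg _) (Finset.mem_univ σ)))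
      have h2 : ‖mFourierCoeff G n‖ = ‖Φ n ![1, 0, 1] * ee n (WW 0 fun i => Y i - δ * (σ i : ℝ))‖ *
          (hexp δ (n 2) * (hexp δ (n 0) * hexp δ (n 1))) := by
        rw [hG2 n, norm_mul, norm_mul, mul_assoc]
        congr 1
        rw [ee, ee, Complex.norm_exp, Complex.norm_exp, hexp, hexp, hexp, ← Real.exp_add, ← Real.exp_add, ← Real.exp_add]
        congr 1
        simp only [← sign_mul_self, Fin.sum_univ_three, WW, hσ]
        simp
        ring
      rw [h2]
      gcongr
      unfold hexp; positivity
    refine Summable.of_norm_bounded ?_ hne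
    refine Summable.mul_left _ ?_
    rw [← E3.summable_iff]
    exact prod_summable (hexp_summable hδ0) (fun n => (Real.exp_pos _).le)
  have := hasSum_mFourier_series_apply_of_summable hsum (fun i => (x i : UnitAddCircle))
  rw [hG1 x, ← hwxy] at this
  refine this.congr_fun fun n => ?_
  rw [hG2, hmF, smul_eq_mul, mul_assoc, mul_comm (ee n (WW 0 Y)), ← ee_add, ← hWadd, ← hwxy]

end

section


def qq (p : ℤ × ℤ × ℤ) (t z u : ℂ) : ℂ := cexp (Real.pi * I * (p.2.1 * t + p.2.2 * z + p.1 * u))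

lemma UU_H2 {w : Fin 3 → ℂ} : w ∈ UU ↔ sym (2 * w 0) (2 * w 1) (2 * w 2) ∈ H2 := by
  rw [sym_mem]; simp only [UU, Set.mem_ofPred_eq]; simp
  intro _
  constructor <;> intro h <;> nlinarith

lemma exists_co {f} (hL : Laws f)
    (hd : ∀ l, DifferentiableOn ℂ (fun w : Fin 3 → ℂ => f (2 * w 0) (2 * w 1) (2 * w 2) l) UU) :
    ∃ a : Fin 21 → ℤ × ℤ × ℤ → ℂ, ∀ l t z u, sym t z u ∈ H2 →
      HasSum (fun p => a l p * qq p t z u) (f t z u l) := by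
  have := fun l => FE _ (hd l) (by
    intro w hw j
    rw [UU_H2] at hw
    have hs := hw
    rw [sym_mem] at hs
    fin_cases j
    · have h1 := hL.T _ _ _ hw
      have h2 := hL.T (2 * w 0 + 1) (2 * w 1) (2 * w 2) (by rw [sym_mem]; simpa using hs)
      rw [h1, neg_neg] at h2
      simp; rw [← h2]; congr 2; ring
    · have h1 := hL.T12 _ _ _ hw
      have h2 := hL.T12 (2 * w 0) (2 * w 1 + 1) (2 * w 2) (by rw [sym_mem]; simpa using hs)
      rw [h1, neg_neg] at h2
      simp; rw [← h2]; congr 2; ring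
    · have h1 := hL.T2 _ _ _ hw
      have h2 := hL.T2 (2 * w 0) (2 * w 1) (2 * w 2 + 1) (by rw [sym_mem]; simpa using hs)
      rw [h1, neg_neg] at h2
      simp; rw [← h2]; congr 2; ring)
  choose a ha using this
  refine ⟨fun l p => a l (E3 p), fun l t z u h => ?_⟩
  have h1 := ha l ![t / 2, z / 2, u / 2] (by
    rw [UU_H2]; simp; convert h using 2 <;> ring)
  rw [← E3.hasSum_iff] at h1
  convert h1 using 1
  · funext p
    simp only [Function.comp]
    congr 1
    rw [qq, ee, Fin.sum_univ_three]; congr 1; simp [E3]; ring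
  · simp; congr 1 <;> ring

lemma qq_uniq (c : ℤ × ℤ × ℤ → ℂ)
    (h : ∀ t z u, sym t z u ∈ H2 → HasSum (fun p => c p * qq p t z u) 0) : ∀ p, c p = 0 := by
  have := FU (k := 3) (fun n => c (E3.symm n) * qq (E3.symm n) I 0 I) (by
    intro x
    have h1 := h (2 * x 0 + I) (2 * x 1) (2 * x 2 + I) (by rw [sym_mem]; simp)
    rw [← E3.symm.hasSum_iff] at h1
    convert h1 using 1
    funext n
    simp only [Function.comp]
    rw [mul_assoc, qq, qq, ← Complex.exp_add]
    congr 2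
    rw [Fin.sum_univ_three]; simp [E3]; ring)
  intro p
  have := this (E3 p)
  simp only [Equiv.symm_apply_apply, mul_eq_zero] at this
  exact this.resolve_right (Complex.exp_ne_zero _)

structure Co (a : Fin 21 → ℤ → ℤ → ℤ → ℂ) : Prop where
  oM : ∀ l M N R, ¬ Odd M → a l M N R = 0
  oN : ∀ l M N R, ¬ Odd N → a l M N R = 0
  oR : ∀ l M N R, ¬ Odd R → a l M N R = 0
  P : ∀ l M N R, a l M N (-R) = (-1) ^ (l : ℕ) * a l M N R
  W : ∀ l M N R, a l N M R = - a l.rev M N R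
  L : ∀ i M N R, a i M N R = - ∑ l : Fin 21, ((l : ℕ).choose i : ℂ) * (-1) ^ ((l : ℕ) - i) * a l M (N + R + M) (R + 2 * M)
  K : ∀ l M N R, M < 0 → a l M N R = 0
  K' : ∀ l M N R, N < 0 → a l M N R = 0

lemma exp_odd {n : ℤ} (h : ¬ Odd n) : cexp (Real.pi * I * n) = 1 := by
  rw [Int.not_odd_iff_even] at h
  obtain ⟨k, rfl⟩ := h
  rw [Complex.exp_eq_one_iff]; exact ⟨k, by push_cast; ring⟩

lemma co_of {f} (hL : Laws f) {a : Fin 21 → ℤ × ℤ × ℤ → ℂ}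
    (ha : ∀ l t z u, sym t z u ∈ H2 → HasSum (fun p => a l p * qq p t z u) (f t z u l)) :
    Co (fun l M N R => a l (M, N, R)) := by
  have hP : ∀ l M N R, a l (M, N, -R) = (-1) ^ (l : ℕ) * a l (M, N, R) := by
    intro l M N R
    let e : ℤ × ℤ × ℤ ≃ ℤ × ℤ × ℤ := ⟨fun p => (p.1, p.2.1, -p.2.2), fun p => (p.1, p.2.1, -p.2.2),
      fun p => by simp, fun p => by simp⟩
    have := qq_uniq (fun p => a l (e p) - (-1) ^ (l : ℕ) * a l p) (by
      intro t z u h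
      have h' : sym t (-z) u ∈ H2 := by rw [sym_mem] at *; simpa using h
      have h1 := ha l t (-z) u h'
      rw [← e.hasSum_iff, hL.P t z u h l] at h1
      have h2 := h1.sub ((ha l t z u h).mul_left ((-1) ^ (l : ℕ)))
      rw [sub_self] at h2
      refine h2.congr_fun fun p => ?_
      have : qq (e p) t (-z) u = qq p t z u := by simp [qq, e]
      simp only [Function.comp, this]; ring) (M, N, R)
    exact sub_eq_zero.mp this
  have hW : ∀ l M N R, a l (N, M, R) = - a l.rev (M, N, R) := by
    intro l M N R
    let e : ℤ × ℤ × ℤ ≃ ℤ × ℤ × ℤ := ⟨fun p => (p.2.1, p.1, p.2.2), fun p => (p.2.1, p.1, p.2.2),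
      fun p => by simp, fun p => by simp⟩
    have := qq_uniq (fun p => a l (e p) + a l.rev p) (by
      intro t z u h
      have h' : sym u z t ∈ H2 := by
        rw [sym_mem] at *
        refine ⟨?_, by linarith [h.2, mul_comm t.im u.im]⟩
        by_contra hc; push Not at hc
        nlinarith [sq_nonneg z.im, mul_nonneg h.1.le (neg_nonneg.mpr hc)]
      have h1 := ha l u z t h'
      rw [← e.hasSum_iff, hL.W t z u h l] at h1
      have h2 := h1.add (ha l.rev t z u h)
      rw [neg_add_cancel] at h2
      refine h2.congr_fun fun p => ?_
      have : qq (e p) u z t = qq p t z u := by simp [qq, e]; ring_nf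
      simp only [Function.comp, this]; ring) (M, N, R)
    exact eq_neg_of_add_eq_zero_left this
  have hLL : ∀ (i : Fin 21) M N R, a i (M, N, R) = - ∑ l : Fin 21, ((l : ℕ).choose i : ℂ) * (-1) ^ ((l : ℕ) - i) * a l (M, N + R + M, R + 2 * M) := by
    intro i M N R
    let e : ℤ × ℤ × ℤ ≃ ℤ × ℤ × ℤ := ⟨fun p => (p.1, p.2.1 + p.2.2 + p.1, p.2.2 + 2 * p.1),
      fun p => (p.1, p.2.1 - p.2.2 + p.1, p.2.2 - 2 * p.1),
      fun p => by ext <;> simp; ring, fun p => by ext <;> simp; ring⟩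
    have := qq_uniq (fun p => a i (e.symm p) + ∑ l : Fin 21, ((l : ℕ).choose i : ℂ) * (-1) ^ ((l : ℕ) - i) * a l p) (by
      intro t z u h
      have hs : sym t (z + t) (u + 2 * z + t) ∈ H2 := by
        rw [sym_mem] at *
        simp
        exact ⟨h.1, by nlinarith [h.2]⟩
      have h1 := ha i t (z + t) (u + 2 * z + t) hs
      rw [hL.L t z u h i, ← e.symm.hasSum_iff] at h1
      have h2 : HasSum (fun p => ∑ l : Fin 21, ((l : ℕ).choose i : ℂ) * (-1) ^ ((l : ℕ) - i) * (a l p * qq p t z u))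
        (∑ l : Fin 21, ((l : ℕ).choose i : ℂ) * (-1) ^ ((l : ℕ) - i) * f t z u l) :=
        hasSum_sum fun l _ => (ha l t z u h).mul_left _
      have h3 := h1.add h2
      rw [neg_add_cancel] at h3
      refine h3.congr_fun fun p => ?_
      have : qq (e.symm p) t (z + t) (u + 2 * z + t) = qq p t z u := by simp [qq, e]; ring_nf
      simp only [Function.comp, this, add_mul, Finset.sum_mul, mul_assoc]) (e (M, N, R))
    rw [e.symm_apply_apply] at this
    exact eq_neg_of_add_eq_zero_left this
  have hoN : ∀ l M N R, ¬ Odd N → a l (M, N, R) = 0 := by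
    intro l M N R hN
    have := qq_uniq (fun p => a l p * (1 + cexp (Real.pi * I * p.2.1))) (by
      intro t z u h
      have h' : sym (t + 1) z u ∈ H2 := by rw [sym_mem] at *; simpa using h
      have h1 := ha l _ _ _ h'
      rw [hL.T t z u h] at h1
      have h2 := (ha l t z u h).add h1
      simp only [Pi.neg_apply, add_neg_cancel] at h2
      refine h2.congr_fun fun p => ?_
      have : qq p (t + 1) z u = cexp (Real.pi * I * p.2.1) * qq p t z u := by
        rw [qq, qq, ← Complex.exp_add]; ring_nf
      rw [this]; ring) (M, N, R)
    simp only [exp_odd hN] at this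
    simpa using this
  have hoM : ∀ l M N R, ¬ Odd M → a l (M, N, R) = 0 := by
    intro l M N R h
    rw [hW l N M R, hoN _ _ _ _ h, neg_zero]
  have hoR : ∀ l M N R, ¬ Odd R → a l (M, N, R) = 0 := by
    intro l M N R hN
    have := qq_uniq (fun p => a l p * (1 + cexp (Real.pi * I * p.2.2))) (by
      intro t z u h
      have h' : sym t (z + 1) u ∈ H2 := by rw [sym_mem] at *; simpa using h
      have h1 := ha l _ _ _ h'
      rw [hL.T12 t z u h] at h1
      have h2 := (ha l t z u h).add h1
      simp only [Pi.neg_apply, add_neg_cancel] at h2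
      refine h2.congr_fun fun p => ?_
      have : qq p t (z + 1) u = cexp (Real.pi * I * p.2.2) * qq p t z u := by
        rw [qq, qq, ← Complex.exp_add]; ring_nf
      rw [this]; ring) (M, N, R)
    simp only [exp_odd hN] at this
    simpa using this
  have hsh : ∀ (k : ℕ) (l : Fin 21), (k : ℕ) + l = 20 → ∀ M N R, (∀ l' > l, a l' (M, N, R) = 0) →
      (∀ l' > l, a l' (M, N + R + M, R + 2 * M) = 0) ∧ a l (M, N + R + M, R + 2 * M) = - a l (M, N, R) := by
    intro k
    induction k with
    | zero =>
      intro l hl M N R h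
      have h1 : ∀ l' > l, a l' (M, N + R + M, R + 2 * M) = 0 := fun l' hl' => by omega
      refine ⟨h1, ?_⟩
      rw [hLL l M N R, Finset.sum_eq_single l]
      · simp
      · intro b _ hb
        rw [Nat.choose_eq_zero_of_lt (by omega)]; simp
      · simp
    | succ k ih =>
      intro l hl M N R h
      have h1 : ∀ l' > l, a l' (M, N + R + M, R + 2 * M) = 0 := by
        have := ih ⟨l + 1, by omega⟩ (by simp; omega) M N R (fun l' hl' => h l' (by
          rw [gt_iff_lt, Fin.lt_def] at *; simp at hl'; omega))
        intro l' hl'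
        rcases eq_or_ne l' ⟨l + 1, by omega⟩ with he | hne
        · rw [he, this.2, ← he, h _ hl', neg_zero]
        · refine this.1 l' ?_
          rw [gt_iff_lt, Fin.lt_def] at *; simp
          have : (l' : ℕ) ≠ l + 1 := fun hh => hne (Fin.ext hh)
          omega
      refine ⟨h1, ?_⟩
      rw [hLL l M N R, Finset.sum_eq_single l]
      · simp
      · intro b _ hb
        rcases lt_or_gt_of_ne hb with hb | hb
        · rw [Nat.choose_eq_zero_of_lt (by simpa using hb)]; simp
        · rw [h1 b hb, mul_zero]
      · simp
  have hK : ∀ l M N R, M < 0 → a l (M, N, R) = 0 := by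
    intro l M N R hM
    by_contra hne
    obtain ⟨l, hl, hmax⟩ : ∃ l, a l (M, N, R) ≠ 0 ∧ ∀ l' > l, a l' (M, N, R) = 0 := by
      classical
      obtain ⟨m, hm⟩ := (Finset.univ.filter fun l => a l (M, N, R) ≠ 0).exists_maximal ⟨l, by simpa using hne⟩
      refine ⟨m, by simpa using hm.1, fun l' hl' => ?_⟩
      by_contra hc
      exact absurd (hm.2 (by simpa using hc) hl'.le) (not_le.mpr hl')
    have hit : ∀ n : ℕ, (∀ l' > l, a l' (M, N + n * R + n ^ 2 * M, R + 2 * n * M) = 0) ∧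
        ‖a l (M, N + n * R + n ^ 2 * M, R + 2 * n * M)‖ = ‖a l (M, N, R)‖ := by
      intro n
      induction n with
      | zero => simpa using hmax
      | succ n ih =>
        have := hsh (20 - l) l (by omega) _ _ _ ih.1
        have e1 : N + n * R + n ^ 2 * M + (R + 2 * n * M) + M = N + (n + 1 : ℕ) * R + (n + 1 : ℕ) ^ 2 * M := by
          push_cast; ring
        have e2 : R + 2 * n * M + 2 * M = R + 2 * (n + 1 : ℕ) * M := by push_cast; ring
        rw [e1, e2] at this
        exact ⟨this.1, by rw [this.2, norm_neg, ih.2]⟩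
    have hs := (ha l I 0 I (by rw [sym_mem]; simp)).summable.norm
    obtain ⟨C, hC⟩ : ∃ C, ∀ p, ‖a l p * qq p I 0 I‖ ≤ C :=
      ⟨_, fun p => hs.le_tsum p (fun _ _ => norm_nonneg _)⟩
    have hb : ∀ n : ℕ, ‖a l (M, N, R)‖ * Real.exp (-Real.pi * (N + n * R + n ^ 2 * M + M)) ≤ C := by
      intro n
      have := hC (M, N + n * R + n ^ 2 * M, R + 2 * n * M)
      rw [norm_mul, (hit n).2, qq, Complex.norm_exp] at this
      have e : (Real.pi * I * ((N + n * R + n ^ 2 * M : ℤ) * I + (R + 2 * n * M : ℤ) * 0 + (M : ℤ) * I) : ℂ) =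
          ((-Real.pi * (N + n * R + n ^ 2 * M + M) : ℝ) : ℂ) := by
        push_cast; linear_combination (Real.pi * (N + n * R + n ^ 2 * M + M) : ℂ) * I_sq
      simp only [e, Complex.ofReal_re] at this
      exact this
    have hpos : 0 < ‖a l (M, N, R)‖ := norm_pos_iff.mpr hl
    obtain ⟨k, hk⟩ := exists_nat_gt (C / ‖a l (M, N, R)‖)
    rw [div_lt_iff₀ hpos] at hk
    set n : ℕ := R.natAbs + 1 + N.natAbs + k with hn
    have hx : (k : ℤ) ≤ -(N + n * R + n ^ 2 * M + M) := by
      have h1 : |R| = (R.natAbs : ℤ) := Int.abs_eq_natAbs R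
      have h2 : |N| = (N.natAbs : ℤ) := Int.abs_eq_natAbs N
      have hn' : (n : ℤ) = |R| + 1 + |N| + k := by rw [h1, h2, hn]; push_cast; ring
      have h3 := neg_abs_le R
      have h4 := le_abs_self N
      have h5 := le_abs_self R
      have hn0 : (0 : ℤ) ≤ n := by positivity
      have h6 : (n : ℤ) * R ≤ n * |R| := mul_le_mul_of_nonneg_left h5 hn0
      have h7 : (n : ℤ) ^ 2 * M ≤ n ^ 2 * (-1) := mul_le_mul_of_nonneg_left (by omega) (by positivity)
      have h8 : (n : ℤ) * 1 ≤ n * (n - |R|) := mul_le_mul_of_nonneg_left (by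
        have := abs_nonneg N; omega) hn0
      have := abs_nonneg R
      nlinarith
    have hx' : (k : ℝ) ≤ -(N + n * R + n ^ 2 * M + M) := by exact_mod_cast hx
    have h9 := Real.add_one_le_exp (-Real.pi * (N + n * R + n ^ 2 * M + M))
    have h10 : (k : ℝ) ≤ -Real.pi * (N + n * R + n ^ 2 * M + M) := by
      have := Real.pi_gt_three
      have hk0 : (0 : ℝ) ≤ k := by positivity
      nlinarith
    have := hb n
    nlinarith
  exact ⟨hoM, hoN, hoR, hP, hW, hLL, hK, fun l M N R h => by rw [hW l N M R, hK _ _ _ _ h, neg_zero]⟩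

end

section


def Adm (b : ℤ × ℤ → ℂ) : Prop :=
  ∀ y : ℝ, 0 < y → ∀ c : ℝ, Summable fun p : ℤ × ℤ => ‖b p‖ * Real.exp (-Real.pi * p.1 * y + c * |(p.2 : ℝ)|)

def ph (b : ℤ × ℤ → ℂ) (t z : ℂ) : ℂ := ∑' p : ℤ × ℤ, b p * cexp (Real.pi * I * (p.1 * t + p.2 * z))

def DD (b : ℤ × ℤ → ℂ) (ν : ℕ) (t : ℂ) : ℂ := ∑' p : ℤ × ℤ, b p * (p.2 : ℂ) ^ ν * cexp (Real.pi * I * (p.1 * t))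

lemma FU1 (c : ℤ → ℂ) (h : ∀ x : ℝ, HasSum (fun n => c n * cexp (Real.pi * I * n * x)) 0) : ∀ n, c n = 0 := by
  have := FU (k := 1) (fun n => c (n 0)) (by
    intro x
    have h1 := h (2 * x 0)
    rw [← (Equiv.funUnique (Fin 1) ℤ).hasSum_iff] at h1
    refine h1.congr_fun fun n => ?_
    simp [Equiv.funUnique]
    left; congr 1; ring)
  intro n
  exact this (fun _ => n)

lemma adm_of {f : ℂ → ℂ → ℂ → Fin 21 → ℂ} {a : Fin 21 → ℤ × ℤ × ℤ → ℂ}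
    (ha : ∀ l t z u, sym t z u ∈ H2 → HasSum (fun p => a l p * qq p t z u) (f t z u l)) (l : Fin 21) (M : ℤ) :
    Adm (fun p => a l (M, p)) := by
  intro y hy c
  have key : ∀ c : ℝ, Summable fun p : ℤ × ℤ => ‖a l (M, p)‖ * Real.exp (-Real.pi * p.1 * y + c * p.2) := by
    intro c
    set v : ℝ := -c / Real.pi with hv
    set w : ℝ := (v ^ 2 + 1) / y with hw
    have h1 := (ha l (y * I) (v * I) (w * I) (by
      rw [sym_mem]; simp; refine ⟨hy, ?_⟩; rw [hw]; field_simp; linarith)).summable.norm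
    have h2 := h1.comp_injective (i := fun p : ℤ × ℤ => (M, p)) (fun p q h => by simpa using h)
    have h3 := h2.mul_left (Real.exp (Real.pi * M * w))
    refine h3.congr fun p => ?_
    simp only [Function.comp, norm_mul, qq]
    rw [Complex.norm_exp, mul_left_comm, ← Real.exp_add]
    congr 2
    have e : (Real.pi * I * (p.1 * (y * I) + p.2 * (v * I) + M * (w * I)) : ℂ) =
        ((-Real.pi * (p.1 * y + p.2 * v + M * w) : ℝ) : ℂ) := by
      push_cast; linear_combination (Real.pi * (p.1 * y + p.2 * v + M * w) : ℂ) * I_sq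
    rw [e, ofReal_re, hv]
    have := Real.pi_pos.ne'
    field_simp; ring
  refine Summable.of_nonneg_of_le (fun p => by positivity) (fun p => ?_) ((key c).add (key (-c)))
  rw [← mul_add]
  refine mul_le_mul_of_nonneg_left ?_ (norm_nonneg _)
  rcases abs_cases (p.2 : ℝ) with ⟨h, -⟩ | ⟨h, -⟩ <;> rw [h]
  · linarith [Real.exp_pos (-Real.pi * p.1 * y + -c * p.2)]
  · have : c * (-(p.2 : ℝ)) = -c * p.2 := by ring
    rw [this]; linarith [Real.exp_pos (-Real.pi * p.1 * y + c * p.2)]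

lemma adm_norm (b : ℤ × ℤ → ℂ) (p : ℤ × ℤ) (t z : ℂ) :
    ‖b p * cexp (Real.pi * I * (p.1 * t + p.2 * z))‖ = ‖b p‖ * Real.exp (-Real.pi * p.1 * t.im - Real.pi * p.2 * z.im) := by
  rw [norm_mul, Complex.norm_exp]
  congr 2
  simp; ring

lemma ph_sum {b} (hb : Adm b) {t : ℂ} (ht : 0 < t.im) (z : ℂ) :
    Summable fun p : ℤ × ℤ => ‖b p * cexp (Real.pi * I * (p.1 * t + p.2 * z))‖ := by
  refine Summable.of_nonneg_of_le (fun p => norm_nonneg _) (fun p => ?_) (hb t.im ht (Real.pi * |z.im|))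
  rw [adm_norm]
  gcongr
  rw [sub_eq_add_neg]
  gcongr
  have := abs_le.mp (abs_mul (p.2 : ℝ) z.im).le
  have := Real.pi_pos
  nlinarith

lemma jac {f} (hL : Laws f) {a : Fin 21 → ℤ × ℤ × ℤ → ℂ}
    (ha : ∀ l t z u, sym t z u ∈ H2 → HasSum (fun p => a l p * qq p t z u) (f t z u l))
    {t : ℂ} (ht : 0 < t.im) (z : ℂ) (i : Fin 21) (M : ℤ) :
    ph (fun p => a i (M, p)) (-1 / t) (z / t) * cexp (-(Real.pi * I * M * (z ^ 2 / t))) =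
    - (t ^ 2 * ∑ l : Fin 21, ((l : ℕ).choose i : ℂ) * z ^ ((l : ℕ) - i) * t ^ (20 - (l : ℕ)) * ph (fun p => a l (M, p)) t z) := by
  have hsl : ∀ l t z u, sym t z u ∈ H2 → HasSum (fun M : ℤ => ph (fun p => a l (M, p)) t z * cexp (Real.pi * I * M * u)) (f t z u l) := by
    intro l t z u h
    have h1 := ha l t z u h
    refine h1.prod_fiberwise fun M => ?_
    have h2 := (ph_sum (adm_of ha l M) ((sym_mem).mp h).1 z).of_norm.hasSum
    refine (h2.mul_right (cexp (Real.pi * I * M * u))).congr_fun fun p => ?_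
    rw [mul_assoc (a l (M, p)), ← Complex.exp_add, qq]
    congr 2; ring
  obtain ⟨u0, hu0⟩ : ∃ u0 : ℂ, ∀ x : ℝ, sym t z (u0 + x) ∈ H2 := by
    refine ⟨((z.im ^ 2 + 1) / t.im : ℝ) * I, fun x => ?_⟩
    rw [sym_mem]; refine ⟨ht, ?_⟩
    simp only [add_im, ofReal_im, mul_im, ofReal_re, I_im, I_re]
    field_simp; linarith
  have := FU1 (fun M => (ph (fun p => a i (M, p)) (-1 / t) (z / t) * cexp (-(Real.pi * I * M * (z ^ 2 / t))) +
     (t ^ 2 * ∑ l : Fin 21, ((l : ℕ).choose i : ℂ) * z ^ ((l : ℕ) - i) * t ^ (20 - (l : ℕ)) * ph (fun p => a l (M, p)) t z)) * cexp (Real.pi * I * M * u0)) (by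
    intro x
    have h0 := hu0 x
    have h1 := hsl i _ _ _ (mJ_mem_H2 h0)
    rw [hL.J _ _ _ h0] at h1
    have h2 := (hasSum_sum (s := Finset.univ) fun (l : Fin 21) _ => (hsl l _ _ _ h0).mul_left (((l : ℕ).choose i : ℂ) * z ^ ((l : ℕ) - i) * t ^ (20 - (l : ℕ)))).mul_left (t ^ 2)
    have h3 := h1.add h2
    rw [neg_add_cancel] at h3
    refine h3.congr_fun fun M => ?_
    have e1 : cexp (Real.pi * I * M * (u0 + x - z ^ 2 / t)) = cexp (-(Real.pi * I * M * (z ^ 2 / t))) * cexp (Real.pi * I * M * (u0 + x)) := by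
      rw [← Complex.exp_add]; ring_nf
    have e2 : cexp (Real.pi * I * M * (u0 + x)) = cexp (Real.pi * I * M * u0) * cexp (Real.pi * I * M * x) := by
      rw [← Complex.exp_add]; ring_nf
    simp only [← mul_assoc, ← Finset.sum_mul]
    rw [e1, e2]; ring) M
  rw [mul_eq_zero] at this
  exact eq_neg_of_add_eq_zero_left (this.resolve_right (Complex.exp_ne_zero _))

end

section


lemma DD_term (b : ℤ × ℤ → ℂ) (ν : ℕ) (p : ℤ × ℤ) (t : ℂ) :
    ‖b p * (p.2 : ℂ) ^ ν * cexp (Real.pi * I * (p.1 * t))‖ ≤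
      ν.factorial * (‖b p‖ * Real.exp (-Real.pi * p.1 * t.im + 1 * |(p.2 : ℝ)|)) := by
  have h := Real.pow_div_factorial_le_exp |(p.2 : ℝ)| (abs_nonneg _) ν
  rw [div_le_iff₀ (by positivity)] at h
  rw [norm_mul, norm_mul, norm_pow, Complex.norm_exp, Real.exp_add, Complex.norm_intCast, one_mul]
  have e : (Real.pi * I * (p.1 * t)).re = -Real.pi * p.1 * t.im := by simp; ring
  rw [e]
  calc _ ≤ ‖b p‖ * (Real.exp |(p.2 : ℝ)| * ν.factorial) * Real.exp (-Real.pi * p.1 * t.im) := by gcongr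
    _ = _ := by ring

lemma DD_sum {b} (hb : Adm b) (ν : ℕ) {t : ℂ} (ht : 0 < t.im) :
    Summable fun p : ℤ × ℤ => b p * (p.2 : ℂ) ^ ν * cexp (Real.pi * I * (p.1 * t)) :=
  Summable.of_norm_bounded ((hb _ ht 1).mul_left _) (fun p => DD_term b ν p t)

lemma DD_diff {b} (hb : Adm b) (h0 : ∀ p : ℤ × ℤ, p.1 < 0 → b p = 0) (ν : ℕ) :
    DifferentiableOn ℂ (DD b ν) {t | 0 < t.im} := by
  intro t ht
  have ht' : 0 < t.im := ht
  have hopen : IsOpen {s : ℂ | t.im / 2 < s.im} := isOpen_lt continuous_const Complex.continuous_im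
  have := differentiableOn_tsum_of_summable_norm (U := {s : ℂ | t.im / 2 < s.im})
    (F := fun (p : ℤ × ℤ) (t : ℂ) => b p * (p.2 : ℂ) ^ ν * cexp (Real.pi * I * (p.1 * t)))
    (u := fun p => ν.factorial * (‖b p‖ * Real.exp (-Real.pi * p.1 * (t.im / 2) + 1 * |(p.2 : ℝ)|)))
    ((hb _ (half_pos ht') 1).mul_left _) (fun p => by fun_prop) hopen (by
      intro p w hw
      refine (DD_term b ν p w).trans ?_
      by_cases hp : p.1 < 0
      · simp [h0 p hp]
      · push Not at hp
        have hw' : t.im / 2 < w.im := hw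
        have : (0 : ℝ) ≤ p.1 := by exact_mod_cast hp
        gcongr ?_ * (?_ * Real.exp (?_ + _))
        nlinarith [mul_nonneg Real.pi_pos.le this])
  exact (this.differentiableAt (hopen.mem_nhds (by show t.im / 2 < t.im; linarith))).differentiableWithinAt

lemma DD_bound {b} (hb : Adm b) (N0 : ℕ) (h0 : ∀ p : ℤ × ℤ, p.1 < (N0 : ℤ) → b p = 0) (ν : ℕ) :
    ∃ C : ℝ, ∀ t : ℂ, 1 ≤ t.im → ‖DD b ν t‖ ≤ C * Real.exp (-Real.pi * N0 * t.im) := by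
  set u : ℤ × ℤ → ℝ := fun p => ν.factorial * (‖b p‖ * Real.exp (-Real.pi * p.1 * 1 + 1 * |(p.2 : ℝ)|)) with hu
  have hs : Summable u := (hb 1 one_pos 1).mul_left _
  refine ⟨Real.exp (Real.pi * N0) * ∑' p, u p, fun t ht => ?_⟩
  have : ∀ p : ℤ × ℤ, ‖b p * (p.2 : ℂ) ^ ν * cexp (Real.pi * I * (p.1 * t))‖ ≤
      (Real.exp (Real.pi * N0) * Real.exp (-Real.pi * N0 * t.im)) * u p := by
    intro p
    refine (DD_term b ν p t).trans ?_
    by_cases hp : p.1 < N0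
    · simp [hu, h0 p hp]
    · push Not at hp
      have hp' : (N0 : ℝ) ≤ p.1 := by exact_mod_cast hp
      have e : -Real.pi * p.1 * t.im + 1 * |(p.2 : ℝ)| ≤ (Real.pi * N0 + -Real.pi * N0 * t.im) + (-Real.pi * p.1 * 1 + 1 * |(p.2 : ℝ)|) := by
        nlinarith [mul_nonneg Real.pi_pos.le (mul_nonneg (sub_nonneg.mpr hp') (sub_nonneg.mpr ht))]
      rw [hu, ← Real.exp_add]
      calc _ ≤ ν.factorial * (‖b p‖ * Real.exp ((Real.pi * N0 + -Real.pi * N0 * t.im) + (-Real.pi * p.1 * 1 + 1 * |(p.2 : ℝ)|))) := by gcongr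
        _ = _ := by rw [Real.exp_add]; ring
  refine (tsum_of_norm_bounded (hs.hasSum.mul_left _) this).trans (le_of_eq ?_)
  ring

lemma DD_coef {b} (hb : Adm b) (ν : ℕ) (h : ∀ t : ℂ, 0 < t.im → DD b ν t = 0) (N : ℤ) :
    HasSum (fun R : ℤ => b (N, R) * (R : ℂ) ^ ν) 0 := by
  have hsl : ∀ N : ℤ, Summable fun R : ℤ => b (N, R) * (R : ℂ) ^ ν := by
    intro N
    have := (DD_sum hb ν (t := I) (by simp)).comp_injective (i := fun R : ℤ => (N, R)) (fun p q h => by simpa using h)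
    have := this.mul_right (cexp (-(Real.pi * I * (N * I))))
    refine this.congr fun R => ?_
    simp only [Function.comp]
    rw [mul_assoc, ← Complex.exp_add]; simp
  have := FU1 (fun N => (∑' R : ℤ, b (N, R) * (R : ℂ) ^ ν) * cexp (Real.pi * I * (N * I))) (by
    intro x
    have h1 := (DD_sum hb ν (t := I + x) (by simp)).hasSum
    rw [show (∑' p : ℤ × ℤ, b p * (p.2 : ℂ) ^ ν * cexp (Real.pi * I * (p.1 * (I + x)))) = 0 from h (I + x) (by simp)] at h1
    refine h1.prod_fiberwise fun N => ?_
    refine (((hsl N).hasSum.mul_right (cexp (Real.pi * I * (N * I)))).mul_right (cexp (Real.pi * I * N * x))).congr_fun fun R => ?_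
    rw [mul_assoc _ (cexp _) (cexp _), ← Complex.exp_add]
    congr 2; ring) N
  rw [mul_eq_zero] at this
  have h2 := (hsl N).hasSum
  rwa [this.resolve_right (Complex.exp_ne_zero _)] at h2

lemma DD_vanish {b} (hb : Adm b) (ho : ∀ p : ℤ × ℤ, ¬ Odd p.1 → b p = 0) (N0 : ℕ)
    (h0 : ∀ p : ℤ × ℤ, p.1 < (N0 : ℤ) → b p = 0) (ν K : ℕ)
    (hJ : ∀ t : ℂ, 0 < t.im → DD b ν (-1 / t) = - t ^ K * DD b ν t)
    (hK : K < 6 * N0 ∨ (K = 8 ∧ N0 = 1)) : ∀ t : ℂ, 0 < t.im → DD b ν t = 0 := by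
  obtain ⟨C, hC⟩ := DD_bound hb N0 h0 ν
  refine lemS K N0 (DD b ν) (DD_diff hb (fun p hp => h0 p (by omega)) ν) ?_ hJ C hC hK
  intro t ht
  rw [DD, DD, ← tsum_neg]
  refine tsum_congr fun p => ?_
  by_cases hp : Odd p.1
  · have : cexp (Real.pi * I * (p.1 * (t + 1))) = - cexp (Real.pi * I * (p.1 * t)) := by
      rw [mul_add, mul_add, mul_one, Complex.exp_add]
      obtain ⟨k, hk⟩ := hp
      have : cexp (Real.pi * I * p.1) = -1 := by
        rw [hk, ← Complex.exp_pi_mul_I]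
        push_cast
        rw [show (Real.pi * I * (2 * k + 1) : ℂ) = Real.pi * I + k * (2 * Real.pi * I) by ring,
          Complex.exp_add, Complex.exp_int_mul_two_pi_mul_I, mul_one]
      rw [this]; ring
    rw [this]; ring
  · simp [ho p hp]

lemma ph_lim {b} (hb : Adm b) (ν : ℕ) {t : ℂ} (ht : 0 < t.im) (h : ∀ μ < ν, DD b μ t = 0) :
    Tendsto (fun z : ℂ => ph b t z / z ^ ν) (𝓝[≠] 0) (𝓝 ((Real.pi * I) ^ ν / ν.factorial * DD b ν t)) := by
  set u : ℤ × ℤ → ℝ := fun p => ((ν + 1).factorial * Real.pi ^ (ν + 1)) * (‖b p‖ * Real.exp (-Real.pi * p.1 * t.im + (1 + Real.pi) * |(p.2 : ℝ)|)) with hu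
  have hus : Summable u := (hb _ ht _).mul_left _
  have key : ∀ z : ℂ, ‖z‖ ≤ 1 → ‖ph b t z - (Real.pi * I) ^ ν / ν.factorial * DD b ν t * z ^ ν‖ ≤ (∑' p, u p) * ‖z‖ ^ (ν + 1) := by
    intro z hz
    have h1 : (Real.pi * I) ^ ν / ν.factorial * DD b ν t * z ^ ν =
        ∑ μ ∈ Finset.range (ν + 1), (Real.pi * I * z) ^ μ / μ.factorial * DD b μ t := by
      rw [Finset.sum_range_succ, Finset.sum_eq_zero (fun μ hμ => by rw [h μ (Finset.mem_range.mp hμ), mul_zero])]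
      rw [mul_pow]; ring
    have h2 : HasSum (fun p : ℤ × ℤ => ∑ μ ∈ Finset.range (ν + 1), (Real.pi * I * z) ^ μ / μ.factorial * (b p * (p.2 : ℂ) ^ μ * cexp (Real.pi * I * (p.1 * t))))
        (∑ μ ∈ Finset.range (ν + 1), (Real.pi * I * z) ^ μ / μ.factorial * DD b μ t) :=
      hasSum_sum fun μ _ => ((DD_sum hb μ ht).hasSum).mul_left _
    rw [h1]
    have h3 := ((ph_sum hb ht z).of_norm.hasSum).sub h2
    have h4 : ∀ p : ℤ × ℤ, ‖b p * cexp (Real.pi * I * (p.1 * t + p.2 * z)) - ∑ μ ∈ Finset.range (ν + 1), (Real.pi * I * z) ^ μ / μ.factorial * (b p * (p.2 : ℂ) ^ μ * cexp (Real.pi * I * (p.1 * t)))‖ ≤ u p * ‖z‖ ^ (ν + 1) := by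
      intro p
      have e1 : b p * cexp (Real.pi * I * (p.1 * t + p.2 * z)) - ∑ μ ∈ Finset.range (ν + 1), (Real.pi * I * z) ^ μ / μ.factorial * (b p * (p.2 : ℂ) ^ μ * cexp (Real.pi * I * (p.1 * t)))
          = b p * cexp (Real.pi * I * (p.1 * t)) * (cexp (Real.pi * I * z * p.2) - ∑ μ ∈ Finset.range (ν + 1), (Real.pi * I * z * p.2) ^ μ / μ.factorial) := by
        rw [mul_sub, mul_assoc (b p), ← Complex.exp_add, Finset.mul_sum]
        congr 1
        · congr 2; ring
        · refine Finset.sum_congr rfl fun μ _ => ?_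
          rw [mul_pow _ (p.2 : ℂ)]; ring
      rw [e1, norm_mul]
      have h5 := Complex.norm_exp_sub_sum_le_norm_mul_exp (Real.pi * I * z * p.2) (ν + 1)
      have h6 : ‖Real.pi * I * z * p.2‖ = Real.pi * ‖z‖ * |(p.2 : ℝ)| := by
        simp [abs_of_pos Real.pi_pos]
      rw [h6] at h5
      have h7 : ‖b p * cexp (Real.pi * I * (p.1 * t))‖ = ‖b p‖ * Real.exp (-Real.pi * p.1 * t.im) := by
        have := adm_norm b p t 0
        simpa using this
      rw [h7]
      have h := Real.pow_div_factorial_le_exp |(p.2 : ℝ)| (abs_nonneg _) (ν + 1)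
      rw [div_le_iff₀ (by positivity)] at h
      have h8 : Real.exp (Real.pi * ‖z‖ * |(p.2 : ℝ)|) ≤ Real.exp (Real.pi * |(p.2 : ℝ)|) := by
        gcongr
        have := Real.pi_pos
        nlinarith
      calc _ ≤ ‖b p‖ * Real.exp (-Real.pi * p.1 * t.im) * ((Real.pi * ‖z‖ * |(p.2 : ℝ)|) ^ (ν + 1) * Real.exp (Real.pi * |(p.2 : ℝ)|)) := by
            refine mul_le_mul_of_nonneg_left (h5.trans ?_) (by positivity)
            refine mul_le_mul_of_nonneg_left h8 (by have := Real.pi_pos; positivity)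
        _ = ‖b p‖ * Real.exp (-Real.pi * p.1 * t.im) * (Real.pi ^ (ν + 1) * ‖z‖ ^ (ν + 1) * |(p.2 : ℝ)| ^ (ν + 1) * Real.exp (Real.pi * |(p.2 : ℝ)|)) := by
            rw [mul_pow, mul_pow]
        _ ≤ ‖b p‖ * Real.exp (-Real.pi * p.1 * t.im) * (Real.pi ^ (ν + 1) * ‖z‖ ^ (ν + 1) * (Real.exp |(p.2 : ℝ)| * (ν + 1).factorial) * Real.exp (Real.pi * |(p.2 : ℝ)|)) := by
            have := Real.pi_pos
            gcongr
        _ = _ := by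
            rw [hu]; simp only [add_mul, one_mul, Real.exp_add]; ring
    have h9 := tsum_of_norm_bounded (hus.hasSum.mul_right _) h4
    rw [h3.tsum_eq] at h9
    exact h9
  rw [tendsto_iff_norm_sub_tendsto_zero]
  have hlim : Tendsto (fun z : ℂ => (∑' p, u p) * ‖z‖) (𝓝[≠] 0) (𝓝 0) := by
    refine Tendsto.mono_left ?_ nhdsWithin_le_nhds
    have : Continuous fun z : ℂ => (∑' p, u p) * ‖z‖ := by fun_prop
    simpa using this.tendsto 0
  refine squeeze_zero' (Eventually.of_forall fun _ => norm_nonneg _) ?_ hlim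
  have hball : ∀ᶠ z : ℂ in 𝓝[≠] 0, ‖z‖ ≤ 1 :=
    Filter.Eventually.filter_mono nhdsWithin_le_nhds (by
      filter_upwards [Metric.ball_mem_nhds (0 : ℂ) one_pos] with z hz
      simpa using (mem_ball_zero_iff.mp hz).le)
  filter_upwards [hball, self_mem_nhdsWithin] with z hz hz0
  have hz0' : z ≠ 0 := hz0
  have hp : 0 < ‖z‖ := norm_pos_iff.mpr hz0'
  have e : ph b t z / z ^ ν - (Real.pi * I) ^ ν / ν.factorial * DD b ν t =
      (ph b t z - (Real.pi * I) ^ ν / ν.factorial * DD b ν t * z ^ ν) / z ^ ν := by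
    field_simp
  rw [e, norm_div, norm_pow, div_le_iff₀ (by positivity)]
  refine (key z hz).trans (le_of_eq ?_)
  ring

lemma DD_law {b} (hb : Adm b) (M : ℂ) (K ν : ℕ)
    (hJ : ∀ t z : ℂ, 0 < t.im → ph b (-1 / t) (z / t) * cexp (-(Real.pi * I * M * (z ^ 2 / t))) = - (t ^ K * ph b t z))
    (h : ∀ μ < ν, ∀ t : ℂ, 0 < t.im → DD b μ t = 0) (t : ℂ) (ht : 0 < t.im) :
    DD b ν (-1 / t) = - t ^ (K + ν) * DD b ν t := by
  have ht0 : t ≠ 0 := fun h => by simp [h] at ht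
  have ht' : 0 < (-1 / t).im := by
    rw [neg_div, neg_im, one_div, inv_im, neg_div, neg_neg]
    exact div_pos ht (normSq_pos.mpr ht0)
  have h1 := ph_lim hb ν ht (fun μ hμ => h μ hμ t ht)
  have h2 := ph_lim hb ν ht' (fun μ hμ => h μ hμ _ ht')
  have h3 : Tendsto (fun z : ℂ => z / t) (𝓝[≠] 0) (𝓝[≠] 0) := by
    refine tendsto_nhdsWithin_of_tendsto_nhds_of_eventually_within _ ?_ ?_
    · refine Tendsto.mono_left ?_ nhdsWithin_le_nhds
      have : Continuous fun z : ℂ => z / t := by fun_prop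
      simpa using this.tendsto 0
    · filter_upwards [self_mem_nhdsWithin] with z hz
      exact div_ne_zero hz ht0
  have h4 := h2.comp h3
  have h5 : Tendsto (fun z : ℂ => cexp (-(Real.pi * I * M * (z ^ 2 / t)))) (𝓝[≠] 0) (𝓝 1) := by
    refine Tendsto.mono_left ?_ nhdsWithin_le_nhds
    have : Continuous fun z : ℂ => cexp (-(Real.pi * I * M * (z ^ 2 / t))) := by fun_prop
    simpa using this.tendsto 0
  have h6 := h4.mul h5
  have h7 := h1.const_mul (-(t ^ (K + ν)))
  have h8 := tendsto_nhds_unique_of_eventuallyEq h6 h7 (by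
    filter_upwards [self_mem_nhdsWithin] with z hz
    have hz' : z ≠ 0 := hz
    have := hJ t z ht
    simp only [Function.comp]
    rw [div_mul_eq_mul_div, this, pow_add, div_pow]
    field_simp)
  have hc : ((Real.pi * I) ^ ν / ν.factorial : ℂ) ≠ 0 :=
    div_ne_zero (pow_ne_zero _ (mul_ne_zero (by exact_mod_cast Real.pi_pos.ne') I_ne_zero)) (by exact_mod_cast ν.factorial_ne_zero)
  apply mul_left_cancel₀ hc
  linear_combination h8

end

section


structure Cj (a : Fin 21 → ℤ → ℤ → ℤ → ℂ) : Prop where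
  Z : ∀ (l : Fin 21) M (N0 : ℕ), (∀ N R, N < (N0 : ℤ) → a l M N R = 0) →
    (22 - (l : ℕ) < 6 * N0 ∨ (22 - (l : ℕ) = 8 ∧ N0 = 1)) → ∀ N, HasSum (fun R => a l M N R) 0
  Mo : ∀ (l : Fin 21) M (N0 : ℕ) (ν0 : ℕ), (∀ l' > l, ∀ N R, a l' M N R = 0) →
    (∀ N R, N < (N0 : ℤ) → a l M N R = 0) → 22 - (l : ℕ) + ν0 < 6 * N0 →
    ∀ ν ≤ ν0, ∀ N, HasSum (fun R : ℤ => a l M N R * (R : ℂ) ^ ν) 0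

lemma cj_of {f} (hL : Laws f) {a : Fin 21 → ℤ × ℤ × ℤ → ℂ}
    (ha : ∀ l t z u, sym t z u ∈ H2 → HasSum (fun p => a l p * qq p t z u) (f t z u l)) :
    Cj (fun l M N R => a l (M, N, R)) := by
  have hco := co_of hL ha
  constructor
  · intro l M N0 h0 hK N
    have hv := DD_vanish (adm_of ha l M) (fun p hp => hco.oN l M p.1 p.2 hp) N0 (fun p hp => h0 p.1 p.2 hp) 0 (22 - (l : ℕ)) ?_ hK
    · simpa using DD_coef (adm_of ha l M) 0 hv N
    · intro t ht
      have h1 := jac hL ha ht 0 l M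
      have e : ∀ t, DD (fun p => a l (M, p)) 0 t = ph (fun p => a l (M, p)) t 0 := by
        intro t; simp [DD, ph]
      rw [Finset.sum_eq_single l] at h1
      · rw [e, e]
        simp at h1
        rw [h1, show 22 - (l : ℕ) = 2 + (20 - (l : ℕ)) by omega, pow_add]; ring
      · intro b _ hb
        rcases lt_or_gt_of_ne hb with hb | hb
        · rw [Nat.choose_eq_zero_of_lt (by simpa using hb)]; simp
        · rw [zero_pow (by rw [Fin.lt_def] at hb; omega)]; simp
      · simp
  · intro l M N0 ν0 hl h0 hK
    have hJ : ∀ t z : ℂ, 0 < t.im → ph (fun p => a l (M, p)) (-1 / t) (z / t) * cexp (-(Real.pi * I * M * (z ^ 2 / t))) = - (t ^ (22 - (l : ℕ)) * ph (fun p => a l (M, p)) t z) := by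
      intro t z ht
      rw [jac hL ha ht z l M, Finset.sum_eq_single l]
      · rw [show 22 - (l : ℕ) = 2 + (20 - (l : ℕ)) by omega, pow_add]; simp; ring
      · intro b _ hb
        rcases lt_or_gt_of_ne hb with hb | hb
        · rw [Nat.choose_eq_zero_of_lt (by simpa using hb)]; simp
        · have : ph (fun p => a b (M, p)) t z = 0 := by
            rw [ph]; simp only [fun p : ℤ × ℤ => hl b hb p.1 p.2]; simp
          rw [this, mul_zero]
      · simp
    have hD : ∀ ν ≤ ν0, ∀ t : ℂ, 0 < t.im → DD (fun p => a l (M, p)) ν t = 0 := by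
      intro ν
      induction ν using Nat.strong_induction_on with
      | _ ν ih =>
        intro hν
        refine DD_vanish (adm_of ha l M) (fun p hp => hco.oN l M p.1 p.2 hp) N0 (fun p hp => h0 p.1 p.2 hp) ν (22 - (l : ℕ) + ν) ?_ (Or.inl (by omega))
        exact DD_law (adm_of ha l M) M _ ν hJ (fun μ hμ => ih μ hμ (by omega))
    intro ν hν N
    exact DD_coef (adm_of ha l M) ν (hD ν hν) N

lemma fin_vand (c : ℤ → ℂ) (M : ℕ) (S : Finset ℤ) (hS : S.card ≤ M + 1) (hc : ∀ R ∉ S, c R = 0)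
    (h : ∀ ν ≤ M, HasSum (fun R : ℤ => c R * (R : ℂ) ^ ν) 0) : ∀ R, c R = 0 := by
  intro R0
  by_cases hR : R0 ∈ S
  · set p : Polynomial ℂ := ∏ R ∈ S.erase R0, (Polynomial.X - Polynomial.C (R : ℂ)) with hp
    have hdeg : p.natDegree ≤ M := by
      rw [hp, Polynomial.natDegree_prod_of_monic _ _ (fun R _ => Polynomial.monic_X_sub_C _)]
      simp only [Polynomial.natDegree_X_sub_C, Finset.sum_const, smul_eq_mul, mul_one, Finset.card_erase_of_mem hR]; omega
    have h1 : HasSum (fun R : ℤ => c R * p.eval (R : ℂ)) 0 := by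
      have : HasSum (fun R : ℤ => ∑ ν ∈ Finset.range (M + 1), p.coeff ν * (c R * (R : ℂ) ^ ν)) (∑ ν ∈ Finset.range (M + 1), p.coeff ν * 0) :=
        hasSum_sum fun ν hν => (h ν (by simpa [Nat.lt_succ_iff] using hν)).mul_left _
      simp only [mul_zero, Finset.sum_const_zero] at this
      refine this.congr_fun fun R => ?_
      rw [Polynomial.eval_eq_sum_range' (n := M + 1) (by omega), Finset.mul_sum]
      exact Finset.sum_congr rfl fun ν _ => by ring
    have h2 : HasSum (fun R : ℤ => c R * p.eval (R : ℂ)) (c R0 * p.eval (R0 : ℂ)) := by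
      refine hasSum_single R0 fun R hne => ?_
      by_cases hRS : R ∈ S
      · have : p.eval (R : ℂ) = 0 := by
          rw [hp, Polynomial.eval_prod]
          exact Finset.prod_eq_zero (Finset.mem_erase.mpr ⟨hne, hRS⟩) (by simp)
        rw [this, mul_zero]
      · rw [hc R hRS, zero_mul]
    have h3 := h1.unique h2
    have h4 : p.eval (R0 : ℂ) ≠ 0 := by
      rw [hp, Polynomial.eval_prod, Finset.prod_ne_zero_iff]
      intro R hR'
      simp only [Polynomial.eval_sub, Polynomial.eval_X, Polynomial.eval_C]
      rw [sub_ne_zero]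
      exact_mod_cast (Finset.ne_of_mem_erase hR').symm
    exact (mul_eq_zero.mp h3.symm).resolve_right h4
  · exact hc R0 hR

variable {a : Fin 21 → ℤ → ℤ → ℤ → ℂ}

lemma Co.L' (h : Co a) (i : Fin 21) (M N R : ℤ) :
    a i M N R = - ∑ l : Fin 21, ((l : ℕ).choose i : ℂ) * a l M (N - R + M) (R - 2 * M) := by
  have h1 := h.L i M N (-R)
  rw [h.P] at h1
  have hs : ((-1 : ℂ) ^ (i : ℕ)) * (-1) ^ (i : ℕ) = 1 := by rw [← mul_pow]; simp
  have h2 : a i M N R = (-1) ^ (i : ℕ) * ((-1) ^ (i : ℕ) * a i M N R) := by rw [← mul_assoc, hs, one_mul]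
  rw [h2, h1, mul_neg, Finset.mul_sum]
  congr 1
  refine Finset.sum_congr rfl fun l _ => ?_
  rw [show -R + 2 * M = -(R - 2 * M) by ring, h.P, show N + -R + M = N - R + M by ring]
  rcases lt_or_ge (l : ℕ) (i : ℕ) with hl | hl
  · rw [Nat.choose_eq_zero_of_lt hl]; simp
  · obtain ⟨k, hk⟩ := Nat.exists_eq_add_of_le hl
    have : (-1 : ℂ) ^ (i : ℕ) * (-1) ^ ((l : ℕ) - i) * (-1) ^ (l : ℕ) = 1 := by
      rw [hk, Nat.add_sub_cancel_left, ← pow_add, ← pow_add, ← two_mul, pow_mul]; simp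
    linear_combination ((l : ℕ).choose i : ℂ) * a l M (N - R + M) (R - 2 * M) * this

/-- reduction: coefficients with |R| > M vanish at l if those with smaller N vanish for all l' ≥ l -/
lemma Co.red (h : Co a) (l : Fin 21) (M N R : ℤ) (hR : M < |R|)
    (hv : ∀ l' ≥ l, ∀ N' < N, ∀ R', a l' M N' R' = 0) : a l M N R = 0 := by
  rcases abs_cases R with ⟨e, -⟩ | ⟨e, -⟩
  · rw [h.L' l M N R, Finset.sum_eq_zero, neg_zero]
    intro l' _
    rcases lt_or_ge (l' : ℕ) (l : ℕ) with hl | hl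
    · rw [Nat.choose_eq_zero_of_lt hl]; simp
    · rw [hv l' hl _ (by omega), mul_zero]
  · rw [h.L l M N R, Finset.sum_eq_zero, neg_zero]
    intro l' _
    rcases lt_or_ge (l' : ℕ) (l : ℕ) with hl | hl
    · rw [Nat.choose_eq_zero_of_lt hl]; simp
    · rw [hv l' hl _ (by omega), mul_zero]

lemma Co.main1 (h : Co a) (hj : Cj a) (l : Fin 21) (M N0 : ℕ) (hl : ∀ l' > l, ∀ N R, a l' M N R = 0)
    (h0 : ∀ N R, N < (N0 : ℤ) → a l M N R = 0) (hK : 22 - (l : ℕ) + M < 6 * N0) :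
    ∀ N R, a l M N R = 0 := by
  by_cases hM : Odd (M : ℤ)
  swap
  · intro N R; exact h.oM _ _ _ _ hM
  have key : ∀ k : ℕ, ∀ N R, N < (k : ℤ) → a l M N R = 0 := by
    intro k
    induction k with
    | zero => intro N R hN; exact h.K' _ _ _ _ (by simpa using hN)
    | succ k ih =>
      intro N R hN
      rcases lt_or_ge N (k : ℤ) with hk | hk
      · exact ih N R hk
      refine fin_vand (fun R => a l M N R) M ((Finset.range (M + 1)).image fun i : ℕ => 2 * (i : ℤ) - M)
        (Finset.card_image_le.trans (by simp)) ?_ (fun ν hν => hj.Mo l M N0 M hl h0 hK ν hν N) R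
      intro R hR
      by_cases ho : Odd R
      swap
      · exact h.oR _ _ _ _ ho
      refine h.red l M N R ?_ ?_
      · by_contra hc
        push Not at hc
        rw [abs_le] at hc
        apply hR
        obtain ⟨r, hr⟩ := ho
        obtain ⟨m, hm⟩ := hM
        rw [Finset.mem_image]
        refine ⟨(r + m + 1).toNat, by rw [Finset.mem_range]; omega, by omega⟩
      · intro l' hl' N' hN' R'
        rcases eq_or_lt_of_le hl' with e | e
        · rw [← e]; exact ih N' R' (by push_cast at hN; omega)
        · exact hl l' e N' R'
  intro N R
  exact key (N + 1).toNat N R (by omega)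

lemma Co.main (h : Co a) (hj : Cj a) (M N0 : ℕ) (h0 : ∀ l N R, N < (N0 : ℤ) → a l M N R = 0) (k : ℕ)
    (hK : 22 + M < 6 * N0 + k) : ∀ l : Fin 21, k ≤ l → ∀ N R, a l M N R = 0 := by
  have : ∀ d : ℕ, ∀ l : Fin 21, (l : ℕ) + d = 20 → k ≤ l → ∀ N R, a l M N R = 0 := by
    intro d
    induction d using Nat.strong_induction_on with
    | _ d ih =>
      intro l hl hk
      refine h.main1 hj l M N0 (fun l' hl' => ih (20 - l') ?_ l' (by omega) ?_) (h0 l) (by omega)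
      · rw [gt_iff_lt, Fin.lt_def] at hl'; omega
      · rw [gt_iff_lt, Fin.lt_def] at hl'; omega
  intro l hk
  exact this (20 - l) l (by omega) hk

end

section


variable {a : Fin 21 → ℤ → ℤ → ℤ → ℂ}

lemma hasSum_two (c : ℤ → ℂ) (h : ∀ R, R ≠ 1 → R ≠ -1 → c R = 0) (hs : HasSum c 0) : c 1 + c (-1) = 0 := by
  have : HasSum c (∑ b ∈ ({1, -1} : Finset ℤ), c b) := hasSum_sum_of_ne_finset_zero (by
    intro R hR; simp at hR; exact h R hR.1 hR.2)
  rw [Finset.sum_pair (by norm_num)] at this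
  exact this.unique hs

lemma Co.zeroN (h : Co a) (l M N R) (hN : N < 1) : a l M N R = 0 := by
  rcases lt_or_eq_of_le (show N ≤ 0 by omega) with h1 | h1
  · exact h.K' _ _ _ _ h1
  · exact h.oN _ _ _ _ (by rw [h1]; decide)

/-- from R=1 (all l) and lower N, to all R, when M = 1 -/
lemma Co.ext1 (h : Co a) (N : ℤ) (h1 : ∀ l, a l 1 N 1 = 0) (h2 : ∀ l N' R, N' < N → a l 1 N' R = 0) :
    ∀ l R, a l 1 N R = 0 := by
  intro l R
  rcases eq_or_ne R 1 with rfl | n1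
  · exact h1 l
  rcases eq_or_ne R (-1) with rfl | n2
  · rw [h.P, h1, mul_zero]
  rcases eq_or_ne R 0 with rfl | n0
  · exact h.oR _ _ _ _ (by decide)
  · exact h.red l 1 N R (by rcases abs_cases R with ⟨e, e'⟩ | ⟨e, e'⟩ <;> omega) (fun l' _ N' hN' R' => h2 l' N' R' hN')

lemma sum21 (g : Fin 21 → ℂ) : ∑ l, g l = g 0 + g 1 + g 2 + g 3 + g 4 + g 5 + g 6 + g 7 + g 8 + g 9 + g 10 + g 11 + g 12 + g 13 + g 14 + g 15 + g 16 + g 17 + g 18 + g 19 + g 20 := by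
  simp only [Fin.sum_univ_castSucc, Fin.sum_univ_zero, zero_add]
  rfl

lemma Co.uniq (h : Co a) (hj : Cj a) (h4 : a 4 1 1 1 = 0) : ∀ l M N R, a l M N R = 0 := by
  have z1 : ∀ l M N R, N < ((1 : ℕ) : ℤ) → a l M N R = 0 := fun l M N R hN => h.zeroN l M N R (by simpa using hN)
  have m1 := h.main hj 1 1 (fun l => z1 l _) 18 (by norm_num)
  simp only [Nat.cast_one] at m1
  have v20 := m1 20 (by decide) 1 1
  have v19 := m1 19 (by decide) 1 1
  have v18 := m1 18 (by decide) 1 1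
  have v14 : a 14 1 1 1 = 0 := by
    have hs := hj.Z 14 1 1 (z1 14 1) (Or.inr (by decide)) 1
    have := hasSum_two _ (fun R n1 n2 => by
      rcases eq_or_ne R 0 with rfl | n0
      · exact h.oR _ _ _ _ (by decide)
      · exact h.red 14 1 1 R (by rcases abs_cases R with ⟨e, e'⟩ | ⟨e, e'⟩ <;> omega) (fun l' _ N' hN' R' => h.zeroN _ _ _ _ hN')) hs
    have h2 := h.P 14 1 1 1
    rw [show (((14 : Fin 21) : ℕ)) = 14 from rfl] at h2
    rw [h2] at this
    linear_combination this / 2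
  have hsh : ∀ N i, a i 1 N 1 = - ∑ l : Fin 21, ((l : ℕ).choose i : ℂ) * ((-1) ^ (l : ℕ) * a l 1 N 1) := by
    intro N i
    have := h.L' i 1 N 1
    simp only [show N - 1 + 1 = N by ring, show (1 : ℤ) - 2 * 1 = -1 by norm_num, h.P] at this
    exact this
  have hv : ∀ l, a l 1 1 1 = 0 := by
    have w : ∀ l : Fin 21, a l 1 1 1 = - a l.rev 1 1 1 := fun l => h.W l 1 1 1
    have w0 := w 0
    have w1 := w 1
    have w2 := w 2
    have w3 := w 3
    have w4 := w 4
    have w5 := w 5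
    have w6 := w 6
    have w7 := w 7
    have w8 := w 8
    have w9 := w 9
    have w10 := w 10
    have e := hsh 1
    have e16 := e 16
    have e14 := e 14
    have e12 := e 12
    have e10 := e 10
    have e8 := e 8
    have e6 := e 6
    clear e w hsh
    rw [show Fin.rev (0 : Fin 21) = 20 from rfl] at w0
    rw [show Fin.rev (1 : Fin 21) = 19 from rfl] at w1
    rw [show Fin.rev (2 : Fin 21) = 18 from rfl] at w2
    rw [show Fin.rev (3 : Fin 21) = 17 from rfl] at w3
    rw [show Fin.rev (4 : Fin 21) = 16 from rfl] at w4
    rw [show Fin.rev (5 : Fin 21) = 15 from rfl] at w5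
    rw [show Fin.rev (6 : Fin 21) = 14 from rfl] at w6
    rw [show Fin.rev (7 : Fin 21) = 13 from rfl] at w7
    rw [show Fin.rev (8 : Fin 21) = 12 from rfl] at w8
    rw [show Fin.rev (9 : Fin 21) = 11 from rfl] at w9
    rw [show Fin.rev (10 : Fin 21) = 10 from rfl] at w10
    have v10 : a 10 1 1 1 = 0 := by linear_combination w10 / 2
    have v16 : a 16 1 1 1 = 0 := by linear_combination w4 - h4
    rw [sum21] at e16 e14 e12 e10 e8 e6
    rw [v20, neg_zero] at w0
    rw [v19, neg_zero] at w1
    rw [v18, neg_zero] at w2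
    rw [v14, neg_zero] at w6
    have v17 : a 17 1 1 1 = 0 := by
      norm_num [v20, v19, v18, v14, v16, v10, w0, w1, w2, w6, h4, Nat.choose] at e16
      exact e16
    have v15 : a 15 1 1 1 = 0 := by
      norm_num [v20, v19, v18, v14, v16, v10, w0, w1, w2, w6, h4, v17, Nat.choose] at e14
      exact e14
    rw [v17, neg_zero] at w3
    rw [v15, neg_zero] at w5
    norm_num [v20, v19, v18, v14, v16, v10, v17, v15, w0, w1, w2, w6, w3, w5, w7, w8, w9, h4, Nat.choose] at e12 e10 e8 e6
    have v13 : a 13 1 1 1 = 0 := by linear_combination (-e8 + 156/11*e10 - 443/2*e12)*(2/221)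
    have v12 : a 12 1 1 1 = 0 := by linear_combination e12 / 2 + 13 / 2 * v13
    have v11 : a 11 1 1 1 = 0 := by linear_combination -e10 / 11 + 6 * v12 - 26 * v13
    rw [v13, neg_zero] at w7
    rw [v12, neg_zero] at w8
    rw [v11, neg_zero] at w9
    intro l
    fin_cases l <;> assumption
  have b1 := h.ext1 1 hv (fun l N' R hN => h.zeroN _ _ _ _ hN)
  have c1 : ∀ l N R, N < ((3 : ℕ) : ℤ) → a l 1 N R = 0 := by
    intro l N R hN
    rcases lt_or_ge N 1 with hN1 | hN1
    · exact h.zeroN _ _ _ _ hN1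
    rcases eq_or_lt_of_le hN1 with rfl | hN2
    · exact b1 l R
    · exact h.oN _ _ _ _ (by rw [show N = 2 by push_cast at hN; omega]; decide)
  have m2 := h.main hj 1 3 c1 6 (by norm_num)
  simp only [Nat.cast_one] at m2
  have m3 := h.main hj 3 1 (fun l => z1 l _) 20 (by norm_num)
  simp only [Nat.cast_ofNat] at m3
  have r3 : ∀ l R, R ≠ 1 → R ≠ -1 → a l 3 1 R = 0 := by
    have r33 : ∀ l, a l 3 1 3 = 0 := by
      intro l
      rw [h.W l 1 3 3, h.L']
      norm_num [b1]
    intro l R n1 n2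
    by_cases ho : Odd R
    swap
    · exact h.oR _ _ _ _ ho
    rcases eq_or_ne R 3 with rfl | n3
    · exact r33 l
    rcases eq_or_ne R (-3) with rfl | n3'
    · rw [h.P, r33, mul_zero]
    · obtain ⟨r, hr⟩ := ho
      exact h.red l 3 1 R (by rcases abs_cases R with ⟨e, e'⟩ | ⟨e, e'⟩ <;> omega) (fun l' _ N' hN' R' => h.zeroN _ _ _ _ hN')
  have x19 : a 19 3 1 1 = 0 := by
    have hs := hj.Mo 19 3 1 1 (fun l' hl' => m3 l' (by rw [gt_iff_lt, Fin.lt_def] at hl'; exact hl')) (z1 19 3) (by decide) 1 le_rfl 1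
    have := hasSum_two _ (fun R n1 n2 => by rw [r3 _ _ n1 n2, zero_mul]) hs
    have h2 := h.P 19 3 1 1
    rw [show (((19 : Fin 21) : ℕ)) = 19 from rfl] at h2
    rw [h2] at this
    push_cast at this
    linear_combination this / 2
  have x18 : a 18 3 1 1 = 0 := by
    have hs := hj.Z 18 3 1 (z1 18 3) (Or.inl (by decide)) 1
    have := hasSum_two _ (fun R n1 n2 => r3 _ _ n1 n2) hs
    have h2 := h.P 18 3 1 1
    rw [show (((18 : Fin 21) : ℕ)) = 18 from rfl] at h2
    rw [h2] at this
    linear_combination this / 2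
  have x20 : a 20 3 1 1 = 0 := m3 20 (by decide) 1 1
  have y0 : a 0 1 3 1 = 0 := by rw [h.W 0 3 1 1, show Fin.rev (0 : Fin 21) = 20 from rfl, x20, neg_zero]
  have y1 : a 1 1 3 1 = 0 := by rw [h.W 1 3 1 1, show Fin.rev (1 : Fin 21) = 19 from rfl, x19, neg_zero]
  have y2 : a 2 1 3 1 = 0 := by rw [h.W 2 3 1 1, show Fin.rev (2 : Fin 21) = 18 from rfl, x18, neg_zero]
  have hw : ∀ l, a l 1 3 1 = 0 := by
    have n : ∀ l : Fin 21, 6 ≤ (l : ℕ) → a l 1 3 1 = 0 := fun l hl => m2 l hl 3 1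
    have e4 := hsh 3 4
    have e2 := hsh 3 2
    have e0 := hsh 3 0
    rw [sum21] at e0 e2 e4
    norm_num [y0, y1, y2, n, Nat.choose] at e4 e2 e0
    have v5 : a 5 1 3 1 = 0 := by linear_combination -2*(-e2 + 3*e0 + 3/2*e4)
    have v4 : a 4 1 3 1 = 0 := by linear_combination e4 / 2 + 5 / 2 * v5
    have v3 : a 3 1 3 1 = 0 := by linear_combination -e0 + v4 - v5
    intro l
    rcases lt_or_ge (l : ℕ) 6 with hl | hl
    · obtain ⟨l, hl'⟩ := l
      simp only at hl
      interval_cases l <;> assumption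
    · exact n l hl
  have b3 := h.ext1 3 hw (fun l N' R hN => c1 l N' R (by push_cast; exact hN))
  have M1 : ∀ l N R, a l 1 N R = 0 := by
    have := h.main hj 1 5 (by
      intro l N R hN
      rcases lt_or_ge N 1 with hN1 | hN1
      · exact h.zeroN _ _ _ _ hN1
      by_cases ho : Odd N
      swap
      · exact h.oN _ _ _ _ ho
      obtain ⟨n, hn⟩ := ho
      rcases (show N = 1 ∨ N = 3 by push_cast at hN; omega) with rfl | rfl
      · exact b1 l R
      · exact b3 l R) 0 (by norm_num)
    simpa using this
  have M3 : ∀ l N R, a l 3 N R = 0 := by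
    have k1 : ∀ l N R, N < ((3 : ℕ) : ℤ) → a l 3 N R = 0 := by
      intro l N R hN
      rcases lt_or_ge N 1 with hN1 | hN1
      · exact h.zeroN _ _ _ _ hN1
      by_cases ho : Odd N
      swap
      · exact h.oN _ _ _ _ ho
      obtain ⟨n, hn⟩ := ho
      rw [show N = 1 by push_cast at hN; omega, h.W, M1, neg_zero]
    have k2 := h.main hj 3 3 k1 8 (by norm_num)
    have k3 : ∀ l R, a l 3 3 R = 0 := by
      intro l R
      rcases lt_or_ge (l : ℕ) 8 with hl | hl
      · rw [h.W]
        have := k2 l.rev (by rw [Fin.val_rev]; omega) 3 R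
        simp at this
        rw [this, neg_zero]
      · have := k2 l hl 3 R
        simpa using this
    have := h.main hj 3 5 (by
      intro l N R hN
      rcases lt_or_ge N 3 with hN1 | hN1
      · exact k1 l N R hN1
      by_cases ho : Odd N
      swap
      · exact h.oN _ _ _ _ ho
      obtain ⟨n, hn⟩ := ho
      rw [show N = 3 by push_cast at hN; omega]
      exact k3 l R) 0 (by norm_num)
    simpa using this
  have MM : ∀ m : ℕ, ∀ l N R, a l m N R = 0 := by
    intro m
    induction m using Nat.strong_induction_on with
    | _ m ih =>
      by_cases ho : Odd (m : ℤ)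
      swap
      · intro l N R; exact h.oM _ _ _ _ ho
      rcases lt_or_ge m 5 with h5 | h5
      · obtain ⟨n, hn⟩ := ho
        rcases (show m = 1 ∨ m = 3 by omega) with rfl | rfl
        · simpa using M1
        · simpa using M3
      · have := h.main hj m m (by
          intro l N R hN
          rcases lt_or_ge N 1 with hN1 | hN1
          · exact h.zeroN _ _ _ _ hN1
          rw [h.W, show N = ((N.toNat : ℕ) : ℤ) by omega, ih N.toNat (by omega), neg_zero]) 0 (by omega)
        simpa using this
  intro l M N R
  rcases lt_or_ge M 0 with hM | hM
  · exact h.K _ _ _ _ hM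
  · rw [show M = ((M.toNat : ℕ) : ℤ) by omega, MM]

end

section


lemma co_F {ε : M4 → ℂ} (hε : IsEps ε) {F : (Fin 2 → Fin 2 → ℂ) → Fin 21 → ℂ} (hd : DifferentiableOn ℂ F H2)
    (hF : ∀ γ ∈ Sp4Z, ∀ τ ∈ H2, F (moeb γ τ) = ε γ • wt 20 2 (den γ τ) (F τ)) :
    ∃ a : Fin 21 → ℤ × ℤ × ℤ → ℂ, (∀ l t z u, sym t z u ∈ H2 →
      HasSum (fun p => a l p * qq p t z u) (F (sym t z u) l)) ∧ Co (fun l M N R => a l (M, N, R)) ∧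
      Cj (fun l M N R => a l (M, N, R)) := by
  have hL := laws_of hε hF
  obtain ⟨a, ha⟩ := exists_co hL (by
    intro l
    have h1 : DifferentiableOn ℂ (fun w : Fin 3 → ℂ => F (sym (2 * w 0) (2 * w 1) (2 * w 2))) UU := by
      refine hd.comp (t := H2) (f := fun w : Fin 3 → ℂ => sym (2 * w 0) (2 * w 1) (2 * w 2)) ?_ (fun w hw => UU_H2.mp hw)
      apply Differentiable.differentiableOn
      unfold sym
      rw [differentiable_pi]; intro i
      rw [differentiable_pi]; intro j
      fin_cases i <;> fin_cases j <;> simp <;> fun_prop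
    rw [differentiableOn_pi] at h1
    exact h1 l)
  exact ⟨a, ha, co_of hL ha, cj_of hL ha⟩

lemma F_prop {ε : M4 → ℂ} (hε : IsEps ε) {F G : (Fin 2 → Fin 2 → ℂ) → Fin 21 → ℂ} (hF : F ∈ SiegelCusp 20 2 Sp4Z ε)
    (hG : G ∈ SiegelCusp 20 2 Sp4Z ε) (hF0 : F ≠ 0) : ∃ c : ℂ, c • F = G := by
  have key : ∀ F ∈ SiegelCusp 20 2 Sp4Z ε, ∀ a : Fin 21 → ℤ × ℤ × ℤ → ℂ, (∀ l t z u, sym t z u ∈ H2 →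
      HasSum (fun p => a l p * qq p t z u) (F (sym t z u) l)) → a 4 (1, 1, 1) = 0 → F = 0 := by
    intro F hF a ha h4
    have hL := laws_of hε hF.2.1
    have h0 := (co_of hL ha).uniq (cj_of hL ha) h4
    funext τ
    by_cases hτ : τ ∈ H2
    · obtain ⟨t, z, u, rfl⟩ := exists_sym hτ
      funext l
      refine (ha l t z u hτ).unique ?_
      refine HasSum.congr_fun hasSum_zero fun p => ?_
      rw [show a l p = 0 from h0 l p.1 p.2.1 p.2.2, zero_mul]
    · exact hF.2.2.2 τ hτ
  obtain ⟨a, ha, -, -⟩ := co_F hε hF.1 hF.2.1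
  obtain ⟨b, hb, -, -⟩ := co_F hε hG.1 hG.2.1
  have hne : a 4 (1, 1, 1) ≠ 0 := fun h => hF0 (key F hF a ha h)
  refine ⟨b 4 (1, 1, 1) / a 4 (1, 1, 1), ?_⟩
  rw [← sub_eq_zero]
  set c := b 4 (1, 1, 1) / a 4 (1, 1, 1) with hc
  refine key _ (Submodule.sub_mem _ (Submodule.smul_mem _ c hF) hG) (fun l p => c * a l p - b l p) ?_ ?_
  · intro l t z u h
    refine (((ha l t z u h).mul_left c).sub (hb l t z u h)).congr_fun fun p => ?_
    ring
  · rw [hc]; field_simp; ring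

lemma diagH_sym (t u : ℂ) : diagH t u = sym t 0 u := by
  funext i j; fin_cases i <;> fin_cases j <;> simp [diagH, sym]

lemma cusp_of {ε : M4 → ℂ} (hε : IsEps ε) {F : (Fin 2 → Fin 2 → ℂ) → Fin 21 → ℂ} (hd : DifferentiableOn ℂ F H2)
    (hF : ∀ γ ∈ Sp4Z, ∀ τ ∈ H2, F (moeb γ τ) = ε γ • wt 20 2 (den γ τ) (F τ)) :
    (∀ γ ∈ Sp4Z, ∀ τ₁ : ℂ, 0 < τ₁.im →
    Tendsto (fun t : ℝ => slashS 20 2 γ F (diagH τ₁ (t * Complex.I))) atTop (𝓝 0)) := by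
  intro γ hγ τ hτ
  obtain ⟨a, ha, hc, -⟩ := co_F hε hd hF
  have mem : ∀ y : ℝ, 0 < y → sym τ 0 (y * I) ∈ H2 := by
    intro y hy; rw [sym_mem]; simp; exact ⟨hτ, by positivity⟩
  have h1 : Tendsto (fun y : ℝ => F (sym τ 0 (y * I))) atTop (𝓝 0) := by
    rw [tendsto_pi_nhds]; intro l
    have h2 : Tendsto (fun y : ℝ => ∑' p, a l p * qq p τ 0 (y * I)) atTop (𝓝 (∑' p : ℤ × ℤ × ℤ, (0 : ℂ))) := by
      refine tendsto_tsum_of_dominated_convergence (bound := fun p => ‖a l p * qq p τ 0 ((1 : ℝ) * I)‖) ?_ ?_ ?_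
      · exact (ha l τ 0 _ (mem 1 one_pos)).summable.norm
      · intro p
        rcases lt_or_ge p.1 1 with hp | hp
        · have : a l p = 0 := by
            rcases eq_or_lt_of_le (show p.1 ≤ 0 by omega) with h0 | h0
            · exact hc.oM l p.1 p.2.1 p.2.2 (by rw [h0]; decide)
            · exact hc.K l p.1 p.2.1 p.2.2 h0
          simp [this]
        · rw [tendsto_zero_iff_norm_tendsto_zero]
          have : ∀ y : ℝ, ‖a l p * qq p τ 0 (y * I)‖ = ‖a l p‖ * Real.exp (-(Real.pi * p.2.1 * τ.im)) * Real.exp (-((Real.pi * p.1) * y)) := by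
            intro y
            rw [norm_mul, mul_assoc, ← Real.exp_add, qq, Complex.norm_exp]
            congr 2
            simp; ring
          simp only [this]
          rw [show (0 : ℝ) = ‖a l p‖ * Real.exp (-(Real.pi * p.2.1 * τ.im)) * 0 by ring]
          refine Tendsto.const_mul _ ?_
          refine Real.tendsto_exp_neg_atTop_nhds_zero.comp ?_
          have : (0 : ℝ) < Real.pi * p.1 := by
            have : (1 : ℝ) ≤ p.1 := by exact_mod_cast hp
            have := Real.pi_pos
            positivity
          exact tendsto_id.const_mul_atTop this
      · filter_upwards [eventually_ge_atTop 1] with y hy p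
        rw [norm_mul, norm_mul]
        rcases lt_or_ge p.1 0 with hp | hp
        · rw [show a l p = 0 from hc.K l p.1 p.2.1 p.2.2 hp]; simp
        · refine mul_le_mul_of_nonneg_left ?_ (norm_nonneg _)
          rw [qq, qq, Complex.norm_exp, Complex.norm_exp, Real.exp_le_exp]
          simp
          have : (0 : ℝ) ≤ p.1 := by exact_mod_cast hp
          have := Real.pi_pos
          gcongr
          nlinarith
    rw [tsum_zero] at h2
    refine h2.congr' ?_
    filter_upwards [eventually_gt_atTop 0] with y hy
    exact (ha l τ 0 _ (mem y hy)).tsum_eq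
  have h3 := h1.const_smul (ε γ)
  rw [smul_zero] at h3
  refine h3.congr' ?_
  filter_upwards [eventually_gt_atTop 0] with y hy
  rw [diagH_sym, slash_of_law F hF γ hγ _ (mem y hy)]

lemma main_of {ε : M4 → ℂ} (hε : IsEps ε) {F : (Fin 2 → Fin 2 → ℂ) → Fin 21 → ℂ} (hd : DifferentiableOn ℂ F H2)
    (hF : ∀ g ∈ ({mT, mJ, mW, mL} : Set M4), ∀ τ ∈ H2, F (moeb g τ) = (-1 : ℂ) • wt 20 2 (den g τ) (F τ))
    (h0 : ∀ τ, τ ∉ H2 → F τ = 0) (hne : F ≠ 0) : Module.finrank ℂ ↥(SiegelCusp 20 2 Sp4Z ε) = 1 := by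
  have hl := law_of_gens hε F hF
  have hm : F ∈ SiegelCusp 20 2 Sp4Z ε := ⟨hd, hl, cusp_of hε hd hl, h0⟩
  rw [finrank_eq_one_iff']
  refine ⟨⟨F, hm⟩, ?_, ?_⟩
  · intro h; exact hne (congrArg Subtype.val h)
  · rintro ⟨G, hG⟩
    obtain ⟨c, hc⟩ := F_prop hε hm hG hne
    exact ⟨c, Subtype.ext hc⟩

end

section


structure Fam (ι : Type) where
  c : ι → ℂ
  A : ι → ℂ
  B : ι → ℂ
  X : ι → ℝ
  Y : ι → ℝ
  Z : ι → ℝ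

namespace Fam
variable {ι κ : Type}

def ex (F : Fam ι) (t z u : ℂ) (i : ι) : ℂ := F.c i * cexp (Real.pi * I * (F.X i * t + 2 * F.Y i * z + F.Z i * u))

def trm (F : Fam ι) (t z u a b : ℂ) (i : ι) : ℂ := F.ex t z u i * cexp (2 * Real.pi * I * (F.A i * a + F.B i * b))

def val (F : Fam ι) (t z u a b : ℂ) : ℂ := ∑' i, F.trm t z u a b i

def co (F : Fam ι) (t z u : ℂ) (l : Fin 21) : ℂ :=
  ∑' i, F.ex t z u i * (((20 : ℕ).choose l : ℂ) * F.A i ^ (20 - (l : ℕ)) * F.B i ^ (l : ℕ))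

def mul (F : Fam ι) (G : Fam κ) : Fam (ι × κ) where
  c p := F.c p.1 * G.c p.2
  A p := F.A p.1 + G.A p.2
  B p := F.B p.1 + G.B p.2
  X p := F.X p.1 + G.X p.2
  Y p := F.Y p.1 + G.Y p.2
  Z p := F.Z p.1 + G.Z p.2

def sc (α : ℂ) (F : Fam ι) : Fam ι := { F with A := fun i => α * F.A i, B := fun i => α * F.B i }

structure Good (F : Fam ι) : Prop where
  psd : ∀ i p q r, 0 ≤ p → 0 ≤ r → q ^ 2 ≤ p * r → 0 ≤ p * F.X i + 2 * q * F.Y i + r * F.Z i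
  sm : ∀ R δ : ℝ, 0 ≤ R → 0 < δ → Summable fun i => ‖F.c i‖ * Real.exp (R * (‖F.A i‖ + ‖F.B i‖) - δ * (F.X i + F.Z i))

lemma good_sc {F : Fam ι} (h : F.Good) (α : ℂ) : (F.sc α).Good where
  psd := h.psd
  sm R δ hR hδ := by
    refine (h.sm (R * ‖α‖) δ (by positivity) hδ).congr fun i => ?_
    simp only [sc, norm_mul]
    congr 2; ring

lemma good_mul {F : Fam ι} {G : Fam κ} (h : F.Good) (h' : G.Good) : (F.mul G).Good where
  psd i p q r hp hr hq := by
    have := h.psd i.1 p q r hp hr hq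
    have := h'.psd i.2 p q r hp hr hq
    simp only [mul]; linarith
  sm R δ hR hδ := by
    have := (h.sm R δ hR hδ).mul_of_nonneg (h'.sm R δ hR hδ) (fun i => by positivity) (fun i => by positivity)
    refine Summable.of_nonneg_of_le (fun i => by positivity) (fun i => ?_) this
    simp only [mul, norm_mul]
    rw [show ∀ a b c d : ℝ, (a * b) * (c * d) = (a * c) * (b * d) by intros; ring, ← Real.exp_add]
    gcongr
    have h1 := norm_add_le (F.A i.1) (G.A i.2)
    have h2 := norm_add_le (F.B i.1) (G.B i.2)
    nlinarith

lemma H2_delta {t z u : ℂ} (h : sym t z u ∈ H2) : ∃ δ > 0, ∀ t' z' u' : ℂ, ‖t' - t‖ < δ → ‖z' - z‖ < δ → ‖u' - u‖ < δ →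
    0 ≤ t'.im - δ ∧ 0 ≤ u'.im - δ ∧ z'.im ^ 2 ≤ (t'.im - δ) * (u'.im - δ) := by
  rw [sym_mem] at h
  have ho : IsOpen {p : ℝ × ℝ × ℝ | 0 < p.1 ∧ p.2.1 ^ 2 < p.1 * p.2.2} :=
    IsOpen.and (isOpen_lt continuous_const continuous_fst) (isOpen_lt (by fun_prop) (by fun_prop))
  obtain ⟨e, he, hb⟩ := Metric.isOpen_iff.mp ho (t.im, z.im, u.im) h
  refine ⟨e / 3, by positivity, fun t' z' u' h1 h2 h3 => ?_⟩
  have k1 := (abs_im_le_norm (t' - t)).trans_lt h1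
  have k2 := (abs_im_le_norm (z' - z)).trans_lt h2
  have k3 := (abs_im_le_norm (u' - u)).trans_lt h3
  rw [sub_im, abs_lt] at k1 k2 k3
  have := @hb (t'.im - e / 3, z'.im, u'.im - e / 3) (by
    rw [Metric.mem_ball, Prod.dist_eq, Prod.dist_eq, max_lt_iff, max_lt_iff, Real.dist_eq, Real.dist_eq, Real.dist_eq, abs_lt, abs_lt, abs_lt]
    simp only
    refine ⟨⟨?_, ?_⟩, ⟨?_, ?_⟩, ?_, ?_⟩ <;> linarith)
  obtain ⟨q1, q2⟩ := this
  simp only at q1 q2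
  refine ⟨q1.le, ?_, q2.le⟩
  by_contra hc
  nlinarith [sq_nonneg z'.im]

lemma ex_norm {F : Fam ι} (hF : F.Good) {t z u : ℂ} {δ : ℝ} (h : 0 ≤ t.im - δ ∧ 0 ≤ u.im - δ ∧ z.im ^ 2 ≤ (t.im - δ) * (u.im - δ)) (i : ι) :
    ‖F.ex t z u i‖ ≤ ‖F.c i‖ * Real.exp (-(Real.pi * δ) * (F.X i + F.Z i)) := by
  rw [ex, norm_mul, norm_exp]
  gcongr
  have := hF.psd i _ _ _ h.1 h.2.1 h.2.2
  simp
  nlinarith [Real.pi_pos]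

lemma XZ_nonneg {F : Fam ι} (hF : F.Good) (i : ι) : 0 ≤ F.X i + F.Z i := by
  have := hF.psd i 1 0 1 (by norm_num) (by norm_num) (by norm_num)
  linarith

lemma trm_sum {F : Fam ι} (hF : F.Good) {t z u : ℂ} (h : sym t z u ∈ H2) (R : ℝ) (hR : 0 ≤ R) :
    Summable fun i => ‖F.ex t z u i‖ * Real.exp (R * (‖F.A i‖ + ‖F.B i‖)) := by
  obtain ⟨δ, hδ, hd⟩ := H2_delta h
  have := hd t z u (by simpa) (by simpa) (by simpa)
  refine Summable.of_nonneg_of_le (fun i => by positivity) (fun i => ?_) (hF.sm R (Real.pi * δ) hR (by have := Real.pi_pos; positivity))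
  rw [sub_eq_neg_add, Real.exp_add, ← mul_assoc, ← neg_mul]
  gcongr
  exact ex_norm hF this i

lemma lin_norm (F : Fam ι) (a b : ℂ) (i : ι) : ‖2 * Real.pi * I * (F.A i * a + F.B i * b)‖ ≤ 2 * Real.pi * (‖a‖ + ‖b‖) * (‖F.A i‖ + ‖F.B i‖) := by
  simp only [norm_mul, Complex.norm_I, Complex.norm_real, Real.norm_eq_abs, abs_of_pos Real.pi_pos, Complex.norm_ofNat, mul_one]
  have := norm_add_le (F.A i * a) (F.B i * b)
  rw [norm_mul, norm_mul] at this
  rw [mul_assoc (2 * Real.pi)]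
  have := Real.pi_pos
  gcongr
  nlinarith [norm_nonneg a, norm_nonneg b, norm_nonneg (F.A i), norm_nonneg (F.B i), mul_nonneg (norm_nonneg a) (norm_nonneg (F.B i)), mul_nonneg (norm_nonneg b) (norm_nonneg (F.A i))]

lemma val_summable {F : Fam ι} (hF : F.Good) {t z u : ℂ} (h : sym t z u ∈ H2) (a b : ℂ) :
    Summable fun i => ‖F.trm t z u a b i‖ := by
  refine Summable.of_nonneg_of_le (fun i => by positivity) (fun i => ?_) (trm_sum hF h (2 * Real.pi * (‖a‖ + ‖b‖)) (by have := Real.pi_pos; positivity))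
  rw [trm, norm_mul, norm_exp]
  gcongr
  exact (re_le_norm _).trans (lin_norm F a b i)

lemma val_mul {F : Fam ι} {G : Fam κ} (hF : F.Good) (hG : G.Good) {t z u : ℂ} (h : sym t z u ∈ H2) (a b : ℂ) :
    (F.mul G).val t z u a b = F.val t z u a b * G.val t z u a b := by
  rw [val, val, val, tsum_mul_tsum_of_summable_norm (val_summable hF h a b) (val_summable hG h a b)]
  refine tsum_congr fun p => ?_
  simp only [trm, ex, mul]
  rw [show ∀ a b c d e f : ℂ, (a * b * c) * (d * e * f) = a * d * (b * e * (c * f)) by intros; ring, mul_assoc, ← Complex.exp_add, ← Complex.exp_add, ← Complex.exp_add, ← Complex.exp_add]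
  congr 2; push_cast; ring

lemma val_sc (F : Fam ι) (α t z u a b : ℂ) : (F.sc α).val t z u a b = F.val t z u (α * a) (α * b) := by
  refine tsum_congr fun p => ?_
  simp only [trm, ex, sc]
  congr 2; ring

/-- power series in `s` -/
lemma val_series {F : Fam ι} (hF : F.Good) {t z u : ℂ} (h : sym t z u ∈ H2) (a b s : ℂ) :
    HasSum (fun n : ℕ => s ^ n * ∑' i, F.ex t z u i * (2 * Real.pi * I * (F.A i * a + F.B i * b)) ^ n / (n.factorial : ℂ)) (F.val t z u (s * a) (s * b)) := by
  set L : ι → ℂ := fun i => 2 * Real.pi * I * (F.A i * a + F.B i * b) with hL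
  have h1 : ∀ i, HasSum (fun n : ℕ => F.ex t z u i * ((s * L i) ^ n / (n.factorial : ℂ))) (F.trm t z u (s * a) (s * b) i) := by
    intro i
    have := (NormedSpace.expSeries_div_hasSum_exp (s * L i)).mul_left (F.ex t z u i)
    rw [← Complex.exp_eq_exp_ℂ] at this
    rw [trm]
    rw [show 2 * Real.pi * I * (F.A i * (s * a) + F.B i * (s * b)) = s * L i by rw [hL]; ring]
    exact this
  have hn : ∀ i (n : ℕ), ‖F.ex t z u i * ((s * L i) ^ n / (n.factorial : ℂ))‖ = ‖F.ex t z u i‖ * (‖s * L i‖ ^ n / (n.factorial : ℝ)) := by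
    intro i n; simp
  have h2 : Summable fun p : ι × ℕ => F.ex t z u p.1 * ((s * L p.1) ^ p.2 / (p.2.factorial : ℂ)) := by
    apply Summable.of_norm
    rw [summable_prod_of_nonneg (fun _ => norm_nonneg _)]
    simp only [hn]
    refine ⟨fun i => ((NormedSpace.expSeries_div_hasSum_exp ‖s * L i‖).summable).mul_left _, ?_⟩
    simp only [tsum_mul_left]
    have e : ∀ x : ℝ, ∑' n : ℕ, x ^ n / (n.factorial : ℝ) = Real.exp x := by
      intro x; rw [(NormedSpace.expSeries_div_hasSum_exp x).tsum_eq, Real.exp_eq_exp_ℝ]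
    simp only [e]
    refine Summable.of_nonneg_of_le (fun i => by positivity) (fun i => ?_) (trm_sum hF h (‖s‖ * (2 * Real.pi * (‖a‖ + ‖b‖))) (by have := Real.pi_pos; positivity))
    gcongr
    rw [norm_mul, mul_assoc]
    gcongr
    exact lin_norm F a b i
  have h3 := h2.prod_symm.hasSum.prod_fiberwise (fun n => (h2.prod_symm.prod_factor n).hasSum)
  have h4 : ∑' p : ℕ × ι, F.ex t z u p.swap.1 * ((s * L p.swap.1) ^ p.swap.2 / (p.swap.2.factorial : ℂ)) = F.val t z u (s * a) (s * b) := by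
    refine ((Equiv.prodComm ℕ ι).tsum_eq (fun p : ι × ℕ => F.ex t z u p.1 * ((s * L p.1) ^ p.2 / (p.2.factorial : ℂ)))).trans ?_
    rw [h2.tsum_prod]
    exact tsum_congr fun i => (h1 i).tsum_eq
  rw [h4] at h3
  refine h3.congr_fun fun n => ?_
  rw [← tsum_mul_left]
  refine tsum_congr fun i => ?_
  simp only [Prod.swap_prod_mk, mul_pow s]
  change s ^ n * (F.ex t z u i * L i ^ n / _) = _
  ring

lemma co_summable {F : Fam ι} (hF : F.Good) {t z u : ℂ} (h : sym t z u ∈ H2) (m n : ℕ) :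
    Summable fun i => F.ex t z u i * (F.A i ^ m * F.B i ^ n) := by
  apply Summable.of_norm
  refine Summable.of_nonneg_of_le (fun i => by positivity) (fun i => ?_) ((trm_sum hF h 1 zero_le_one).mul_left ((m.factorial : ℝ) * n.factorial))
  simp only [norm_mul, norm_pow]
  have e1 := Real.pow_div_factorial_le_exp (‖F.A i‖) (norm_nonneg _) m
  have e2 := Real.pow_div_factorial_le_exp (‖F.B i‖) (norm_nonneg _) n
  rw [div_le_iff₀ (by positivity)] at e1 e2
  calc _ ≤ ‖F.ex t z u i‖ * ((Real.exp ‖F.A i‖ * m.factorial) * (Real.exp ‖F.B i‖ * n.factorial)) := by gcongr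
    _ = _ := by rw [one_mul, Real.exp_add]; ring

lemma co_HH {F : Fam ι} (hF : F.Good) {t z u : ℂ} (h : sym t z u ∈ H2) (a b : ℂ) :
    ∑' i, F.ex t z u i * (F.A i * a + F.B i * b) ^ 20 = HH (F.co t z u) a b := by
  rw [HH]
  simp only [co, ← tsum_mul_right]
  rw [← Summable.tsum_finsetSum]
  · refine tsum_congr fun i => ?_
    rw [add_comm, add_pow, Finset.mul_sum, Finset.sum_range (n := 21)]
    refine Finset.sum_congr rfl fun l _ => ?_
    simp only [mul_pow]
    ring
  · intro l _
    have := (co_summable hF h (20 - (l : ℕ)) (l : ℕ)).mul_right (((20 : ℕ).choose l : ℂ) * a ^ (20 - (l : ℕ)) * b ^ (l : ℕ))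
    refine this.congr fun i => ?_
    ring

end Fam

lemma pow_uniq (c : ℕ → ℂ) (h : ∀ s : ℂ, HasSum (fun n => s ^ n * c n) 0) : ∀ n, c n = 0 := by
  let p : FormalMultilinearSeries ℂ ℂ ℂ := fun n => ContinuousMultilinearMap.mkPiRing ℂ (Fin n) (c n)
  have hp : ∀ n, p.coeff n = c n := by intro n; simp [FormalMultilinearSeries.coeff, p]
  have : HasFPowerSeriesAt (0 : ℂ → ℂ) p 0 := by
    refine hasFPowerSeriesAt_iff.mpr ?_
    refine Eventually.of_forall fun s => ?_
    refine (h s).congr_fun fun n => ?_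
    rw [hp]; rfl
  have h0 := HasFPowerSeriesAt.eq_zero this
  intro n
  rw [← hp, h0]
  simp [FormalMultilinearSeries.coeff]

/-- transfer of laws to degree 20 parts -/
lemma deg20 {ι : Type} {m : ℕ} (σ : Fin m → ℂ) (F : Fin m → Fam ι) (hF : ∀ k, (F k).Good) {t z u t' z' u' : ℂ} (h : sym t z u ∈ H2) (h' : sym t' z' u' ∈ H2)
    (k a b a' b' : ℂ) (hv : ∀ s : ℂ, ∑ j, σ j * (F j).val t' z' u' (s * a') (s * b') = k * ∑ j, σ j * (F j).val t z u (s * a) (s * b)) :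
    HH (fun l => ∑ j, σ j * (F j).co t' z' u' l) a' b' = k * HH (fun l => ∑ j, σ j * (F j).co t z u l) a b := by
  have hl : ∀ t z u a b, HH (fun l => ∑ j, σ j * (F j).co t z u l) a b = ∑ j, σ j * HH ((F j).co t z u) a b := by
    intro t z u a b
    simp only [HH, Finset.mul_sum, Finset.sum_mul]
    rw [Finset.sum_comm]
    refine Finset.sum_congr rfl fun j _ => Finset.sum_congr rfl fun l _ => by ring
  rw [hl, hl]
  have h1 := fun s : ℂ => hasSum_sum (s := Finset.univ) fun j _ => ((F j).val_series (hF j) h' a' b' s).mul_left (σ j)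
  have h2 := fun s : ℂ => (hasSum_sum (s := Finset.univ) fun j _ => ((F j).val_series (hF j) h a b s).mul_left (σ j)).mul_left k
  have h3 := pow_uniq (fun n => ∑ j, σ j * (∑' i, (F j).ex t' z' u' i * (2 * Real.pi * I * ((F j).A i * a' + (F j).B i * b')) ^ n / (n.factorial : ℂ))
      - k * ∑ j, σ j * (∑' i, (F j).ex t z u i * (2 * Real.pi * I * ((F j).A i * a + (F j).B i * b)) ^ n / (n.factorial : ℂ))) (by
    intro s
    have := (h1 s).sub (h2 s)
    rw [hv s, sub_self] at this
    refine this.congr_fun fun n => ?_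
    rw [mul_sub, Finset.mul_sum, mul_left_comm, Finset.mul_sum]
    congr 1
    · exact Finset.sum_congr rfl fun j _ => by ring
    · congr 1; exact Finset.sum_congr rfl fun j _ => by ring) 20
  have e : ∀ j {t z u : ℂ} (h : sym t z u ∈ H2) (a b : ℂ), ∑' i, (F j).ex t z u i * (2 * Real.pi * I * ((F j).A i * a + (F j).B i * b)) ^ 20 / ((20 : ℕ).factorial : ℂ)
      = (2 * Real.pi * I) ^ 20 / ((20 : ℕ).factorial : ℂ) * HH ((F j).co t z u) a b := by
    intro j t z u h a b
    rw [← (F j).co_HH (hF j) h, ← tsum_mul_left]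
    exact tsum_congr fun i => by rw [mul_pow]; ring
  simp only [e _ h, e _ h'] at h3
  have hc : (2 * Real.pi * I) ^ 20 / ((20 : ℕ).factorial : ℂ) ≠ 0 := by
    have : (2 * Real.pi * I) ≠ 0 := by simp [Real.pi_ne_zero]
    have h2 : ((20 : ℕ).factorial : ℂ) ≠ 0 := by exact_mod_cast Nat.factorial_ne_zero 20
    exact div_ne_zero (pow_ne_zero _ this) h2
  set K := (2 * Real.pi * I) ^ 20 / ((20 : ℕ).factorial : ℂ)
  simp only [mul_left_comm _ K, ← Finset.mul_sum] at h3
  rw [← mul_sub] at h3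
  have := (mul_eq_zero.mp h3).resolve_left hc
  linear_combination this

end

section


namespace Fam
variable {ι κ : Type}

def pr (a b : Fin 2) : (Fin 2 → Fin 2 → ℂ) →L[ℂ] ℂ := (ContinuousLinearMap.proj (R := ℂ) (φ := fun _ : Fin 2 => ℂ) b).comp
    (ContinuousLinearMap.proj (R := ℂ) (φ := fun _ : Fin 2 => Fin 2 → ℂ) a)

lemma pr_app (a b : Fin 2) (τ : Fin 2 → Fin 2 → ℂ) : pr a b τ = τ a b := rfl

def lam (F : Fam ι) (i : ι) : (Fin 2 → Fin 2 → ℂ) →L[ℂ] ℂ :=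
  (Real.pi * I * F.X i) • pr 0 0 + (Real.pi * I * (2 * F.Y i)) • pr 0 1 + (Real.pi * I * F.Z i) • pr 1 1

lemma lam_app (F : Fam ι) (i : ι) (τ) : F.lam i τ = Real.pi * I * (F.X i * τ 0 0 + 2 * F.Y i * τ 0 1 + F.Z i * τ 1 1) := by
  simp only [lam, ContinuousLinearMap.add_apply, ContinuousLinearMap.smul_apply, pr_app, smul_eq_mul]
  ring

lemma lam_norm {F : Fam ι} (hF : F.Good) (i : ι) : ‖F.lam i‖ ≤ 2 * Real.pi * (F.X i + F.Z i) := by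
  have x0 := hF.psd i 1 0 0 (by norm_num) (by norm_num) (by norm_num)
  have z0 := hF.psd i 0 0 1 (by norm_num) (by norm_num) (by norm_num)
  have y0 := hF.psd i 1 1 1 (by norm_num) (by norm_num) (by norm_num)
  have y1 := hF.psd i 1 (-1) 1 (by norm_num) (by norm_num) (by norm_num)
  have hy : |2 * F.Y i| ≤ F.X i + F.Z i := by rw [abs_le]; constructor <;> linarith
  have hp := Real.pi_pos
  refine ContinuousLinearMap.opNorm_le_bound _ (by apply mul_nonneg <;> linarith) fun τ => ?_
  have hτ : ∀ a b, ‖τ a b‖ ≤ ‖τ‖ := fun a b => (norm_le_pi_norm (τ a) b).trans (norm_le_pi_norm τ a)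
  rw [lam_app, norm_mul, norm_mul, Complex.norm_I, Complex.norm_real, Real.norm_eq_abs, abs_of_pos hp, mul_one]
  have e1 : ‖(F.X i : ℂ) * τ 0 0‖ ≤ F.X i * ‖τ‖ := by
    rw [norm_mul, Complex.norm_real, Real.norm_eq_abs, abs_of_nonneg (by linarith)]
    have := hτ 0 0
    gcongr; linarith
  have e2 : ‖2 * (F.Y i : ℂ) * τ 0 1‖ ≤ (F.X i + F.Z i) * ‖τ‖ := by
    rw [norm_mul, show (2 * (F.Y i : ℂ)) = ((2 * F.Y i : ℝ) : ℂ) by push_cast; ring, Complex.norm_real, Real.norm_eq_abs]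
    have := hτ 0 1
    gcongr; linarith
  have e3 : ‖(F.Z i : ℂ) * τ 1 1‖ ≤ F.Z i * ‖τ‖ := by
    rw [norm_mul, Complex.norm_real, Real.norm_eq_abs, abs_of_nonneg (by linarith)]
    have := hτ 1 1
    gcongr; linarith
  have := norm_add₃_le (a := (F.X i : ℂ) * τ 0 0) (b := 2 * (F.Y i : ℂ) * τ 0 1) (c := (F.Z i : ℂ) * τ 1 1)
  calc _ ≤ Real.pi * (2 * (F.X i + F.Z i) * ‖τ‖) := by gcongr; linarith
    _ = _ := by ring

lemma co_diff {F : Fam ι} (hF : F.Good) (l : Fin 21) :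
    DifferentiableOn ℂ (fun τ : Fin 2 → Fin 2 → ℂ => F.co (τ 0 0) (τ 0 1) (τ 1 1) l) H2 := by
  intro τ hτ
  obtain ⟨t, z, u, rfl⟩ := exists_sym hτ
  obtain ⟨δ, hδ, hd⟩ := H2_delta hτ
  apply DifferentiableAt.differentiableWithinAt
  set τ₀ := sym t z u
  set d : ι → ℂ := fun i => ((20 : ℕ).choose l : ℂ) * F.A i ^ (20 - (l : ℕ)) * F.B i ^ (l : ℕ) with hdd
  set f : ι → (Fin 2 → Fin 2 → ℂ) → ℂ := fun i τ => F.c i * cexp (F.lam i τ) * d i with hf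
  set f' : ι → (Fin 2 → Fin 2 → ℂ) → (Fin 2 → Fin 2 → ℂ) →L[ℂ] ℂ := fun i τ => (F.c i * cexp (F.lam i τ) * d i) • F.lam i with hf'
  have hp := Real.pi_pos
  set K : ℝ := ((20 : ℕ).choose l) * ((20 - (l : ℕ)).factorial * (l : ℕ).factorial) * (2 * Real.pi * (2 / (Real.pi * δ)))
  have hcur : ∀ n x, x ∈ Metric.ball τ₀ δ → ‖f' n x‖ ≤ K * (‖F.c n‖ * Real.exp (1 * (‖F.A n‖ + ‖F.B n‖) - (Real.pi * δ / 2) * (F.X n + F.Z n))) := by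
    intro i τ hτ'
    have hc : ∀ a b, ‖τ a b - τ₀ a b‖ < δ := by
      intro a b
      rw [Metric.mem_ball, dist_eq_norm] at hτ'
      exact ((norm_le_pi_norm ((τ - τ₀) a) b).trans (norm_le_pi_norm (τ - τ₀) a)).trans_lt hτ'
    have h1 := ex_norm hF (hd (τ 0 0) (τ 0 1) (τ 1 1) (hc 0 0) (hc 0 1) (hc 1 1)) i
    have h2 := lam_norm hF i
    have e1 := Real.pow_div_factorial_le_exp (‖F.A i‖) (norm_nonneg _) (20 - (l : ℕ))
    have e2 := Real.pow_div_factorial_le_exp (‖F.B i‖) (norm_nonneg _) l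
    rw [div_le_iff₀ (by positivity)] at e1 e2
    have hr := XZ_nonneg hF i
    have e3 : F.X i + F.Z i ≤ (2 / (Real.pi * δ)) * Real.exp ((Real.pi * δ / 2) * (F.X i + F.Z i)) := by
      have := Real.add_one_le_exp ((Real.pi * δ / 2) * (F.X i + F.Z i))
      calc F.X i + F.Z i = (2 / (Real.pi * δ)) * ((Real.pi * δ / 2) * (F.X i + F.Z i)) := by field_simp
        _ ≤ _ := by gcongr; linarith
    rw [hf', norm_smul, norm_mul, lam_app]
    rw [ex] at h1
    calc _ ≤ (‖F.c i‖ * Real.exp (-(Real.pi * δ) * (F.X i + F.Z i))) * (((20 : ℕ).choose l) * (Real.exp ‖F.A i‖ * (20 - (l : ℕ)).factorial) * (Real.exp ‖F.B i‖ * (l : ℕ).factorial)) *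
          (2 * Real.pi * ((2 / (Real.pi * δ)) * Real.exp ((Real.pi * δ / 2) * (F.X i + F.Z i)))) := by
          have hdn : ‖d i‖ = ((20 : ℕ).choose l) * ‖F.A i‖ ^ (20 - (l : ℕ)) * ‖F.B i‖ ^ (l : ℕ) := by simp [hdd]
          rw [hdn]
          have h3 : ‖F.lam i‖ ≤ (2 * Real.pi * ((2 / (Real.pi * δ)) * Real.exp ((Real.pi * δ / 2) * (F.X i + F.Z i)))) := h2.trans (by gcongr)
          gcongr
      _ = K * (‖F.c i‖ * (Real.exp (-(Real.pi * δ) * (F.X i + F.Z i)) * Real.exp ‖F.A i‖ * Real.exp ‖F.B i‖ * Real.exp ((Real.pi * δ / 2) * (F.X i + F.Z i)))) := by ring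
      _ = _ := by
          rw [← Real.exp_add, ← Real.exp_add, ← Real.exp_add]
          congr 3; ring
  have := hasFDerivAt_tsum_of_isPreconnected (𝕜 := ℂ) (f := f) (f' := f') (x₀ := τ₀) (x := τ₀) (s := Metric.ball τ₀ δ)
    ((hF.sm 1 (Real.pi * δ / 2) zero_le_one (by positivity)).mul_left K) Metric.isOpen_ball
    (convex_ball τ₀ δ).isPreconnected ?_ hcur (Metric.mem_ball_self hδ) ?_ (Metric.mem_ball_self hδ)
  · refine this.differentiableAt.congr_of_eventuallyEq (Eventually.of_forall fun τ => ?_)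
    simp only [co, ex, hf, lam_app, hdd]
  · intro i x _
    have := ((((F.lam i).hasFDerivAt (x := x)).cexp).const_mul (F.c i)).mul_const (d i)
    refine this.congr_fderiv ?_
    ext v
    simp only [hf', ContinuousLinearMap.smul_apply, smul_eq_mul]
    ring
  · have := (co_summable hF hτ (20 - (l : ℕ)) l).mul_left ((20 : ℕ).choose l : ℂ)
    refine this.congr fun i => ?_
    simp only [hf, ex, lam_app, hdd]
    change _ = F.c i * cexp (Real.pi * I * (F.X i * t + 2 * F.Y i * z + F.Z i * u)) * _
    ring

end Fam

/-- theta functions with characteristics -/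
def th (a b c d : ℤ) : Fam (ℤ × ℤ) where
  c p := cexp (Real.pi * I * ((p.1 + a / 2) * c + (p.2 + b / 2) * d))
  A p := p.1 + a / 2
  B p := p.2 + b / 2
  X p := (p.1 + a / 2) ^ 2
  Y p := (p.1 + a / 2) * (p.2 + b / 2)
  Z p := (p.2 + b / 2) ^ 2

lemma sum1 (a : ℤ) (R δ : ℝ) (hR : 0 ≤ R) (hδ : 0 < δ) :
    Summable fun n : ℤ => Real.exp (R * |(n : ℝ) + a / 2| - δ * ((n : ℝ) + a / 2) ^ 2) := by
  have h1 : Summable fun n : ℤ => Real.exp (-|(n : ℝ)|) := by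
    refine Summable.of_nat_of_neg ?_ ?_
    · simpa using Real.summable_exp_neg_nat
    · simpa using Real.summable_exp_neg_nat
  refine Summable.of_nonneg_of_le (fun n => by positivity) (fun n => ?_) (h1.mul_left (Real.exp ((R + 1) ^ 2 / (4 * δ) + |(a : ℝ) / 2|)))
  rw [← Real.exp_add, Real.exp_le_exp]
  set x := (n : ℝ) + a / 2
  have h2 : |(n : ℝ)| ≤ |x| + |(a : ℝ) / 2| := by
    rw [show (n : ℝ) = x - a / 2 by simp [x]]; exact abs_sub _ _
  have h3 : (R + 1) * |x| - δ * x ^ 2 ≤ (R + 1) ^ 2 / (4 * δ) := by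
    rw [le_div_iff₀ (by positivity), ← sq_abs x]
    nlinarith [sq_nonneg (2 * δ * |x| - (R + 1))]
  linarith

lemma th_good (a b c d : ℤ) : (th a b c d).Good where
  psd i p q r hp hr hq := by
    simp only [th]
    set x := ((i.1 : ℝ) + a / 2)
    set y := ((i.2 : ℝ) + b / 2)
    rcases eq_or_lt_of_le hp with rfl | hp
    · have : q = 0 := by nlinarith
      subst this; nlinarith [sq_nonneg y]
    · by_contra hc
      have h1 : p * (p * x ^ 2 + 2 * q * (x * y) + r * y ^ 2) < 0 := mul_neg_of_pos_of_neg hp (not_le.mp hc)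
      nlinarith [sq_nonneg (p * x + q * y), sq_nonneg y]
  sm R δ hR hδ := by
    have := (sum1 a R δ hR hδ).mul_of_nonneg (sum1 b R δ hR hδ) (fun i => by positivity) (fun i => by positivity)
    refine this.congr fun i => ?_
    simp only [th]
    have e : ∀ (n a : ℤ), ‖(n : ℂ) + a / 2‖ = |(n : ℝ) + a / 2| := by
      intro n a
      rw [← Real.norm_eq_abs, ← Complex.norm_real]; push_cast; rfl
    rw [e, e, Complex.norm_exp]
    have : (Real.pi * I * (((i.1 : ℂ) + a / 2) * c + (i.2 + b / 2) * d)).re = 0 := by simp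
    rw [this, Real.exp_zero, one_mul, ← Real.exp_add]
    congr 1; ring

end

section


lemma th_trm (a b c d : ℤ) (t z u w v : ℂ) (p : ℤ × ℤ) : (th a b c d).trm t z u w v p =
    cexp (Real.pi * I * ((p.1 + a / 2) ^ 2 * t + 2 * ((p.1 + a / 2) * (p.2 + b / 2)) * z + (p.2 + b / 2) ^ 2 * u +
      (p.1 + a / 2) * c + (p.2 + b / 2) * d + 2 * ((p.1 + a / 2) * w + (p.2 + b / 2) * v))) := by
  simp only [Fam.trm, Fam.ex, th]
  rw [← Complex.exp_add, ← Complex.exp_add]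
  congr 1; push_cast; ring

lemma exp_shift {x y : ℂ} (k : ℤ) (h : x = y + 2 * k) : cexp (Real.pi * I * x) = cexp (Real.pi * I * y) := by
  rw [Complex.exp_eq_exp_iff_exists_int]
  exact ⟨k, by rw [h]; ring⟩

lemma V_a (a b c d : ℤ) (t z u w v : ℂ) : (th (a + 2) b c d).val t z u w v = (th a b c d).val t z u w v := by
  unfold Fam.val
  rw [← (((Equiv.addRight (1 : ℤ)).prodCongr (Equiv.refl ℤ))).tsum_eq ((th a b c d).trm t z u w v)]
  refine tsum_congr fun p => ?_
  rw [th_trm, th_trm]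
  congr 2; simp; ring

lemma V_c (a b c d : ℤ) (t z u w v : ℂ) : (th a b (c + 2) d).val t z u w v = cexp (Real.pi * I * a) * (th a b c d).val t z u w v := by
  unfold Fam.val
  rw [← tsum_mul_left]
  refine tsum_congr fun p => ?_
  rw [th_trm, th_trm, ← Complex.exp_add, ← mul_add]
  refine exp_shift p.1 ?_
  push_cast; ring

lemma V_d (a b c d : ℤ) (t z u w v : ℂ) : (th a b c (d + 2)).val t z u w v = cexp (Real.pi * I * b) * (th a b c d).val t z u w v := by
  unfold Fam.val
  rw [← tsum_mul_left]
  refine tsum_congr fun p => ?_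
  rw [th_trm, th_trm, ← Complex.exp_add, ← mul_add]
  refine exp_shift p.2 ?_
  push_cast; ring

lemma V_T (a b c d : ℤ) (t z u w v : ℂ) : (th a b c d).val (t + 1) z u w v =
    cexp (Real.pi * I * (a ^ 2 / 4 - a * (a + 1) / 2)) * (th a b (c + a + 1) d).val t z u w v := by
  unfold Fam.val
  rw [← tsum_mul_left]
  refine tsum_congr fun p => ?_
  rw [th_trm, th_trm, ← Complex.exp_add, ← mul_add]
  obtain ⟨k, hk⟩ := Int.even_mul_pred_self p.1
  refine exp_shift k ?_
  have : (p.1 : ℂ) * (p.1 - 1) = k + k := by exact_mod_cast hk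
  push_cast
  linear_combination this

lemma V_W (a b c d : ℤ) (t z u w v : ℂ) : (th a b c d).val u z t w v = (th b a d c).val t z u v w := by
  unfold Fam.val
  rw [← (Equiv.prodComm ℤ ℤ).tsum_eq]
  refine tsum_congr fun p => ?_
  rw [th_trm, th_trm]
  congr 2; simp; ring

def shr : ℤ × ℤ ≃ ℤ × ℤ where
  toFun p := (p.1 + p.2, p.2)
  invFun p := (p.1 - p.2, p.2)
  left_inv p := by simp
  right_inv p := by simp

lemma V_L (a b c d : ℤ) (t z u w v : ℂ) : (th a b c d).val t (z + t) (u + 2 * z + t) w v =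
    (th (a + b) b c (d - c)).val t z u w (v - w) := by
  unfold Fam.val
  rw [← shr.tsum_eq ((th (a + b) b c (d - c)).trm t z u w (v - w))]
  refine tsum_congr fun p => ?_
  rw [th_trm, th_trm]
  congr 2; simp [shr]; ring

lemma tsum_swap {f : ℤ × ℤ → ℂ} (hf : Summable f) : ∑' p, f p = ∑' m, ∑' n, f (n, m) := by
  rw [← (Equiv.prodComm ℤ ℤ).tsum_eq]
  exact hf.prod_symm.tsum_prod

lemma V_J (a b c d : ℤ) {t z u : ℂ} (h : sym t z u ∈ H2) (w v : ℂ) : (th a b c d).val (-1 / t) (z / t) (u - z ^ 2 / t) w v =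
    (-I * t) ^ (1 / 2 : ℂ) * cexp (Real.pi * I * t * w ^ 2) * cexp (Real.pi * I * (a * c / 2)) *
      (th c b (-a) d).val t z u (t * w) (z * w + v) := by
  have ht := H2_t h
  unfold Fam.val
  rw [tsum_swap (Fam.val_summable (th_good a b c d) (mJ_mem_H2 h) w v).of_norm,
    tsum_swap (Fam.val_summable (th_good c b (-a) d) h (t * w) (z * w + v)).of_norm, ← tsum_mul_left]
  refine tsum_congr fun m => ?_
  set y : ℂ := m + b / 2 with hy
  set x := z * y / t + w + c / 2 with hx
  have e1 : ∑' n : ℤ, (th a b c d).trm (-1 / t) (z / t) (u - z ^ 2 / t) w v (n, m) =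
      cexp (Real.pi * I * (-a ^ 2 / (4 * t) + a * x + (u - z ^ 2 / t) * y ^ 2 + y * d + 2 * y * v)) * jacobiTheta₂ (x - a / (2 * t)) (-1 / t) := by
    rw [jacobiTheta₂, ← tsum_mul_left]
    refine tsum_congr fun n => ?_
    rw [th_trm, jacobiTheta₂_term, ← Complex.exp_add]
    congr 1
    simp only [← hy, hx]
    field_simp
    ring
  have e2 : ∑' n : ℤ, (th c b (-a) d).trm t z u (t * w) (z * w + v) (n, m) =
      cexp (Real.pi * I * (c ^ 2 / 4 * t + c * y * z + y ^ 2 * u - c / 2 * a + y * d + c * t * w + 2 * y * (z * w + v))) * jacobiTheta₂ (t * (x - a / (2 * t))) t := by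
    rw [jacobiTheta₂, ← tsum_mul_left]
    refine tsum_congr fun n => ?_
    rw [th_trm, jacobiTheta₂_term, ← Complex.exp_add]
    congr 1
    simp only [← hy, hx]
    push_cast
    field_simp
    ring
  rw [e1, e2, jacobiTheta₂_functional_equation (t * (x - a / (2 * t))) t, mul_div_cancel_left₀ _ ht]
  have hI : (-I * t) ^ (1 / 2 : ℂ) ≠ 0 := by
    rw [Complex.cpow_ne_zero_iff]; left; simp [ht]
  set s := (-I * t) ^ (1 / 2 : ℂ)
  set J := jacobiTheta₂ (x - a / (2 * t)) (-1 / t)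
  have e3 : ∀ E1 E2 E3 E4 E5 : ℂ, E1 = E2 + E3 + E4 + E5 → cexp E1 * J = s * cexp E2 * cexp E3 * (cexp E4 * (1 / s * cexp E5 * J)) := by
    intro E1 E2 E3 E4 E5 h
    rw [h, Complex.exp_add, Complex.exp_add, Complex.exp_add]; field_simp
  apply e3
  simp only [hx]
  field_simp
  ring

end

section


def PP (a b c d : ℤ) : Fam (((ℤ × ℤ) × (ℤ × ℤ)) × ((ℤ × ℤ) × (ℤ × ℤ))) :=
  (((th a b c d).sc 1).mul ((th a b c d).sc 2)).mul (((th a b c d).sc 2).mul ((th a b c d).sc (3 * I)))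

lemma PP_good (a b c d : ℤ) : (PP a b c d).Good := by
  have := th_good a b c d
  exact Fam.good_mul (Fam.good_mul (Fam.good_sc this _) (Fam.good_sc this _)) (Fam.good_mul (Fam.good_sc this _) (Fam.good_sc this _))

lemma PP_val (a b c d : ℤ) {t z u : ℂ} (h : sym t z u ∈ H2) (w v : ℂ) : (PP a b c d).val t z u w v =
    (th a b c d).val t z u (1 * w) (1 * v) * (th a b c d).val t z u (2 * w) (2 * v) *
     ((th a b c d).val t z u (2 * w) (2 * v) * (th a b c d).val t z u (3 * I * w) (3 * I * v)) := by
  have g := th_good a b c d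
  unfold PP
  rw [Fam.val_mul (Fam.good_mul (Fam.good_sc g _) (Fam.good_sc g _)) (Fam.good_mul (Fam.good_sc g _) (Fam.good_sc g _)) h,
    Fam.val_mul (Fam.good_sc g _) (Fam.good_sc g _) h, Fam.val_mul (Fam.good_sc g _) (Fam.good_sc g _) h]
  simp only [Fam.val_sc]

lemma exp4 {x : ℂ} (k : ℤ) (h : 2 * x = k) : cexp (Real.pi * I * x) ^ 4 = 1 := by
  rw [← Complex.exp_nat_mul, Complex.exp_eq_one_iff]
  exact ⟨k, by rw [← h]; push_cast; ring⟩

lemma P_a (a b c d : ℤ) {t z u : ℂ} (h : sym t z u ∈ H2) (w v : ℂ) : (PP (a + 2) b c d).val t z u w v = (PP a b c d).val t z u w v := by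
  rw [PP_val _ _ _ _ h, PP_val _ _ _ _ h]; simp only [V_a]

lemma P_c (a b c d : ℤ) {t z u : ℂ} (h : sym t z u ∈ H2) (w v : ℂ) : (PP a b (c + 2) d).val t z u w v = (PP a b c d).val t z u w v := by
  rw [PP_val _ _ _ _ h, PP_val _ _ _ _ h]; simp only [V_c]
  have := exp4 (x := a) (2 * a) (by push_cast; ring)
  generalize cexp _ = e at *
  generalize (th a b c d).val t z u _ _ = A1
  generalize (th a b c d).val t z u _ _ = A2
  generalize (th a b c d).val t z u _ _ = A3
  linear_combination (A1 * A2 ^ 2 * A3) * this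

lemma P_d (a b c d : ℤ) {t z u : ℂ} (h : sym t z u ∈ H2) (w v : ℂ) : (PP a b c (d + 2)).val t z u w v = (PP a b c d).val t z u w v := by
  rw [PP_val _ _ _ _ h, PP_val _ _ _ _ h]; simp only [V_d]
  have := exp4 (x := b) (2 * b) (by push_cast; ring)
  generalize cexp _ = e at *
  generalize (th a b c d).val t z u _ _ = A1
  generalize (th a b c d).val t z u _ _ = A2
  generalize (th a b c d).val t z u _ _ = A3
  linear_combination (A1 * A2 ^ 2 * A3) * this

lemma P_T (a b c d : ℤ) {t z u : ℂ} (h : sym t z u ∈ H2) (w v : ℂ) (h' : sym (t + 1) z u ∈ H2) : (PP a b c d).val (t + 1) z u w v = cexp (Real.pi * I * a) * (PP a b (c + a + 1) d).val t z u w v := by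
  rw [PP_val _ _ _ _ h, PP_val _ _ _ _ h']; simp only [V_T]
  have : cexp (Real.pi * I * (a ^ 2 / 4 - a * (a + 1) / 2)) ^ 4 = cexp (Real.pi * I * a) := by
    rw [← Complex.exp_nat_mul]
    obtain ⟨k, hk⟩ := Int.even_mul_succ_self a
    have hk' : (a : ℂ) * (a + 1) = k + k := by exact_mod_cast hk
    rw [Complex.exp_eq_exp_iff_exists_int]
    refine ⟨-k - a, ?_⟩
    push_cast; linear_combination (-Real.pi * I) * hk'
  generalize cexp (Real.pi * I * (a ^ 2 / 4 - a * (a + 1) / 2)) = e at *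
  generalize (th a b _ d).val t z u _ _ = A1
  generalize (th a b _ d).val t z u _ _ = A2
  generalize (th a b _ d).val t z u _ _ = A3
  linear_combination (A1 * A2 ^ 2 * A3) * this

lemma P_W (a b c d : ℤ) {t z u : ℂ} (h : sym t z u ∈ H2) (w v : ℂ) (h' : sym u z t ∈ H2) : (PP a b c d).val u z t w v = (PP b a d c).val t z u v w := by
  rw [PP_val _ _ _ _ h, PP_val _ _ _ _ h']; simp only [V_W a b c d]

lemma P_L (a b c d : ℤ) {t z u : ℂ} (h : sym t z u ∈ H2) (w v : ℂ) (h' : sym t (z + t) (u + 2 * z + t) ∈ H2) : (PP a b c d).val t (z + t) (u + 2 * z + t) w v =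
    (PP (a + b) b c (d - c)).val t z u w (v - w) := by
  rw [PP_val _ _ _ _ h, PP_val _ _ _ _ h']; simp only [V_L a b c d, mul_sub]

lemma P_J (a b c d : ℤ) {t z u : ℂ} (h : sym t z u ∈ H2) (w v : ℂ) (h' : sym (-1 / t) (z / t) (u - z ^ 2 / t) ∈ H2) : (PP a b c d).val (-1 / t) (z / t) (u - z ^ 2 / t) w v =
    -t ^ 2 * (PP c b (-a) d).val t z u (t * w) (z * w + v) := by
  rw [PP_val _ _ _ _ h, PP_val _ _ _ _ h']; simp only [V_J a b c d h]
  have e1 := exp4 (x := a * c / 2) (a * c) (by push_cast; ring)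
  have e2 : ((-I * t) ^ (1 / 2 : ℂ)) ^ 4 = - t ^ 2 := by
    rw [← Complex.cpow_nat_mul]
    norm_num [mul_pow]
  have e3 : cexp (Real.pi * I * t * (1 * w) ^ 2) * cexp (Real.pi * I * t * (2 * w) ^ 2) * cexp (Real.pi * I * t * (2 * w) ^ 2) *
      cexp (Real.pi * I * t * (3 * I * w) ^ 2) = 1 := by
    rw [← Complex.exp_add, ← Complex.exp_add, ← Complex.exp_add, Complex.exp_eq_one_iff]
    refine ⟨0, ?_⟩
    push_cast
    linear_combination (Real.pi * I * t * 9 * w ^ 2) * I_sq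
  rw [show ∀ α : ℂ, t * (α * w) = α * (t * w) by intro; ring, show ∀ α : ℂ, z * (α * w) + α * v = α * (z * w + v) by intros; ring,
    show t * (2 * w) = 2 * (t * w) by ring, show z * (2 * w) + 2 * v = 2 * (z * w + v) by ring,
    show t * (3 * I * w) = 3 * I * (t * w) by ring, show z * (3 * I * w) + 3 * I * v = 3 * I * (z * w + v) by ring]
  generalize cexp (Real.pi * I * (a * c / 2)) = q1 at *
  generalize (-I * t) ^ (1 / 2 : ℂ) = q2 at *
  generalize cexp (Real.pi * I * t * (1 * w) ^ 2) = q3 at *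
  generalize cexp (Real.pi * I * t * (2 * w) ^ 2) = q4 at *
  generalize cexp (Real.pi * I * t * (3 * I * w) ^ 2) = q5 at *
  generalize (th c b (-a) d).val t z u _ _ = A1
  generalize (th c b (-a) d).val t z u _ _ = A2
  generalize (th c b (-a) d).val t z u _ _ = A3
  calc _ = q1 ^ 4 * q2 ^ 4 * (q3 * q4 * q4 * q5) * (A1 * A2 ^ 2 * A3) := by ring
    _ = _ := by rw [e1, e2, e3]; ring

def sg : Fin 6 → ℂ := ![1, -1, -1, -1, 1, 1]
def FF : Fin 6 → Fam (((ℤ × ℤ) × (ℤ × ℤ)) × ((ℤ × ℤ) × (ℤ × ℤ))) :=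
  ![PP 0 1 0 1, PP 0 1 1 1, PP 1 1 0 1, PP 1 0 1 0, PP 1 0 1 1, PP 1 1 1 0]

lemma FF_good (k : Fin 6) : (FF k).Good := by
  fin_cases k <;> exact PP_good _ _ _ _

lemma FF_sum (f : Fam (((ℤ × ℤ) × (ℤ × ℤ)) × ((ℤ × ℤ) × (ℤ × ℤ))) → ℂ) : ∑ j, sg j * f (FF j) =
    f (PP 0 1 0 1) - f (PP 0 1 1 1) - f (PP 1 1 0 1) - f (PP 1 0 1 0) + f (PP 1 0 1 1) + f (PP 1 1 1 0) := by
  rw [Fin.sum_univ_six]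
  simp [sg, FF]; ring

lemma FF_T {t z u : ℂ} (h : sym t z u ∈ H2) (h' : sym (t + 1) z u ∈ H2) (w v : ℂ) :
    ∑ j, sg j * (FF j).val (t + 1) z u w v = -1 * ∑ j, sg j * (FF j).val t z u w v := by
  rw [FF_sum (fun F => F.val (t + 1) z u w v), FF_sum (fun F => F.val t z u w v)]
  simp only [P_T _ _ _ _ h w v h']
  have k1 := P_c 0 1 0 1 h w v
  have k2 := P_c 1 1 0 1 h w v
  have k3 := P_c 1 0 1 0 h w v
  have k4 := P_c 1 0 1 1 h w v
  have k5 := P_c 1 1 1 0 h w v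
  norm_num [Complex.exp_pi_mul_I] at *
  rw [k1, k2, k3, k4, k5]; ring

lemma FF_W {t z u : ℂ} (h : sym t z u ∈ H2) (h' : sym u z t ∈ H2) (w v : ℂ) :
    ∑ j, sg j * (FF j).val u z t w v = -1 * ∑ j, sg j * (FF j).val t z u v w := by
  rw [FF_sum (fun F => F.val u z t w v), FF_sum (fun F => F.val t z u v w)]
  simp only [P_W _ _ _ _ h w v h']
  ring

lemma FF_L {t z u : ℂ} (h : sym t z u ∈ H2) (h' : sym t (z + t) (u + 2 * z + t) ∈ H2) (w v : ℂ) :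
    ∑ j, sg j * (FF j).val t (z + t) (u + 2 * z + t) w v = -1 * ∑ j, sg j * (FF j).val t z u w (v - w) := by
  rw [FF_sum (fun F => F.val t (z + t) (u + 2 * z + t) w v), FF_sum (fun F => F.val t z u w (v - w))]
  simp only [P_L _ _ _ _ h w v h']
  have k1 := P_a 0 1 0 1 h w (v - w)
  have k2 := P_a 0 1 1 (-1) h w (v - w)
  have k3 := P_d 0 1 1 (-1) h w (v - w)
  have k4 := P_d 1 0 1 (-1) h w (v - w)
  norm_num at *
  rw [k1, k2, ← k3, ← k4]; ring

lemma FF_J {t z u : ℂ} (h : sym t z u ∈ H2) (h' : sym (-1 / t) (z / t) (u - z ^ 2 / t) ∈ H2) (w v : ℂ) :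
    ∑ j, sg j * (FF j).val (-1 / t) (z / t) (u - z ^ 2 / t) w v = -t ^ 2 * ∑ j, sg j * (FF j).val t z u (t * w) (z * w + v) := by
  rw [FF_sum (fun F => F.val (-1 / t) (z / t) (u - z ^ 2 / t) w v), FF_sum (fun F => F.val t z u (t * w) (z * w + v))]
  simp only [P_J _ _ _ _ h w v h']
  have k1 := P_c 0 1 (-1) 1 h (t * w) (z * w + v)
  have k2 := P_c 1 0 (-1) 0 h (t * w) (z * w + v)
  have k3 := P_c 1 0 (-1) 1 h (t * w) (z * w + v)
  have k4 := P_c 1 1 (-1) 0 h (t * w) (z * w + v)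
  norm_num at k1 k2 k3 k4 ⊢
  rw [← k1, ← k2, ← k3, ← k4]; ring

open Classical in
def theF (τ : Fin 2 → Fin 2 → ℂ) : Fin 21 → ℂ :=
  if τ ∈ H2 then fun l => ∑ j, sg j * (FF j).co (τ 0 0) (τ 0 1) (τ 1 1) l else 0

lemma theF_sym {t z u : ℂ} (h : sym t z u ∈ H2) : theF (sym t z u) = fun l => ∑ j, sg j * (FF j).co t z u l := by
  rw [theF, if_pos h]; rfl

lemma theF_diff : DifferentiableOn ℂ theF H2 := by
  have : DifferentiableOn ℂ (fun τ : Fin 2 → Fin 2 → ℂ => fun l : Fin 21 => ∑ j, sg j * (FF j).co (τ 0 0) (τ 0 1) (τ 1 1) l) H2 := by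
    rw [differentiableOn_pi]
    intro l
    exact DifferentiableOn.fun_sum fun j _ => (Fam.co_diff (FF_good j) l).const_mul _
  refine this.congr fun τ hτ => ?_
  rw [theF, if_pos hτ]

lemma theF_gens : ∀ g ∈ ({mT, mJ, mW, mL} : Set M4), ∀ τ ∈ H2, theF (moeb g τ) = (-1 : ℂ) • wt 20 2 (den g τ) (theF τ) := by
  refine gens_of ?_ ?_ ?_ ?_ <;> intro t z u h a b
  · have h' : sym (t + 1) z u ∈ H2 := by rw [sym_mem] at *; simpa using h
    rw [theF_sym h, theF_sym h', deg20 sg FF FF_good h h' (-1) a b a b (fun s => FF_T h h' _ _)]; ring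
  · have h' : sym u z t ∈ H2 := by
      rw [sym_mem] at *; refine ⟨?_, by linarith⟩
      by_contra hc; nlinarith [sq_nonneg z.im]
    rw [theF_sym h, theF_sym h', deg20 sg FF FF_good h h' (-1) b a a b (fun s => FF_W h h' _ _)]; ring
  · have h' : sym t (z + t) (u + 2 * z + t) ∈ H2 := by
      rw [sym_mem] at *; simp; refine ⟨h.1, by nlinarith⟩
    rw [theF_sym h, theF_sym h', deg20 sg FF FF_good h h' (-1) a (b - a) a b (fun s => by rw [mul_sub]; exact FF_L h h' _ _)]; ring
  · have h' := mJ_mem_H2 h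
    rw [theF_sym h, theF_sym h', deg20 sg FF FF_good h h' (-t ^ 2) (t * a) (z * a + b) a b (fun s => by
      rw [FF_J h h', show t * (s * a) = s * (t * a) by ring, show z * (s * a) + s * b = s * (z * a + b) by ring])]; ring

end

section


def th1 (a c : ℤ) : Fam ℤ where
  c n := cexp (Real.pi * I * ((n + a / 2) * c))
  A n := n + a / 2
  B _ := 0
  X n := (n + a / 2) ^ 2
  Y _ := 0
  Z _ := 0

lemma th1_good (a c : ℤ) : (th1 a c).Good where
  psd i p q r hp hr hq := by simp only [th1]; nlinarith [mul_nonneg hp (sq_nonneg ((i : ℝ) + a / 2))]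
  sm R δ hR hδ := by
    refine (sum1 a R δ hR hδ).congr fun n => ?_
    have e1 : ‖(th1 a c).c n‖ = 1 := by
      have : (th1 a c).c n = cexp (((Real.pi * ((n + a / 2) * c) : ℝ) : ℂ) * I) := by
        simp only [th1]; congr 1; push_cast; ring
      rw [this, Complex.norm_exp_ofReal_mul_I]
    have e2 : ‖(th1 a c).A n‖ = |(n : ℝ) + a / 2| := by
      have : (th1 a c).A n = (((n : ℝ) + a / 2 : ℝ) : ℂ) := by simp [th1]
      rw [this, Complex.norm_real, Real.norm_eq_abs]
    rw [e1, e2]; simp [th1]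

def QQ (a c : ℤ) : Fam ((ℤ × ℤ) × (ℤ × ℤ)) :=
  (((th1 a c).sc 1).mul ((th1 a c).sc 2)).mul (((th1 a c).sc 2).mul ((th1 a c).sc (3 * I)))

lemma QQ_good (a c : ℤ) : (QQ a c).Good := by
  have := th1_good a c
  exact Fam.good_mul (Fam.good_mul (Fam.good_sc this _) (Fam.good_sc this _)) (Fam.good_mul (Fam.good_sc this _) (Fam.good_sc this _))

def gt (a c : ℤ) (N : ℕ) (y : ℝ) (n : (ℤ × ℤ) × (ℤ × ℤ)) : ℂ := (QQ a c).ex (y * I) 0 (y * I) n * (QQ a c).A n ^ N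

lemma diag_mem {y : ℝ} (hy : 0 < y) : sym (y * I) 0 (y * I) ∈ H2 := by
  rw [sym_mem]; simp; exact ⟨hy, by positivity⟩

lemma gt_summable (a c : ℤ) (N : ℕ) {y : ℝ} (hy : 0 < y) : Summable (fun n => ‖gt a c N y n‖) := by
  have := (Fam.co_summable (QQ_good a c) (diag_mem hy) N 0).norm
  simpa [gt] using this

def reix : ((ℤ × ℤ) × (ℤ × ℤ)) × ((ℤ × ℤ) × (ℤ × ℤ)) ≃ ((ℤ × ℤ) × (ℤ × ℤ)) × ((ℤ × ℤ) × (ℤ × ℤ)) where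
  toFun p := (((p.1.1.1, p.2.1.1), (p.1.1.2, p.2.1.2)), ((p.1.2.1, p.2.2.1), (p.1.2.2, p.2.2.2)))
  invFun p := (((p.1.1.1, p.1.2.1), (p.2.1.1, p.2.2.1)), ((p.1.1.2, p.1.2.2), (p.2.1.2, p.2.2.2)))
  left_inv _ := rfl
  right_inv _ := rfl

lemma PP_co (a b c d : ℤ) {y : ℝ} (hy : 0 < y) : (PP a b c d).co (y * I) 0 (y * I) 4 =
    (4845 : ℂ) * ((∑' n, gt a c 16 y n) * ∑' n, gt b d 4 y n) := by
  rw [tsum_mul_tsum_of_summable_norm (gt_summable a c 16 hy) (gt_summable b d 4 hy), Fam.co, ← tsum_mul_left, ← reix.tsum_eq]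
  refine tsum_congr fun p => ?_
  obtain ⟨⟨⟨n1, n2⟩, n3, n4⟩, ⟨m1, m2⟩, m3, m4⟩ := p
  have h1 : ∀ n m : ℤ, cexp (Real.pi * I * ((n + a / 2) * c + (m + b / 2) * d)) =
    cexp (Real.pi * I * ((n + a / 2) * c)) * cexp (Real.pi * I * ((m + b / 2) * d)) := by
    intro n m; rw [← Complex.exp_add]; congr 1; ring
  have hc : ((20 : ℕ).choose ((4 : Fin 21) : ℕ) : ℂ) = 4845 := by
    have : (20 : ℕ).choose ((4 : Fin 21) : ℕ) = 4845 := by decide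
    rw [this]; norm_num
  rw [hc]
  simp only [reix, Equiv.coe_fn_mk, gt, PP, QQ, Fam.ex, Fam.mul, Fam.sc, th, th1, h1, add_zero, mul_zero]
  rw [show ∀ x z : ℝ, cexp (Real.pi * I * (x * (y * I) + z * (y * I))) = cexp (Real.pi * I * (x * (y * I) + (0 : ℝ) * (y * I))) *
    cexp (Real.pi * I * (z * (y * I) + (0 : ℝ) * (y * I))) from fun x z => by
      rw [← Complex.exp_add]; congr 1; push_cast; ring]
  simp only [Nat.reduceSub, show ((4 : Fin 21) : ℕ) = 4 from rfl]
  have key : ∀ e1 f1 e2 f2 e3 f3 e4 f4 E E' A B : ℂ, e1 * f1 * (e2 * f2) * (e3 * f3 * (e4 * f4)) * (E * E') * (4845 * A ^ 16 * B ^ 4) =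
      4845 * (e1 * e2 * (e3 * e4) * E * A ^ 16 * (f1 * f2 * (f3 * f4) * E' * B ^ 4)) := by
    intros; ring
  exact key _ _ _ _ _ _ _ _ _ _ _ _

def Qf (a : ℤ) (n : (ℤ × ℤ) × (ℤ × ℤ)) : ℤ := (2 * n.1.1 + a) ^ 2 + (2 * n.1.2 + a) ^ 2 + (2 * n.2.1 + a) ^ 2 + (2 * n.2.2 + a) ^ 2

def gi (a c : ℤ) (N : ℕ) (n : (ℤ × ℤ) × (ℤ × ℤ)) : GaussianInt :=
  if Qf a n = 4 then (-1) ^ (c * (n.1.1 + n.1.2 + n.2.1 + n.2.2)).natAbs *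
    (⟨(2 * n.1.1 + a) + 2 * (2 * n.1.2 + a) + 2 * (2 * n.2.1 + a), 3 * (2 * n.2.2 + a)⟩ : GaussianInt) ^ N else 0

def box : Finset ((ℤ × ℤ) × (ℤ × ℤ)) := ((({-1, 0, 1} : Finset ℤ) ×ˢ {-1, 0, 1}) ×ˢ (({-1, 0, 1} : Finset ℤ) ×ˢ {-1, 0, 1}))

def gz (a c : ℤ) (N : ℕ) : GaussianInt := ∑ n ∈ box, gi a c N n

set_option maxRecDepth 100000 in
lemma gz_ne : gz 0 0 16 * gz 1 1 4 - gz 0 1 16 * gz 1 1 4 - gz 1 0 16 * gz 1 1 4 - gz 1 1 16 * gz 0 0 4 + gz 1 1 16 * gz 0 1 4 +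
    gz 1 1 16 * gz 1 0 4 ≠ 0 := by decide +kernel

lemma gi_box (a c : ℤ) (ha : a = 0 ∨ a = 1) (N : ℕ) (n) (hn : n ∉ box) : gi a c N n = 0 := by
  rw [gi, if_neg]
  intro h
  apply hn
  obtain ⟨⟨n1, n2⟩, n3, n4⟩ := n
  have key : ∀ m : ℤ, (2 * m + a) ^ 2 ≤ 4 → m = -1 ∨ m = 0 ∨ m = 1 := by
    intro m hm
    have h1 : -2 ≤ 2 * m + a := by nlinarith
    have h2 : 2 * m + a ≤ 2 := by nlinarith
    omega
  simp only [Qf] at h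
  have k1 := sq_nonneg (2 * n1 + a)
  have k2 := sq_nonneg (2 * n2 + a)
  have k3 := sq_nonneg (2 * n3 + a)
  have k4 := sq_nonneg (2 * n4 + a)
  simp only [box, Finset.mem_product, Finset.mem_insert, Finset.mem_singleton]
  exact ⟨⟨key _ (by linarith), key _ (by linarith)⟩, key _ (by linarith), key _ (by linarith)⟩

lemma gt_eq (a c : ℤ) (N : ℕ) (y : ℝ) (n) : gt a c N y n = (Real.exp (-(Real.pi * y * (Qf a n / 4))) : ℂ) *
    ((-1) ^ (c * (n.1.1 + n.1.2 + n.2.1 + n.2.2)).natAbs * 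
    (GaussianInt.toComplex ⟨(2 * n.1.1 + a) + 2 * (2 * n.1.2 + a) + 2 * (2 * n.2.1 + a), 3 * (2 * n.2.2 + a)⟩ / 2) ^ N) := by
  obtain ⟨⟨n1, n2⟩, n3, n4⟩ := n
  have h1 : cexp (Real.pi * I * ((n1 + a / 2) * c)) * cexp (Real.pi * I * ((n2 + a / 2) * c)) *
      (cexp (Real.pi * I * ((n3 + a / 2) * c)) * cexp (Real.pi * I * ((n4 + a / 2) * c))) = (-1) ^ (c * (n1 + n2 + n3 + n4)).natAbs := by
    rw [← Complex.exp_add, ← Complex.exp_add, ← Complex.exp_add, ← Complex.exp_pi_mul_I, ← Complex.exp_nat_mul,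
      Complex.exp_eq_exp_iff_exists_int]
    have h0 := Int.natAbs_eq (c * (n1 + n2 + n3 + n4))
    generalize (c * (n1 + n2 + n3 + n4)).natAbs = k at h0 ⊢
    rcases h0 with h | h
    · have h' : (c : ℂ) * (n1 + n2 + n3 + n4) = (k : ℂ) := by exact_mod_cast h
      refine ⟨a * c, ?_⟩
      rw [← h']; push_cast; ring
    · have h' : (c : ℂ) * (n1 + n2 + n3 + n4) = -(k : ℂ) := by exact_mod_cast h
      refine ⟨a * c + c * (n1 + n2 + n3 + n4), ?_⟩
      rw [show (k : ℂ) = -(c * (n1 + n2 + n3 + n4)) by rw [h']; ring]; push_cast; ring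
  simp only [gt, QQ, Fam.ex, Fam.mul, Fam.sc, th1, h1, Qf]
  rw [mul_comm ((-1 : ℂ) ^ _), mul_assoc]
  congr 1
  · push_cast
    congr 1
    linear_combination (Real.pi * y * ((n1 + a / 2) ^ 2 + (n2 + a / 2) ^ 2 + ((n3 + a / 2) ^ 2 + (n4 + a / 2) ^ 2))) * I_sq
  · congr 2
    rw [GaussianInt.toComplex_def₂]
    apply Complex.ext <;> simp <;> ring

lemma Qf_ge (a c : ℤ) (ha : a = 0 ∨ a = 1) {N : ℕ} (hN : N ≠ 0) (y n) : 4 ≤ Qf a n ∨ gt a c N y n = 0 := by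
  by_cases hq : 4 ≤ Qf a n
  · exact Or.inl hq
  right
  rw [gt_eq]
  obtain ⟨⟨n1, n2⟩, n3, n4⟩ := n
  simp only [Qf] at hq
  rcases ha with rfl | rfl
  · have key : ∀ m : ℤ, m ≠ 0 → 1 ≤ m ^ 2 := fun m hm => by have := sq_pos_of_ne_zero hm; omega
    have k1 := sq_nonneg n1
    have k2 := sq_nonneg n2
    have k3 := sq_nonneg n3
    have k4 := sq_nonneg n4
    have j1 : n1 = 0 := by by_contra h; have := key _ h; apply hq; linarith
    have j2 : n2 = 0 := by by_contra h; have := key _ h; apply hq; linarith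
    have j3 : n3 = 0 := by by_contra h; have := key _ h; apply hq; linarith
    have j4 : n4 = 0 := by by_contra h; have := key _ h; apply hq; linarith
    subst j1 j2 j3 j4
    have : GaussianInt.toComplex ⟨0, 0⟩ = 0 := by simp [GaussianInt.toComplex_def₂]; rfl
    simp [this, hN]
  · exfalso; apply hq
    have key : ∀ m : ℤ, 1 ≤ (2 * m + 1) ^ 2 := fun m => by
      have := sq_pos_of_ne_zero (a := 2 * m + 1) (by omega); omega
    linarith [key n1, key n2, key n3, key n4]

lemma gt_lim (a c : ℤ) (ha : a = 0 ∨ a = 1) {N : ℕ} (hN : N ≠ 0) :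
    Tendsto (fun y : ℝ => (Real.exp (Real.pi * y) : ℂ) * ∑' n, gt a c N y n) atTop (𝓝 (GaussianInt.toComplex (gz a c N) / 2 ^ N)) := by
  have e : GaussianInt.toComplex (gz a c N) / 2 ^ N = ∑' n, GaussianInt.toComplex (gi a c N n) / 2 ^ N := by
    rw [tsum_eq_sum (s := box) (fun n hn => by rw [gi_box a c ha N n hn]; simp), gz, map_sum, Finset.sum_div]
  rw [e]
  simp only [← tsum_mul_left]
  refine tendsto_tsum_of_dominated_convergence (bound := fun n => Real.exp Real.pi * ‖gt a c N 1 n‖) ((gt_summable a c N one_pos).mul_left _) ?_ ?_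
  · intro n
    have hg : ∀ y : ℝ, (Real.exp (Real.pi * y) : ℂ) * gt a c N y n = (Real.exp (-(Real.pi * ((Qf a n : ℝ) / 4 - 1)) * y) : ℂ) *
        ((-1) ^ (c * (n.1.1 + n.1.2 + n.2.1 + n.2.2)).natAbs *
        (GaussianInt.toComplex ⟨(2 * n.1.1 + a) + 2 * (2 * n.1.2 + a) + 2 * (2 * n.2.1 + a), 3 * (2 * n.2.2 + a)⟩ / 2) ^ N) := by
      intro y
      rw [gt_eq, ← mul_assoc, ← ofReal_mul, ← Real.exp_add]
      congr 4; ring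
    rcases Qf_ge a c ha hN 1 n with h | h
    · rcases eq_or_lt_of_le h with h | h
      · refine tendsto_const_nhds.congr fun y => ?_
        rw [hg, gi, if_pos h.symm, ← h]
        simp [div_pow]; ring
      · simp only [hg]
        rw [gi, if_neg h.ne', map_zero, zero_div]
        rw [show (0 : ℂ) = ((0 : ℝ) : ℂ) * ((-1) ^ (c * (n.1.1 + n.1.2 + n.2.1 + n.2.2)).natAbs *
        (GaussianInt.toComplex ⟨(2 * n.1.1 + a) + 2 * (2 * n.1.2 + a) + 2 * (2 * n.2.1 + a), 3 * (2 * n.2.2 + a)⟩ / 2) ^ N) by simp]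
        refine Tendsto.mul_const _ ((continuous_ofReal.tendsto 0).comp (Real.tendsto_exp_atBot.comp ?_))
        refine Tendsto.const_mul_atTop_of_neg ?_ tendsto_id
        have : (4 : ℝ) < Qf a n := by exact_mod_cast h
        nlinarith [Real.pi_pos]
    · rw [gt_eq] at h
      have h := (mul_eq_zero.mp h).resolve_left (by simp [Complex.exp_ne_zero])
      simp only [hg, h, mul_zero]
      have : GaussianInt.toComplex (gi a c N n) / 2 ^ N = 0 := by
        rw [gi]; split_ifs
        · rw [← h]; simp [div_pow]; ring
        · simp
      rw [this]; exact tendsto_const_nhds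
  · filter_upwards [eventually_ge_atTop 1] with y hy n
    rcases Qf_ge a c ha hN 1 n with h | h
    · rw [gt_eq, gt_eq]
      generalize ((-1 : ℂ) ^ _ * _) = K
      rw [norm_mul, norm_mul, norm_mul, ← mul_assoc, ← mul_assoc]
      refine mul_le_mul_of_nonneg_right ?_ (norm_nonneg _)
      simp only [Complex.norm_real, Real.norm_eq_abs, Real.abs_exp]
      rw [← Real.exp_add, ← Real.exp_add, Real.exp_le_exp]
      have : (4 : ℝ) ≤ Qf a n := by exact_mod_cast h
      nlinarith [mul_nonneg (mul_nonneg Real.pi_pos.le (sub_nonneg.mpr hy)) (sub_nonneg.mpr this)]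
    · rw [gt_eq] at h
      have h := (mul_eq_zero.mp h).resolve_left (by simp [Complex.exp_ne_zero])
      rw [gt_eq, gt_eq, h]; simp

lemma theF_ne : theF ≠ 0 := by
  intro h0
  have hl : ∀ a b c d : ℤ, (a = 0 ∨ a = 1) → (b = 0 ∨ b = 1) → Tendsto (fun y : ℝ => (Real.exp (Real.pi * y) : ℂ) ^ 2 * (PP a b c d).co (y * I) 0 (y * I) 4) atTop
      (𝓝 (4845 / 2 ^ 20 * (GaussianInt.toComplex (gz a c 16 * gz b d 4)))) := by
    intro a b c d ha hb
    have := ((gt_lim a c ha (N := 16) (by norm_num)).mul (gt_lim b d hb (N := 4) (by norm_num))).const_mul (4845 : ℂ)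
    have e : (4845 : ℂ) / 2 ^ 20 * (GaussianInt.toComplex (gz a c 16 * gz b d 4)) =
      4845 * (GaussianInt.toComplex (gz a c 16) / 2 ^ 16 * (GaussianInt.toComplex (gz b d 4) / 2 ^ 4)) := by
      rw [map_mul]; ring
    rw [e]
    refine this.congr' ?_
    filter_upwards [eventually_gt_atTop 0] with y hy
    rw [PP_co a b c d hy]; ring
  have o0 : (0 : ℤ) = 0 ∨ (0 : ℤ) = 1 := by norm_num
  have o1 : (1 : ℤ) = 0 ∨ (1 : ℤ) = 1 := by norm_num
  have L := (((((hl 0 1 0 1 o0 o1).sub (hl 0 1 1 1 o0 o1)).sub (hl 1 1 0 1 o1 o1)).sub (hl 1 0 1 0 o1 o0)).add (hl 1 0 1 1 o1 o0)).add (hl 1 1 1 0 o1 o1)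
  have L0 : Tendsto (fun _ : ℝ => (0 : ℂ)) atTop (𝓝 0) := tendsto_const_nhds
  have := tendsto_nhds_unique (L.congr' (f₂ := fun _ => 0) ?_) L0
  · apply gz_ne
    rw [← GaussianInt.toComplex_eq_zero]
    simp only [map_add, map_sub]
    have h4 : (4845 / 2 ^ 20 : ℂ) ≠ 0 := by norm_num
    apply mul_left_cancel₀ h4
    rw [mul_zero, ← this]; ring
  · filter_upwards [eventually_gt_atTop 0] with y hy
    have h1 := congrFun (congrFun h0 (sym (y * I) 0 (y * I))) 4
    rw [theF_sym (diag_mem hy)] at h1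
    simp only [Pi.zero_apply] at h1
    rw [FF_sum (fun F => F.co (y * I) 0 (y * I) 4)] at h1
    linear_combination (Real.exp (Real.pi * y) : ℂ) ^ 2 * h1

end

/-- The space `S_{20,2}(Γ₂,ε)` has dimension 1 over `ℂ`. -/
theorem dim_S20_2_eps (ε : Matrix (Fin 4) (Fin 4) ℤ → ℂ) (hε : IsEps ε) :
    Module.finrank ℂ ↥(SiegelCusp 20 2 Sp4Z ε) = 1 := by
  refine main_of hε theF_diff theF_gens (fun τ hτ => ?_) theF_ne
  rw [theF, if_neg hτ]
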